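/- For every strict partition λ, the number of standard Young tableaux of shifted shape λ equals the number of balanced shifted tableaux of shape λ: |SYT(λ)| = |BS(λ)|. -/

import Mathlib

open scoped BigOperators

namespace BST

/-- `lam` (1-indexed, with `d` parts) is a strict partition: strictly decreasing
positive parts `lam 1 > lam 2 > ⋯ > lam d > 0`. -/
def IsStrictPartition (d : ℕ) (lam : ℕ → ℕ) : Prop :=
  (∀ i : ℕ, 1 ≤ i → i < d → lam (i + 1) < lam i) ∧ 1 ≤ lam d

/-- The size `|λ| = λ_1 + ⋯ + λ_d`. -/
def sizeP (d : ℕ) (lam : ℕ → ℕ) : ℕ := ∑ i ∈ Finset.Icc 1 d, lam i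

/-- The shifted diagram `D(λ) ⊆ ℤ × ℤ`: row `i` (1 ≤ i ≤ d) occupies columns
`i - d, …, λ_i + i - d - 1`. -/
def Diagram (d : ℕ) (lam : ℕ → ℕ) : Set (ℤ × ℤ) :=
  {p : ℤ × ℤ | 1 ≤ p.1 ∧ p.1 ≤ (d : ℤ) ∧ p.1 - (d : ℤ) ≤ p.2 ∧
    p.2 + (d : ℤ) + 1 ≤ (lam p.1.toNat : ℤ) + p.1}

/-- The hook `H(i,c)`. -/
def Hook (d : ℕ) (lam : ℕ → ℕ) (i c : ℤ) : Set (ℤ × ℤ) :=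
  {(i, c)} ∪ {p ∈ Diagram d lam | (p.1 = i ∧ c < p.2) ∨ (p.2 = c ∧ i < p.1)} ∪
    {p ∈ Diagram d lam | c < 0 ∧ p.1 = (d : ℤ) + 1 + c}

/-- The extended hook `H̃(i,c)`. -/
def ExtHook (d : ℕ) (lam : ℕ → ℕ) (i c : ℤ) : Set (ℤ × ℤ) :=
  Hook d lam i c ∪ {p : ℤ × ℤ | c < 0 ∧ p = ((d : ℤ) + 1 + c, c)}

/-- The extended diagram `D(λ) ∪ {(i, i - d - 1) : 1 ≤ i ≤ d}`. -/
def ExtDiagram (d : ℕ) (lam : ℕ → ℕ) : Set (ℤ × ℤ) :=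
  Diagram d lam ∪ {p : ℤ × ℤ | 1 ≤ p.1 ∧ p.1 ≤ (d : ℤ) ∧ p.2 = p.1 - ((d : ℤ) + 1)}

/-- The extended filling `B̃`, with `B̃(i, i - d - 1) = B(i, 0)`. -/
def ExtFilling (d : ℕ) (B : ℤ × ℤ → ℕ) : ℤ × ℤ → ℕ :=
  fun p => if p.2 = p.1 - ((d : ℤ) + 1) then B (p.1, 0) else B p

/-- The rank function `rk(i,c)`. -/
def rk (d : ℕ) (lam : ℕ → ℕ) (i c : ℤ) : ℤ :=
  if 0 ≤ c then (lam i.toNat : ℤ) - d + i - c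
  else (lam i.toNat : ℤ) - d + i + (lam ((d : ℤ) + 1 + c).toNat : ℤ) + c + 1

/-- A bijective filling of `D(λ)` with `1, …, |λ|` (normalized to be `0` off the diagram). -/
def IsFilling (d : ℕ) (lam : ℕ → ℕ) (B : ℤ × ℤ → ℕ) : Prop :=
  Set.BijOn B (Diagram d lam) (Set.Icc 1 (sizeP d lam)) ∧
    ∀ p : ℤ × ℤ, p ∉ Diagram d lam → B p = 0

/-- A balanced shifted tableau: a bijective filling such that at each box `(i,c)`,
`B(i,c)` is the `rk(i,c)`-th largest entry of the multiset of values of `B̃` on the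
extended hook, i.e. exactly `rk(i,c) - 1` boxes of the extended hook carry a value
strictly larger than `B(i,c)`. -/
def IsBalanced (d : ℕ) (lam : ℕ → ℕ) (B : ℤ × ℤ → ℕ) : Prop :=
  IsFilling d lam B ∧ ∀ p ∈ Diagram d lam,
    ({q ∈ ExtHook d lam p.1 p.2 | B p < ExtFilling d B q}.ncard : ℤ) =
      rk d lam p.1 p.2 - 1

/-- A standard Young tableau of shifted shape `λ`. -/
def IsSYT (d : ℕ) (lam : ℕ → ℕ) (B : ℤ × ℤ → ℕ) : Prop :=
  IsFilling d lam B ∧ ∀ p ∈ Diagram d lam, ∀ q ∈ Diagram d lam,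
    ((p.1 = q.1 ∧ p.2 < q.2) → B p < B q) ∧ ((p.2 = q.2 ∧ p.1 < q.1) → B p < B q)

/-- The simple reflections of `W(B_n)`, acting on `ℤ`: `s 0` swaps `1 ↔ -1`,
and `s a` (for `a ≥ 1`) swaps `a ↔ a+1` and `-a ↔ -(a+1)`. -/
def sB (a : ℕ) : Equiv.Perm ℤ :=
  if a = 0 then Equiv.swap 1 (-1)
  else Equiv.swap (a : ℤ) ((a : ℤ) + 1) * Equiv.swap (-(a : ℤ)) (-(a : ℤ) - 1)

/-- The product `s_{a_1} s_{a_2} ⋯ s_{a_m}` of a word. -/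
def wordProd (L : List ℕ) : Equiv.Perm ℤ := (L.map sB).prod

/-- A signed permutation in `W(B_n)`: odd, and the identity beyond `n`. -/
def IsSignedPerm (n : ℕ) (w : Equiv.Perm ℤ) : Prop :=
  (∀ i : ℤ, w (-i) = -(w i)) ∧ ∀ i : ℤ, (n : ℤ) < |i| → w i = i

/-- The Coxeter length of `w` in `W(B_n)`. -/
noncomputable def lengthB (n : ℕ) (w : Equiv.Perm ℤ) : ℕ :=
  sInf {m : ℕ | ∃ L : List ℕ, (∀ a ∈ L, a < n) ∧ wordProd L = w ∧ L.length = m}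

/-- `L` is a reduced word of `w` in `W(B_n)`. -/
def IsReducedWord (n : ℕ) (w : Equiv.Perm ℤ) (L : List ℕ) : Prop :=
  (∀ a ∈ L, a < n) ∧ wordProd L = w ∧ L.length = lengthB n w

/-- The vector `e_k` (for `k ≥ 1` the `k`-th standard basis vector, with the
conventions `e 0 = 0` and `e (-k) = - e k`), represented as an odd function `ℤ → ℤ`. -/
def eVec (k : ℤ) : ℤ → ℤ :=
  fun t => if t = 0 then 0 else if t = k then 1 else if t = -k then -1 else 0

/-- The positive roots of type `B_n`. -/
def PosRoots (n : ℕ) : Set (ℤ → ℤ) :=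
  {v | (∃ i j : ℤ, 1 ≤ i ∧ i < j ∧ j ≤ (n : ℤ) ∧
        (v = eVec j - eVec i ∨ v = eVec j + eVec i)) ∨
       (∃ i : ℤ, 1 ≤ i ∧ i ≤ (n : ℤ) ∧ v = eVec i)}

/-- The action of a signed permutation on vectors: `w · e_i = e_{w(i)}`. -/
def actB (w : Equiv.Perm ℤ) (v : ℤ → ℤ) : ℤ → ℤ := fun t => v (w⁻¹ t)

/-- The inversion set `Inv(w) = {α ∈ Φ⁺ : w⁻¹ · α ∈ -Φ⁺}`. -/
def InvSet (n : ℕ) (w : Equiv.Perm ℤ) : Set (ℤ → ℤ) :=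
  {α | α ∈ PosRoots n ∧ -(actB w⁻¹ α) ∈ PosRoots n}

/-- The simple roots: `α_0 = e_1` and `α_a = e_{a+1} - e_a` for `a ≥ 1`. -/
def alphaRoot (a : ℕ) : ℤ → ℤ :=
  if a = 0 then eVec 1 else eVec ((a : ℤ) + 1) - eVec (a : ℤ)

/-- The reflection order of a word: `reflOrder L t = γ_{t+1} = s_{a_1} ⋯ s_{a_t} · α_{a_{t+1}}`
(0-indexed). -/
def reflOrder (L : List ℕ) (t : ℕ) : ℤ → ℤ :=
  actB (wordProd (L.take t)) (alphaRoot (L.getD t 0))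

/-- The trapezoid `Z(d,r) = (r+2d-1, r+2d-3, …, r+1)`. -/
def Zlam (d r : ℕ) : ℕ → ℕ := fun i => r + 2 * d + 1 - 2 * i

/-- The labeling `f : D(Z(d,r)) → Φ⁺`. -/
def fLabel (d r : ℕ) (p : ℤ × ℤ) : ℤ → ℤ :=
  if p.2 ≤ 0 then eVec ((d : ℤ) + 1 - p.1) - eVec p.2
  else if p.2 ≤ (r : ℤ) then eVec ((d : ℤ) + 1 - p.1) + eVec (p.2 + (d : ℤ))
  else eVec ((d : ℤ) + 1 - p.1) - eVec (p.2 - (r : ℤ))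

/-- The extended labeling `f̃`, with `f̃(i, i - d - 1) = 2 e_{d+1-i}`. -/
def fExtLabel (d r : ℕ) (p : ℤ × ℤ) : ℤ → ℤ :=
  if p.2 = p.1 - ((d : ℤ) + 1) then (2 : ℤ) • eVec ((d : ℤ) + 1 - p.1)
  else fLabel d r p

/-- `w` is the signed permutation `w^{(d,r)} ∈ W(B_{d+r})`, i.e.
`w(i) = d + i` for `1 ≤ i ≤ r` and `w(i) = -(i - r)` for `r < i ≤ d + r`. -/
def IsWdr (d r : ℕ) (w : Equiv.Perm ℤ) : Prop :=
  IsSignedPerm (d + r) w ∧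
    (∀ i : ℤ, 1 ≤ i → i ≤ (r : ℤ) → w i = (d : ℤ) + i) ∧
    (∀ i : ℤ, (r : ℤ) < i → i ≤ (d : ℤ) + (r : ℤ) → w i = -(i - r))


/-- `x` lies strictly between `y` and `z` (i.e. `min(y,z) < x < max(y,z)`). -/
def Between (x y z : ℕ) : Prop := (y < x ∧ x < z) ∨ (z < x ∧ x < y)

/-- A nonempty list is unimodal: strictly decreasing down to its minimum
(at 0-indexed position `k`), then strictly increasing. -/
def Unimodal (L : List ℕ) : Prop :=
  ∃ k : ℕ, k < L.length ∧
    (∀ a b : ℕ, a < b → b ≤ k → L.getD b 0 < L.getD a 0) ∧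
    (∀ a b : ℕ, k ≤ a → a < b → b < L.length → L.getD a 0 < L.getD b 0)

/-- Row `i` of the distinguished tableau of shape `Z(d,r)`:
`(r+d-i, …, r+1, 0, 1, …, r+d-i)`. -/
def rowWord (d r i : ℕ) : List ℕ :=
  (List.range (r + 2 * (d - i) + 1)).map fun t =>
    if t < d - i then r + (d - i) - t else t - (d - i)

/-- The reading word `π(T) = T_d T_{d-1} ⋯ T_1` of the distinguished tableau of
shape `Z(d,r)`. -/
def piWord (d r : ℕ) : List ℕ :=
  (List.range d).flatMap fun k => rowWord d r (d - k)

/-- `μ_i = Z(d,r)_i - λ_i`. -/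
def muF (d r : ℕ) (lam : ℕ → ℕ) (i : ℕ) : ℕ := r + 2 * d + 1 - 2 * i - lam i

/-- `σ_i = μ_1 + ⋯ + μ_i`. -/
def sigmaF (d r : ℕ) (lam : ℕ → ℕ) (i : ℕ) : ℕ := ∑ t ∈ Finset.Icc 1 i, muF d r lam t

/-- `ν_i = min{μ_i, …, μ_d}`. -/
noncomputable def nuF (d r : ℕ) (lam : ℕ → ℕ) (i : ℕ) : ℕ :=
  sInf {m : ℕ | ∃ j : ℕ, i ≤ j ∧ j ≤ d ∧ m = muF d r lam j}

/-- The word `a^λ`: the concatenation over `i = 1, …, d` of the increasing runs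
`(d+r-i-μ_i+1, …, d+r-i)`. -/
def aLamWord (d r : ℕ) (lam : ℕ → ℕ) : List ℕ :=
  (List.range d).flatMap fun k =>
    (List.range (muF d r lam (k + 1))).map fun t =>
      d + r - (k + 1) - muF d r lam (k + 1) + 1 + t

/-- Row `i` of the tableau `P(w^λ)`: entries `P(i,c) = c` for `c ≥ 0` and
`P(i,c) = r - c - ν_{d+1+c}` for `c < 0`. -/
noncomputable def rowWordP (d r : ℕ) (lam : ℕ → ℕ) (i : ℕ) : List ℕ :=
  (List.range (lam i)).map fun t =>
    if t < d - i then r + (d - i) - t - nuF d r lam (i + 1 + t) else t - (d - i)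

/-- The reading word `π(P(w^λ))`. -/
noncomputable def piWordP (d r : ℕ) (lam : ℕ → ℕ) : List ℕ :=
  (List.range d).flatMap fun k => rowWordP d r lam (d - k)

/-- The shape obtained from `λ` by adding one box at the end of row `i`. -/
def stepShape (lam : ℕ → ℕ) (i : ℕ) : ℕ → ℕ :=
  fun t => if t = i then lam i + 1 else lam t

/-- The box-adding map `f_i` on fillings: swap columns `j = λ_i + i - d` and `j + 1`
(in rows `1, …, i-1`), and put the value `N + 1` in the new box `(i, j)`. -/
def addBox (d : ℕ) (lam : ℕ → ℕ) (i : ℕ) (N : ℕ) (B : ℤ × ℤ → ℕ) : ℤ × ℤ → ℕ :=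
  fun p =>
    if p = ((i : ℤ), (lam i : ℤ) + (i : ℤ) - (d : ℤ)) then N + 1
    else if 1 ≤ p.1 ∧ p.1 < (i : ℤ) ∧ p.2 = (lam i : ℤ) + (i : ℤ) - (d : ℤ) then
      B (p.1, p.2 + 1)
    else if 1 ≤ p.1 ∧ p.1 < (i : ℤ) ∧ p.2 = (lam i : ℤ) + (i : ℤ) - (d : ℤ) + 1 then
      B (p.1, p.2 - 1)
    else B p

/-- Successively apply the box-adding maps along a list of row indices,
tracking the current shape. -/
def FmapAux (d : ℕ) : List ℕ → (ℕ → ℕ) → (ℤ × ℤ → ℕ) → (ℤ × ℤ → ℕ)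
  | [], _, B => B
  | i :: rest, lam, B => FmapAux d rest (stepShape lam i) (addBox d lam i (sizeP d lam) B)

/-- The shape after successively adding boxes along a list of row indices. -/
def shapeAux : List ℕ → (ℕ → ℕ) → (ℕ → ℕ)
  | [], lam => lam
  | i :: rest, lam => shapeAux rest (stepShape lam i)

/-- The list of row indices `1^{μ_1} 2^{μ_2} ⋯ d^{μ_d}` used to pad `λ` to `Z(d,r)`. -/
def rowsList (d r : ℕ) (lam : ℕ → ℕ) : List ℕ :=
  (List.range d).flatMap fun k => List.replicate (muF d r lam (k + 1)) (k + 1)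

/-- `BS(Z(d,r))|_λ`: balanced tableaux of shape `Z(d,r)` such that for each
`i ∈ {1,…,d}` the entries `N + σ_{i-1} + 1, …, N + σ_i` all occur in row `i`. -/
def BSRestricted (d r : ℕ) (lam : ℕ → ℕ) : Set (ℤ × ℤ → ℕ) :=
  {T | IsBalanced d (Zlam d r) T ∧ ∀ i : ℕ, 1 ≤ i → i ≤ d →
    ∀ k : ℕ, sizeP d lam + sigmaF d r lam (i - 1) + 1 ≤ k →
      k ≤ sizeP d lam + sigmaF d r lam i →
      ∃ c : ℤ, ((i : ℤ), c) ∈ Diagram d (Zlam d r) ∧ T ((i : ℤ), c) = k}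

/-- `w ∈ W(B_n)` pattern embeds the signed pattern `v` (given as its one-line
notation, a list of nonzero integers). -/
def PatternEmbeds (n : ℕ) (w : Equiv.Perm ℤ) (v : List ℤ) : Prop :=
  ∃ idx : Fin v.length → ℤ, StrictMono idx ∧
    (∀ j, 1 ≤ idx j ∧ idx j ≤ (n : ℤ)) ∧
    (∀ j, 0 < w (idx j) ↔ 0 < v.get j) ∧
    (∀ j k, |w (idx j)| < |w (idx k)| ↔ |v.get j| < |v.get k|)

/-!
To a strict partition one attaches two signed permutations. The first has the parts of `λ` as the
positions of its negative letters; removing a corner of `λ` is the same as removing the first letter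
of a reduced word, so standard tableaux are counted by its reduced words. For the second, a reduced
word is recorded by the times at which the pairs of letters are inverted. Reflection orders are
characterised among all such timings by betweenness: the time of the pair `p, r` lies between those
of `p, q` and `q, r`. Placing the times of the pairs `-i, z` in the rows of the diagram turns
betweenness, row by row, into the balance condition on hooks, so balanced tableaux are counted by
the reduced words of the second permutation. Finally, by the transition formula the numbers of
reduced words of the covers `v * signedSwap r q`, `q > r`, and `v * signedSwap z r`, `z < r`, of any
`v` have the same sum. The second permutation is sorted into the first by steps from the only cover
of one kind to the only cover of the other, so the two have equally many reduced words.
-/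

section SignedPermutations

variable {n m a : ℕ} {u v : Equiv.Perm ℤ} {p q x : ℤ}

theorem map_eq_zero_iff_of_odd (hu : Function.Odd u) : u x = 0 ↔ x = 0 := by
  rw [← hu.map_zero, u.injective.eq_iff, hu.map_zero]

theorem odd_symm (hu : Function.Odd u) : Function.Odd u.symm := fun x => by
  rw [Equiv.symm_apply_eq, hu, Equiv.apply_symm_apply]

theorem odd_mul (hu : Function.Odd u) (hv : Function.Odd v) : Function.Odd (u * v) := fun x => by
  rw [Equiv.Perm.mul_apply, Equiv.Perm.mul_apply, hv, hu]

theorem IsSignedPerm.odd (hu : IsSignedPerm n u) : Function.Odd u := hu.1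

theorem IsSignedPerm.symm (hu : IsSignedPerm n u) : IsSignedPerm n u.symm :=
  ⟨odd_symm hu.odd, fun x hx => by rw [Equiv.symm_apply_eq, hu.2 x hx]⟩

theorem IsSignedPerm.mul (hu : IsSignedPerm n u) (hv : IsSignedPerm n v) :
    IsSignedPerm n (u * v) :=
  ⟨odd_mul hu.odd hv.odd, fun x hx => by rw [Equiv.Perm.mul_apply, hv.2 x hx, hu.2 x hx]⟩

theorem IsSignedPerm.mono (hu : IsSignedPerm n u) (h : n ≤ m) : IsSignedPerm m u :=
  ⟨hu.1, fun x hx => hu.2 x (lt_of_le_of_lt (by exact_mod_cast h) hx)⟩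

theorem IsSignedPerm.abs_map_le (hu : IsSignedPerm n u) (hx : |x| ≤ n) : |u x| ≤ n := by
  by_contra! h
  have : u (u x) = u x := hu.2 _ h
  rw [u.injective this] at h
  omega

theorem isSignedPerm_one (n : ℕ) : IsSignedPerm n 1 := ⟨fun _ => rfl, fun _ _ => rfl⟩

/-- The reflection of the signed permutation group exchanging `p ↔ q` and `-p ↔ -q`;
it is only meaningful for `p, q ≠ 0`. -/
def signedSwap (p q : ℤ) : Equiv.Perm ℤ :=
  if p + q = 0 then Equiv.swap p q else Equiv.swap p q * Equiv.swap (-p) (-q)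

theorem signedSwap_apply (hp : p ≠ 0) (hq : q ≠ 0) (x : ℤ) :
    signedSwap p q x = if x = p then q else if x = q then p else if x = -p then -q
      else if x = -q then -p else x := by
  by_cases h : p + q = 0
  · rw [signedSwap, if_pos h, Equiv.swap_apply_def]
    split_ifs <;> omega
  · simp only [signedSwap, if_neg h, Equiv.Perm.mul_apply, Equiv.swap_apply_def]
    split_ifs <;> omega

theorem signedSwap_neg_neg (hp : p ≠ 0) (hq : q ≠ 0) : signedSwap (-q) (-p) = signedSwap p q := by
  ext x
  rw [signedSwap_apply hp hq, signedSwap_apply (neg_ne_zero.2 hq) (neg_ne_zero.2 hp)]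
  split_ifs <;> omega

theorem odd_signedSwap (hp : p ≠ 0) (hq : q ≠ 0) : Function.Odd (signedSwap p q) := fun x => by
  rw [signedSwap_apply hp hq, signedSwap_apply hp hq]
  split_ifs <;> omega

theorem isSignedPerm_signedSwap (hp : p ≠ 0) (hq : q ≠ 0) (hpn : |p| ≤ n) (hqn : |q| ≤ n) :
    IsSignedPerm n (signedSwap p q) := by
  refine ⟨odd_signedSwap hp hq, fun x hx => ?_⟩
  rw [signedSwap_apply hp hq]
  grind

theorem signedSwap_mul_self (hp : p ≠ 0) (hq : q ≠ 0) : signedSwap p q * signedSwap p q = 1 := by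
  ext x
  simp only [Equiv.Perm.mul_apply, signedSwap_apply hp hq, Equiv.Perm.one_apply]
  split_ifs <;> omega

theorem mul_signedSwap_apply_self (hp : p ≠ 0) (hq : q ≠ 0) (u : Equiv.Perm ℤ) (x : ℤ) :
    (u * signedSwap p q) (signedSwap p q x) = u x := by
  rw [← Equiv.Perm.mul_apply, mul_assoc, signedSwap_mul_self hp hq, mul_one]

theorem mul_signedSwap_symm_apply (hp : p ≠ 0) (hq : q ≠ 0) (u : Equiv.Perm ℤ) (x : ℤ) :
    (u * signedSwap p q).symm x = signedSwap p q (u.symm x) := by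
  rw [Equiv.symm_apply_eq, mul_signedSwap_apply_self hp hq, Equiv.apply_symm_apply]

theorem signedSwap_map_mul (hu : Function.Odd u) (hp : p ≠ 0) (hq : q ≠ 0) :
    signedSwap (u p) (u q) * u = u * signedSwap p q := by
  ext x
  simp only [Equiv.Perm.mul_apply, signedSwap_apply hp hq,
    signedSwap_apply ((map_eq_zero_iff_of_odd hu).not.2 hp) ((map_eq_zero_iff_of_odd hu).not.2 hq),
    ← hu _, u.injective.eq_iff]
  split_ifs <;> rfl

/-- The nonzero integer immediately below `a + 1`, so that the simple reflection `sB a` exchanges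
the positions `lowerPos a` and `a + 1`. -/
def lowerPos (a : ℕ) : ℤ := if a = 0 then -1 else a

theorem lowerPos_cases (a : ℕ) :
    (a = 0 ∧ lowerPos a = -1) ∨ (0 < a ∧ lowerPos a = a) := by
  unfold lowerPos
  split_ifs <;> omega

theorem lowerPos_ne_zero (a : ℕ) : lowerPos a ≠ 0 := by
  have := lowerPos_cases a
  omega

theorem sB_eq_signedSwap (a : ℕ) : sB a = signedSwap (lowerPos a) (a + 1) := by
  rcases lowerPos_cases a with ⟨rfl, -⟩ | ⟨h₀, h⟩
  · simp [sB, signedSwap, lowerPos, Equiv.swap_comm]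
  · rw [sB, signedSwap, h, if_neg (by omega), if_neg (by omega), neg_add']

theorem sB_apply (a : ℕ) (x : ℤ) :
    sB a x = if x = lowerPos a then (a : ℤ) + 1 else if x = a + 1 then lowerPos a
      else if x = -lowerPos a then -((a : ℤ) + 1) else if x = -((a : ℤ) + 1) then -lowerPos a
      else x := by
  rw [sB_eq_signedSwap, signedSwap_apply (lowerPos_ne_zero a) (by omega)]

theorem sB_mul_self (a : ℕ) : sB a * sB a = 1 := by
  rw [sB_eq_signedSwap, signedSwap_mul_self (lowerPos_ne_zero a) (by omega)]

theorem sB_mul_symm_apply (a : ℕ) (u : Equiv.Perm ℤ) (x : ℤ) :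
    (sB a * u).symm x = u.symm (sB a x) := by
  rw [Equiv.symm_apply_eq, Equiv.Perm.mul_apply, Equiv.apply_symm_apply, ← Equiv.Perm.mul_apply,
    sB_mul_self, Equiv.Perm.one_apply]

theorem odd_sB (a : ℕ) : Function.Odd (sB a) := by
  rw [sB_eq_signedSwap]
  exact odd_signedSwap (lowerPos_ne_zero a) (by omega)

theorem isSignedPerm_sB (h : a < n) : IsSignedPerm n (sB a) := by
  have := lowerPos_cases a
  rw [sB_eq_signedSwap]
  exact isSignedPerm_signedSwap (lowerPos_ne_zero a) (by omega) (by grind) (by grind)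

/-- `sB a` is a left descent of `u`: the letters at the consecutive positions `lowerPos a` and
`a + 1` are decreasing. Throughout, `u z` is the position of the letter `z`. -/
def IsDescent (u : Equiv.Perm ℤ) (a : ℕ) : Prop := u.symm (a + 1) < u.symm (lowerPos a)

instance (u : Equiv.Perm ℤ) (a : ℕ) : Decidable (IsDescent u a) :=
  inferInstanceAs (Decidable (_ < _))

theorem symm_lowerPos_ne_symm (u : Equiv.Perm ℤ) (a : ℕ) :
    u.symm (lowerPos a) ≠ u.symm (a + 1) := by
  have := lowerPos_cases a
  rw [u.symm.injective.ne_iff]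
  omega

theorem IsSignedPerm.lt_of_isDescent (hu : IsSignedPerm n u) (h : IsDescent u a) : a < n := by
  by_contra! hna
  have hc := lowerPos_cases a
  have ha : u.symm ((a : ℤ) + 1) = a + 1 := hu.symm.2 _ (by grind)
  rw [IsDescent, ha] at h
  rcases lt_or_ge (n : ℤ) |lowerPos a| with hl | hl
  · rw [hu.symm.2 _ hl] at h
    grind
  · have := hu.symm.abs_map_le hl
    grind

theorem isDescent_sB_mul_iff : IsDescent (sB a * u) a ↔ ¬ IsDescent u a := by
  have hlo : sB a (lowerPos a) = a + 1 := by simp [sB_apply]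
  have hhi : sB a ((a : ℤ) + 1) = lowerPos a := by
    have := lowerPos_cases a
    rw [sB_apply, if_neg (by omega), if_pos rfl]
  have hne := symm_lowerPos_ne_symm u a
  simp only [IsDescent, sB_mul_symm_apply, hlo, hhi]
  omega

end SignedPermutations

section Covers

variable {u : Equiv.Perm ℤ} {a : ℕ} {p q x y z : ℤ}

/-- The covering relation `u ⋖ u * signedSwap p q` that enters the transition formula: the letters
`p < q` occur in increasing order, and no letter of intermediate size stands between them, apart
from the fixed letter `0` when `q = -p`. -/
structure IsCover (p q : ℤ) (u : Equiv.Perm ℤ) : Prop where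
  left_ne_zero : p ≠ 0
  right_ne_zero : q ≠ 0
  lt : p < q
  map_lt : u p < u q
  between : ∀ z, p < z → z < q → u p < u z → u z < u q → z = 0 ∧ p + q = 0

theorem IsCover.not_between (hc : IsCover p q u) (hz : z ≠ 0) (hpz : p < z) (hzq : z < q) :
    ¬ (u p < u z ∧ u z < u q) :=
  fun h => hz (hc.between z hpz hzq h.1 h.2).1

theorem IsCover.add_eq_zero (hu : Function.Odd u) (hc : IsCover p q u) (hp : p < 0)
    (hq : 0 < q) : p + q = 0 ∨ ¬ (u p < 0 ∧ 0 < u q) := by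
  by_contra! h
  have h₀ := hu.map_zero
  exact h.1 (hc.between 0 hp hq (by omega) (by omega)).2

/-- `x < y` are the two positions exchanged by `sB a`, or their negatives. -/
def IsSimplePair (a : ℕ) (x y : ℤ) : Prop :=
  (x = lowerPos a ∧ y = a + 1) ∨ (x = -(a + 1) ∧ y = -lowerPos a)

instance (a : ℕ) (x y : ℤ) : Decidable (IsSimplePair a x y) :=
  inferInstanceAs (Decidable (_ ∨ _))

theorem signedSwap_reverses (hp : p ≠ 0) (hq : q ≠ 0) (hpq : p < q) (hxy : x < y)
    (h : signedSwap p q y < signedSwap p q x) :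
    (x = p ∧ y ≤ q) ∨ (y = q ∧ p ≤ x) ∨ (-x = q ∧ p ≤ -y) ∨ (-y = p ∧ -x ≤ q) ∨
      (p < 0 ∧ 0 < q ∧ y = -x ∧ (x = p ∨ -x = q)) := by
  rw [signedSwap_apply hp hq, signedSwap_apply hp hq] at h
  split_ifs at h <;> omega

theorem IsCover.not_signedSwap_lt_signedSwap (hu : Function.Odd u) (hc : IsCover p q u)
    (hns : ¬ IsSimplePair a (u p) (u q)) (hux : u x = lowerPos a) (huy : u y = a + 1)
    (hxy : x < y) : ¬ signedSwap p q y < signedSwap p q x := by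
  intro hd
  have hbtw {z : ℤ} := hc.not_between (z := z)
  have hzero := hc.add_eq_zero hu
  obtain ⟨hp, hq, hpq, hupq, -⟩ := hc
  unfold IsSimplePair at hns
  have hlow := lowerPos_cases a
  have hup := (map_eq_zero_iff_of_odd hu).not.2 hp
  have huq := (map_eq_zero_iff_of_odd hu).not.2 hq
  have hx₀ : x ≠ 0 := (map_eq_zero_iff_of_odd hu).not.1 (hux ▸ lowerPos_ne_zero a)
  have hy₀ : y ≠ 0 := (map_eq_zero_iff_of_odd hu).not.1 (by omega)
  have hux' := hu x
  have huy' := hu y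
  have hne {z w : ℤ} (h : z < w) : u z ≠ u w := u.injective.ne h.ne
  rcases signedSwap_reverses hp hq hpq hxy hd with
    ⟨rfl, hy⟩ | ⟨rfl, hx⟩ | ⟨rfl, hy⟩ | ⟨rfl, hx⟩ | ⟨hp₀, hq₀, rfl, h⟩
  · rcases hy.eq_or_lt with rfl | hy
    · omega
    · have := hbtw (by omega) hxy hy
      have := hne hy
      omega
  · rcases hx.eq_or_lt with rfl | hx
    · omega
    · have := hbtw (by omega) hx hxy
      have := hne hx
      omega
  · rcases hy.eq_or_lt with rfl | hy
    · omega
    · have := hbtw (by omega) hy (show -y < -x by omega)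
      have := hne hy
      omega
  · rcases hx.eq_or_lt with rfl | hx
    · omega
    · have := hbtw (by omega) (show -y < -x by omega) hx
      have := hne hx
      omega
  · rcases hzero hp₀ hq₀ with h' | h'
    · obtain ⟨rfl, rfl⟩ : x = p ∧ -x = q := by omega
      omega
    · rcases h with rfl | rfl <;> omega

theorem IsCover.isDescent (hu : Function.Odd u) (hc : IsCover p q u)
    (hns : ¬ IsSimplePair a (u p) (u q)) (hd : IsDescent (u * signedSwap p q) a) :
    IsDescent u a := by
  simp only [IsDescent, mul_signedSwap_symm_apply hc.left_ne_zero hc.right_ne_zero] at hd ⊢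
  by_contra hlt
  exact hc.not_signedSwap_lt_signedSwap hu hns (u.apply_symm_apply _) (u.apply_symm_apply _)
    (lt_of_le_of_ne (not_lt.1 hlt) (symm_lowerPos_ne_symm u a)) hd

theorem sB_lt_sB (hx : x ≠ 0) (hy : y ≠ 0) (h : x < y) (hns : ¬ IsSimplePair a x y) :
    sB a x < sB a y := by
  have := lowerPos_cases a
  unfold IsSimplePair at hns
  rw [sB_apply, sB_apply]
  split_ifs <;> omega

theorem lt_or_isSimplePair_of_sB_lt (hx : x ≠ 0) (hy : y ≠ 0) (h : sB a x < sB a y) :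
    x < y ∨ IsSimplePair a y x := by
  have := lowerPos_cases a
  rw [sB_apply, sB_apply] at h
  unfold IsSimplePair
  split_ifs at h <;> omega

theorem neg_or_isSimplePair_of_sB_neg (h : sB a x < 0) : x < 0 ∨ IsSimplePair a (-x) x := by
  have := lowerPos_cases a
  rw [sB_apply] at h
  unfold IsSimplePair
  split_ifs at h <;> omega

theorem isDescent_iff_of_isSimplePair (hu : Function.Odd u) (h : IsSimplePair a (u x) (u y)) :
    IsDescent u a ↔ y < x := by
  rw [IsDescent]
  rcases h with ⟨hx, hy⟩ | ⟨hx, hy⟩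
  · rw [← hx, ← hy, Equiv.symm_apply_apply, Equiv.symm_apply_apply]
  · rw [show ((a : ℤ) + 1) = u (-x) by rw [hu]; omega,
      show lowerPos a = u (-y) by rw [hu]; omega,
      Equiv.symm_apply_apply, Equiv.symm_apply_apply, neg_lt_neg_iff]

theorem signedSwap_lt_iff_of_isSimplePair (hu : Function.Odd u) (hp : p ≠ 0) (hq : q ≠ 0)
    (hd : IsDescent (u * signedSwap p q) a ↔ IsDescent u a) (h : IsSimplePair a (u x) (u y)) :
    signedSwap p q y < signedSwap p q x ↔ y < x := by
  rw [← isDescent_iff_of_isSimplePair hu h, ← hd]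
  refine (isDescent_iff_of_isSimplePair (odd_mul hu (odd_signedSwap hp hq)) ?_).symm
  simpa only [mul_signedSwap_apply_self hp hq] using h

theorem IsCover.add_eq_zero_of_sB (hu : Function.Odd u) (hc : IsCover p q u)
    (hd : IsDescent (u * signedSwap p q) a ↔ IsDescent u a) (hp₀ : p < 0) (hq₀ : 0 < q)
    (h₁ : sB a (u p) < 0) (h₂ : 0 < sB a (u q)) : p + q = 0 := by
  have hzero := hc.add_eq_zero hu hp₀ hq₀
  obtain ⟨hp, hq, -, -, -⟩ := hc
  by_contra hpq
  rw [← neg_lt_zero, ← odd_sB] at h₂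
  rcases neg_or_isSimplePair_of_sB_neg h₁ with h₁ | h₁
  · rcases neg_or_isSimplePair_of_sB_neg h₂ with h₂ | h₂
    · omega
    · rw [neg_neg, ← hu] at h₂
      have h := (signedSwap_lt_iff_of_isSimplePair hu hp hq hd h₂).2 (by omega)
      rw [signedSwap_apply hp hq, signedSwap_apply hp hq] at h
      split_ifs at h <;> omega
  · rw [← hu] at h₁
    have h := (signedSwap_lt_iff_of_isSimplePair hu hp hq hd h₁).2 (by omega)
    rw [signedSwap_apply hp hq, signedSwap_apply hp hq] at h
    split_ifs at h <;> omega

theorem IsCover.sB_mul (hu : Function.Odd u) (hc : IsCover p q u)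
    (hns : ¬ IsSimplePair a (u p) (u q))
    (hd : IsDescent (u * signedSwap p q) a ↔ IsDescent u a) : IsCover p q (sB a * u) := by
  have hzero := hc.add_eq_zero hu
  have hzero' := hc.add_eq_zero_of_sB hu hd
  obtain ⟨hp, hq, hpq, hupq, hbtw⟩ := hc
  have hlow := lowerPos_cases a
  have hup := (map_eq_zero_iff_of_odd hu).not.2 hp
  have huq := (map_eq_zero_iff_of_odd hu).not.2 hq
  have hnp := hu p
  have hnq := hu q
  refine ⟨hp, hq, hpq, sB_lt_sB hup huq hupq hns, fun z hpz hzq h₁ h₂ => ?_⟩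
  rw [Equiv.Perm.mul_apply, Equiv.Perm.mul_apply] at h₁ h₂
  rcases eq_or_ne z 0 with rfl | hz
  · rw [hu.map_zero, (odd_sB a).map_zero] at h₁ h₂
    exact ⟨rfl, hzero' hpz hzq h₁ h₂⟩
  have huz := (map_eq_zero_iff_of_odd hu).not.2 hz
  rcases lt_or_isSimplePair_of_sB_lt hup huz h₁ with h₁ | h₁
  · rcases lt_or_isSimplePair_of_sB_lt huz huq h₂ with h₂ | h₂
    · exact hbtw z hpz hzq h₁ h₂
    · have h := (signedSwap_lt_iff_of_isSimplePair hu hp hq hd h₂).2 hzq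
      rw [signedSwap_apply hp hq, signedSwap_apply hp hq] at h
      unfold IsSimplePair at h₂
      split_ifs at h <;> subst_vars <;> omega
  · have h := (signedSwap_lt_iff_of_isSimplePair hu hp hq hd h₁).2 hpz
    rw [signedSwap_apply hp hq, signedSwap_apply hp hq] at h
    unfold IsSimplePair at h₁
    split_ifs at h <;> subst_vars <;> omega

theorem not_isSimplePair_sB (hns : ¬ IsSimplePair a y x) : ¬ IsSimplePair a (sB a x) (sB a y) := by
  have := lowerPos_cases a
  unfold IsSimplePair at *
  rw [sB_apply, sB_apply]
  split_ifs <;> omega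

theorem isCover_and_isDescent_iff (hu : Function.Odd u) (hns : ¬ IsSimplePair a (u p) (u q))
    (hns' : ¬ IsSimplePair a (u q) (u p)) :
    IsCover p q u ∧ IsDescent (u * signedSwap p q) a ↔ IsDescent u a ∧ IsCover p q (sB a * u) := by
  refine ⟨fun ⟨hc, hd⟩ => ?_, fun ⟨hd, hc⟩ => ?_⟩
  · have hd' := hc.isDescent hu hns hd
    exact ⟨hd', hc.sB_mul hu hns (iff_of_true hd hd')⟩
  · have hu' : Function.Odd (sB a * u) := odd_mul (odd_sB a) hu
    have hns'' : ¬ IsSimplePair a ((sB a * u) p) ((sB a * u) q) := not_isSimplePair_sB hns'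
    have hd' : ¬ IsDescent (sB a * u) a := by rwa [isDescent_sB_mul_iff, not_not]
    have hdt : ¬ IsDescent (sB a * u * signedSwap p q) a := fun h => hd' (hc.isDescent hu' hns'' h)
    have hc' := hc.sB_mul hu' hns'' (iff_of_false hdt hd')
    rw [← mul_assoc, sB_mul_self, one_mul] at hc'
    rw [mul_assoc, isDescent_sB_mul_iff, not_not] at hdt
    exact ⟨hc', hdt⟩

end Covers

section Transition

variable {n N a : ℕ} {u : Equiv.Perm ℤ} {p q r x y z : ℤ}

theorem IsSimplePair.sB_left (h : IsSimplePair a x y) : sB a x = y := by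
  have := lowerPos_cases a
  unfold IsSimplePair at h
  rw [sB_apply]
  split_ifs <;> omega

theorem IsSimplePair.sB_right (h : IsSimplePair a x y) : sB a y = x := by
  rw [← h.sB_left, ← Equiv.Perm.mul_apply, sB_mul_self, Equiv.Perm.one_apply]

theorem IsSimplePair.lt (h : IsSimplePair a x y) : x < y := by
  have := lowerPos_cases a
  unfold IsSimplePair at h
  omega

theorem mul_signedSwap_of_isSimplePair (hu : Function.Odd u) (hp : p ≠ 0) (hq : q ≠ 0)
    (h : IsSimplePair a (u p) (u q)) : u * signedSwap p q = sB a * u := by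
  rw [← signedSwap_map_mul hu hp hq, sB_eq_signedSwap]
  rcases h with ⟨hx, hy⟩ | ⟨hx, hy⟩
  · rw [hx, hy]
  · rw [hx, hy, signedSwap_neg_neg (lowerPos_ne_zero a) (by omega)]

theorem isCover_of_isSimplePair (hu : Function.Odd u) (hp : p ≠ 0) (hq : q ≠ 0)
    (h : IsSimplePair a (u p) (u q)) (hpq : p < q) : IsCover p q u := by
  refine ⟨hp, hq, hpq, h.lt, fun z _ _ h₁ h₂ => ?_⟩
  have hlow := lowerPos_cases a
  unfold IsSimplePair at h
  obtain rfl : z = 0 := by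
    rw [← map_eq_zero_iff_of_odd hu]
    omega
  obtain rfl : p = -q := by
    have h₀ := hu.map_zero
    rw [← u.injective.eq_iff, hu]
    omega
  omega

open Classical in
/-- The number of words `a₁ ⋯ a_N` such that each `a_i` is a left descent of
`sB a_{i-1} ⋯ sB a₁ * u` and the last product is `1`: the number of reduced words of `u` when `N` is
the length of `u`, and `0` otherwise. -/
noncomputable def numReducedWords : ℕ → Equiv.Perm ℤ → ℕ
  | 0, u => if u = 1 then 1 else 0
  | N + 1, u => ∑ᶠ a : ℕ, if IsDescent u a then numReducedWords N (sB a * u) else 0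

theorem numReducedWords_succ (hu : IsSignedPerm n u) (N : ℕ) :
    numReducedWords (N + 1) u =
      ∑ a ∈ Finset.range n, if IsDescent u a then numReducedWords N (sB a * u) else 0 := by
  rw [numReducedWords]
  refine finsum_eq_sum_of_support_subset _ fun a ha => ?_
  have hd : IsDescent u a := by
    by_contra h
    exact ha (if_neg h)
  simpa using hu.lt_of_isDescent hd

open Classical in
/-- The contribution of the letter `z` to the signed sum of `f` over the covers of `u` moving the
letter `r`: positive if `z < r`, negative if `r < z`. -/
noncomputable def coverTerm (f : Equiv.Perm ℤ → ℤ) (u : Equiv.Perm ℤ) (r z : ℤ) : ℤ :=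
  (if IsCover z r u then f (u * signedSwap z r) else 0) -
    if IsCover r z u then f (u * signedSwap r z) else 0

theorem coverTerm_swap (f : Equiv.Perm ℤ → ℤ) (u : Equiv.Perm ℤ) (r z : ℤ) :
    coverTerm f u z r = -coverTerm f u r z := (neg_sub _ _).symm

/-- The contribution of the words starting with `a` to `numReducedWords (N + 1) u`. -/
noncomputable def descentTerm (N a : ℕ) (u : Equiv.Perm ℤ) : ℤ :=
  if IsDescent u a then numReducedWords N (sB a * u) else 0

theorem numReducedWords_succ_eq_sum_descentTerm (hu : IsSignedPerm n u) (N : ℕ) :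
    (numReducedWords (N + 1) u : ℤ) = ∑ a ∈ Finset.range n, descentTerm N a u := by
  simp only [numReducedWords_succ hu, descentTerm, Nat.cast_sum, Nat.cast_ite, Nat.cast_zero]

/-- The failure of taking covers to commute with removing the first letter `a` of a word. -/
noncomputable def coverDefect (N a : ℕ) (u : Equiv.Perm ℤ) (r z : ℤ) : ℤ :=
  coverTerm (descentTerm N a) u r z -
    if IsDescent u a then coverTerm (fun v => numReducedWords N v) (sB a * u) r z else 0

theorem coverDefect_swap (N a : ℕ) (u : Equiv.Perm ℤ) (r z : ℤ) :
    coverDefect N a u z r = -coverDefect N a u r z := by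
  simp only [coverDefect, coverTerm_swap _ _ r z]
  split_ifs <;> ring

theorem coverDefect_of_not_isSimplePair (hu : Function.Odd u)
    (h₁ : ¬ IsSimplePair a (u z) (u r)) (h₂ : ¬ IsSimplePair a (u r) (u z)) :
    coverDefect N a u r z = 0 := by
  have k₁ := isCover_and_isDescent_iff hu h₁ h₂
  have k₂ := isCover_and_isDescent_iff hu h₂ h₁
  simp only [coverDefect, coverTerm, descentTerm, ← ite_and, k₁, k₂, mul_assoc]
  split_ifs <;> simp_all

theorem coverDefect_of_isSimplePair (hu : Function.Odd u) (hr : r ≠ 0) (hz : z ≠ 0)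
    (h : IsSimplePair a (u z) (u r)) : coverDefect N a u r z = numReducedWords N u := by
  have hmul := mul_signedSwap_of_isSimplePair hu hz hr h
  have hdesc := isDescent_iff_of_isSimplePair hu h
  have hne : z ≠ r := fun hzr => h.lt.ne (congrArg u hzr)
  rcases hne.lt_or_gt with hlt | hgt
  · have hnd : ¬ IsDescent u a := fun hd => (hdesc.1 hd).not_gt hlt
    have hnc : ¬ IsCover r z u := fun hc => hc.lt.not_gt hlt
    rw [coverDefect, coverTerm, if_pos (isCover_of_isSimplePair hu hz hr h hlt), if_neg hnc,
      if_neg hnd, hmul, descentTerm, if_pos (isDescent_sB_mul_iff.2 hnd), ← mul_assoc, sB_mul_self,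
      one_mul, sub_zero, sub_zero]
  · have hd : IsDescent u a := hdesc.2 hgt
    have hnc₁ (v : Equiv.Perm ℤ) : ¬ IsCover z r v := fun hc => hc.lt.not_gt hgt
    have hnc₂ : ¬ IsCover r z u := fun hc => hc.map_lt.not_gt h.lt
    have hu' : Function.Odd (sB a * u) := odd_mul (odd_sB a) hu
    have h' : IsSimplePair a ((sB a * u) r) ((sB a * u) z) := by
      rwa [Equiv.Perm.mul_apply, Equiv.Perm.mul_apply, h.sB_left, h.sB_right]
    rw [coverDefect, coverTerm, coverTerm, if_neg (hnc₁ _), if_neg hnc₂, if_pos hd, if_neg (hnc₁ _),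
      if_pos (isCover_of_isSimplePair hu' hr hz h' hgt),
      mul_signedSwap_of_isSimplePair hu' hr hz h', ← mul_assoc, sB_mul_self, one_mul]
    ring

theorem coverDefect_eq (hu : Function.Odd u) (hr : r ≠ 0) (z : ℤ) :
    coverDefect N a u r z = (if IsSimplePair a (u z) (u r) then (numReducedWords N u : ℤ) else 0) -
      if IsSimplePair a (u r) (u z) then (numReducedWords N u : ℤ) else 0 := by
  have hz {z w : ℤ} (h : IsSimplePair a (u z) (u w) ∨ IsSimplePair a (u w) (u z)) : z ≠ 0 := by
    have := lowerPos_cases a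
    rw [ne_eq, ← map_eq_zero_iff_of_odd hu]
    unfold IsSimplePair at h
    omega
  by_cases h₁ : IsSimplePair a (u z) (u r)
  · rw [if_pos h₁, if_neg fun h₂ => h₂.lt.not_gt h₁.lt, sub_zero,
      coverDefect_of_isSimplePair hu hr (hz (.inl h₁)) h₁]
  · by_cases h₂ : IsSimplePair a (u r) (u z)
    · rw [if_neg h₁, if_pos h₂, coverDefect_swap,
        coverDefect_of_isSimplePair hu (hz (.inr h₂)) hr h₂, zero_sub]
    · rw [if_neg h₁, if_neg h₂, coverDefect_of_not_isSimplePair hu h₁ h₂, sub_zero]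

theorem sum_isSimplePair_left (hu : IsSignedPerm n u) (ha : a < n) (k c : ℤ) :
    ∑ z ∈ Finset.Icc (-n : ℤ) n, (if IsSimplePair a (u z) k then c else 0) =
      if k = a + 1 ∨ k = -lowerPos a then c else 0 := by
  have hlow := lowerPos_cases a
  have hmem {z : ℤ} (hz : IsSimplePair a (u z) k) : z ∈ Finset.Icc (-n : ℤ) n := by
    rw [Finset.mem_Icc, ← abs_le, ← u.symm_apply_apply z]
    refine hu.symm.abs_map_le ?_
    rw [abs_le]
    unfold IsSimplePair at hz
    omega
  split_ifs with hk
  · obtain ⟨z, hz⟩ : ∃ z, IsSimplePair a (u z) k := by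
      rcases hk with hk | hk
      · exact ⟨u.symm (lowerPos a), .inl ⟨u.apply_symm_apply _, hk⟩⟩
      · exact ⟨u.symm (-(a + 1)), .inr ⟨u.apply_symm_apply _, hk⟩⟩
    rw [Finset.sum_eq_single_of_mem z (hmem hz), if_pos hz]
    intro w _ hwz
    refine if_neg fun hw => hwz (u.injective ?_)
    rw [← hz.sB_right, ← hw.sB_right]
  · refine Finset.sum_eq_zero fun z _ => if_neg fun hz => hk ?_
    exact hz.imp And.right And.right

theorem isSimplePair_neg_neg : IsSimplePair a (-y) (-x) ↔ IsSimplePair a x y := by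
  unfold IsSimplePair
  omega

theorem sum_isSimplePair_right (hu : IsSignedPerm n u) (ha : a < n) (k c : ℤ) :
    ∑ z ∈ Finset.Icc (-n : ℤ) n, (if IsSimplePair a k (u z) then c else 0) =
      if k = lowerPos a ∨ k = -(a + 1) then c else 0 := by
  have hk : (k = lowerPos a ∨ k = -(a + 1)) ↔ (-k = a + 1 ∨ -k = -lowerPos a) := by omega
  simp only [hk, ← sum_isSimplePair_left hu ha (-k) c]
  refine Finset.sum_nbij' (-·) (-·) ?_ ?_ (fun z _ => neg_neg z) (fun z _ => neg_neg z) ?_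
  · simp only [Finset.mem_Icc]; omega
  · simp only [Finset.mem_Icc]; omega
  · intro z _
    simp only [hu.odd z, isSimplePair_neg_neg]

theorem sum_range_succ_or_neg_lowerPos (hr : r ≠ 0) (hrn : |r| ≤ n) (c : ℤ) :
    ∑ a ∈ Finset.range (n + 1), (if r = a + 1 ∨ r = -lowerPos a then c else 0) = c := by
  rw [abs_le] at hrn
  have hiff (a : ℕ) : (r = a + 1 ∨ r = -lowerPos a) ↔
      (if 0 < r then (r - 1).toNat else (-r).toNat) = a := by
    have := lowerPos_cases a
    split_ifs <;> omega
  simp only [hiff, Finset.sum_ite_eq]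
  rw [if_pos]
  rw [Finset.mem_range]
  split_ifs <;> omega

theorem sum_range_lowerPos_or_neg_succ (hr : r ≠ 0) (hrn : |r| ≤ n) (c : ℤ) :
    ∑ a ∈ Finset.range (n + 1), (if r = lowerPos a ∨ r = -(a + 1) then c else 0) = c := by
  refine (Finset.sum_congr rfl fun a _ => if_congr ?_ rfl rfl).trans
    (sum_range_succ_or_neg_lowerPos (neg_ne_zero.2 hr) ((abs_neg r).trans_le hrn) c)
  omega

theorem coverTerm_congr {f g : Equiv.Perm ℤ → ℤ}
    (hl : IsCover z r u → f (u * signedSwap z r) = g (u * signedSwap z r))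
    (hr : IsCover r z u → f (u * signedSwap r z) = g (u * signedSwap r z)) :
    coverTerm f u r z = coverTerm g u r z := by
  rw [coverTerm, coverTerm]
  congr 1
  · split_ifs with hc
    exacts [hl hc, rfl]
  · split_ifs with hc
    exacts [hr hc, rfl]

theorem coverTerm_sum {ι : Type*} (s : Finset ι) (f : ι → Equiv.Perm ℤ → ℤ) :
    coverTerm (fun v => ∑ i ∈ s, f i v) u r z = ∑ i ∈ s, coverTerm (f i) u r z := by
  simp only [coverTerm, Finset.sum_sub_distrib]
  split_ifs <;> simp only [Finset.sum_const_zero]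

theorem coverTerm_numReducedWords_zero :
    coverTerm (fun v => numReducedWords 0 v) u r z = 0 := by
  have h {p q : ℤ} (hc : IsCover p q u) : numReducedWords 0 (u * signedSwap p q) = 0 := by
    refine if_neg fun h => ?_
    obtain rfl : u = signedSwap p q := by
      rw [eq_inv_of_mul_eq_one_left h,
        inv_eq_of_mul_eq_one_left (signedSwap_mul_self hc.left_ne_zero hc.right_ne_zero)]
    have := hc.map_lt
    rw [signedSwap_apply hc.left_ne_zero hc.right_ne_zero,
      signedSwap_apply hc.left_ne_zero hc.right_ne_zero] at this
    have := hc.lt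
    split_ifs at * <;> omega
  rw [coverTerm]
  split_ifs with h₁ h₂ h₂ <;> simp only [h _, h₁, h₂, Nat.cast_zero, sub_zero]

theorem coverTerm_numReducedWords_succ (hu : IsSignedPerm n u) (hrn : |r| ≤ n)
    (hzn : |z| ≤ n) :
    coverTerm (fun v => numReducedWords (N + 1) v) u r z = ∑ a ∈ Finset.range n,
      (coverDefect N a u r z +
        if IsDescent u a then coverTerm (fun v => numReducedWords N v) (sB a * u) r z else 0) := by
  simp only [coverDefect, sub_add_cancel, ← coverTerm_sum]
  have hswap {x y : ℤ} (hx : |x| ≤ n) (hy : |y| ≤ n) (hc : IsCover x y u) :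
      IsSignedPerm n (u * signedSwap x y) :=
    hu.mul (isSignedPerm_signedSwap hc.left_ne_zero hc.right_ne_zero hx hy)
  exact coverTerm_congr
    (fun hc => numReducedWords_succ_eq_sum_descentTerm (hswap hzn hrn hc) N)
    (fun hc => numReducedWords_succ_eq_sum_descentTerm (hswap hrn hzn hc) N)

-- Taking covers commutes with removing the first letter of a word except at the covers that are
-- themselves simple reflections; these contribute `±numReducedWords N u`, once with each sign.
theorem sum_coverTerm_eq_zero (hu : IsSignedPerm n u) (hr : r ≠ 0) (hrn : |r| ≤ n) (N : ℕ) :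
    ∑ z ∈ Finset.Icc (-(n + 1 : ℕ) : ℤ) (n + 1 : ℕ),
      coverTerm (fun v => numReducedWords N v) u r z = 0 := by
  induction N generalizing u with
  | zero => exact Finset.sum_eq_zero fun z _ => coverTerm_numReducedWords_zero
  | succ N ih =>
    have hu' : IsSignedPerm (n + 1) u := hu.mono n.le_succ
    have hrn' : |u r| ≤ n := hu.abs_map_le hrn
    have hur : u r ≠ 0 := (map_eq_zero_iff_of_odd hu.odd).not.2 hr
    calc
      _ = ∑ z ∈ Finset.Icc (-(n + 1 : ℕ) : ℤ) (n + 1 : ℕ), ∑ a ∈ Finset.range (n + 1),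
          (coverDefect N a u r z + if IsDescent u a then
            coverTerm (fun v => numReducedWords N v) (sB a * u) r z else 0) :=
        Finset.sum_congr rfl fun z hz => coverTerm_numReducedWords_succ hu'
          (hrn.trans (by simp)) (abs_le.2 (Finset.mem_Icc.1 hz))
      _ = ∑ a ∈ Finset.range (n + 1), ∑ z ∈ Finset.Icc (-(n + 1 : ℕ) : ℤ) (n + 1 : ℕ),
          coverDefect N a u r z := by
        rw [Finset.sum_comm]
        refine Finset.sum_congr rfl fun a _ => ?_
        rw [Finset.sum_add_distrib, add_eq_left]
        split_ifs with hd
        · exact ih ((isSignedPerm_sB (hu.lt_of_isDescent hd)).mul hu)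
        · exact Finset.sum_const_zero
      _ = 0 := by
        simp only [coverDefect_eq hu.odd hr, Finset.sum_sub_distrib]
        rw [sub_eq_zero]
        rw [Finset.sum_congr rfl fun a ha =>
          sum_isSimplePair_left hu' (Finset.mem_range.1 ha) (u r) _,
          Finset.sum_congr rfl fun a ha =>
          sum_isSimplePair_right hu' (Finset.mem_range.1 ha) (u r) _,
          sum_range_succ_or_neg_lowerPos hur hrn', sum_range_lowerPos_or_neg_succ hur hrn']

theorem numReducedWords_eq_of_unique_covers (hu : IsSignedPerm n u) (hrn : |r| ≤ n)
    (hp : IsCover p r u) (hq : IsCover r q u) (hpn : |p| ≤ n) (hqn : |q| ≤ n)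
    (hp' : ∀ z, IsCover z r u → z = p) (hq' : ∀ z, IsCover r z u → z = q) (N : ℕ) :
    numReducedWords N (u * signedSwap p r) = numReducedWords N (u * signedSwap r q) := by
  have hp_iff (z : ℤ) : IsCover z r u ↔ z = p := ⟨hp' z, fun h => h ▸ hp⟩
  have hq_iff (z : ℤ) : IsCover r z u ↔ z = q := ⟨hq' z, fun h => h ▸ hq⟩
  have hsum := sum_coverTerm_eq_zero hu hp.right_ne_zero hrn N
  rw [abs_le] at hpn hqn
  simp only [coverTerm, hp_iff, hq_iff, Finset.sum_sub_distrib, Finset.sum_ite_eq'] at hsum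
  rw [if_pos (by rw [Finset.mem_Icc]; omega), if_pos (by rw [Finset.mem_Icc]; omega)] at hsum
  omega

end Transition

section Encard

variable {ι α β : Type*}

theorem encard_eq_sum_of_unique_image (F : Finset ι) {s : Set β} {t : ι → Set α} {f : ι → α → β}
    (hs : ∀ y, y ∈ s ↔ ∃ i ∈ F, ∃ x ∈ t i, f i x = y)
    (hinj : ∀ i ∈ F, Set.InjOn (f i) (t i))
    (hdisj : ∀ i ∈ F, ∀ j ∈ F, ∀ x ∈ t i, ∀ y ∈ t j, f i x = f j y → i = j) :
    s.encard = ∑ i ∈ F, (t i).encard := by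
  have hunion : s = ⋃ i ∈ F, f i '' t i := by
    ext y
    simp only [hs, Set.mem_iUnion, Set.mem_image, exists_prop]
  have hdisjoint : (F : Set ι).PairwiseDisjoint fun i => f i '' t i := by
    intro i hi j hj hij
    rw [Function.onFun, Set.disjoint_left]
    rintro _ ⟨x, hx, rfl⟩ ⟨y, hy, hxy⟩
    exact hij (hdisj i hi j hj x hx y hy hxy.symm)
  have hcard := F.finite_toSet.encard_biUnion hdisjoint
  simp only [Finset.mem_coe, finsum_mem_finset_eq_sum] at hcard
  rw [hunion, hcard]
  exact Finset.sum_congr rfl fun i hi => (hinj i hi).encard_image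

end Encard

section Timings

variable {n N a : ℕ} {u v : Equiv.Perm ℤ} {T : ℤ → ℤ → ℕ} {p q x y z : ℤ}

theorem eq_one_of_strictMono_of_odd (hu : Function.Odd u) (h : StrictMono u) : u = 1 := by
  have hsucc (x : ℤ) : u (x + 1) = u x + 1 :=
    (StrictMono.orderIsoOfSurjective u h u.surjective).map_succ x
  ext x
  induction x using Int.induction_on with
  | zero => exact hu.map_zero
  | succ x ih => rw [hsucc, ih]; rfl
  | pred x ih =>
    have := hsucc (-x - 1)
    rw [sub_add_cancel, ih] at this
    simp only [Equiv.Perm.one_apply] at this ⊢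
    omega

theorem sB_mul_lt_of_lt_of_not_isSimplePair (hu : Function.Odd u) (hp : p ≠ 0) (hq : q ≠ 0)
    (h : u q < u p) (hns : ¬ IsSimplePair a (u q) (u p)) : (sB a * u) q < (sB a * u) p :=
  sB_lt_sB ((map_eq_zero_iff_of_odd hu).not.2 hq) ((map_eq_zero_iff_of_odd hu).not.2 hp) h hns

theorem not_sB_mul_lt_of_isSimplePair (h : IsSimplePair a (u q) (u p)) :
    ¬ (sB a * u) q < (sB a * u) p := by
  rw [Equiv.Perm.mul_apply, Equiv.Perm.mul_apply, h.sB_left, h.sB_right]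
  exact h.lt.not_gt

theorem IsDescent.map_lt_of_sB_mul (hu : Function.Odd u) (hd : IsDescent u a) (hp : p ≠ 0)
    (hq : q ≠ 0) (hpq : p < q) (h : (sB a * u) q < (sB a * u) p) : u q < u p := by
  refine (lt_or_isSimplePair_of_sB_lt ((map_eq_zero_iff_of_odd hu).not.2 hq)
    ((map_eq_zero_iff_of_odd hu).not.2 hp) h).resolve_right fun hs => ?_
  exact hpq.not_gt ((isDescent_iff_of_isSimplePair hu hs).1 hd)

/-- The betweenness condition characterising reflection orders: the time of the pair `p, r` lies
weakly between those of `p, q` and `q, r`. -/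
abbrev IsBetween (T : ℤ → ℤ → ℕ) (p q r : ℤ) : Prop :=
  min (T p q) (T q r) ≤ T p r ∧ T p r ≤ max (T p q) (T q r)

/-- `T p q`, for letters `p < q`, is a candidate for the time at which the pair `p, q` is inverted
along a path of `N` covering steps from `1` to `u` in the left weak order: the inverted pairs, up
to the symmetry `p, q ↦ -q, -p`, are numbered from `1` to `N`, and the pairs that are never
inverted carry `N + 1`. The time of the pair `p, 0` is that of `p, -p`. -/
structure IsPretiming (N : ℕ) (u : Equiv.Perm ℤ) (T : ℤ → ℤ → ℕ) : Prop where
  pos_iff : ∀ p q, 0 < T p q ↔ p < q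
  le_succ : ∀ p q, T p q ≤ N + 1
  neg_neg : ∀ p q, T (-q) (-p) = T p q
  zero_right : ∀ p, T p 0 = T p (-p)
  le_iff : ∀ p q, p ≠ 0 → q ≠ 0 → p < q → (T p q ≤ N ↔ u q < u p)
  eq_or_eq_neg : ∀ p q p' q', p ≠ 0 → q ≠ 0 → p' ≠ 0 → q' ≠ 0 → p < q → T p q ≤ N →
    T p' q' = T p q → (p' = p ∧ q' = q) ∨ (p' = -q ∧ q' = -p)
  exists_eq : ∀ k, 0 < k → k ≤ N → ∃ p q, p ≠ 0 ∧ q ≠ 0 ∧ T p q = k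

/-- The pretimings that do come from a path of covering steps; they encode the reflection orders
of the reduced words of `u`. -/
structure IsTiming (N : ℕ) (u : Equiv.Perm ℤ) (T : ℤ → ℤ → ℕ) : Prop
    extends IsPretiming N u T where
  btw : ∀ p q r, p < q → q < r → IsBetween T p q r

theorem IsPretiming.zero_left (hT : IsPretiming N u T) (q : ℤ) : T 0 q = T (-q) q := by
  rw [← hT.neg_neg 0 q, neg_zero, hT.zero_right, _root_.neg_neg]

theorem IsPretiming.le_iff_map_lt (hu : Function.Odd u) (hT : IsPretiming N u T) (hpq : p < q) :
    T p q ≤ N ↔ u q < u p := by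
  have h₀ := hu.map_zero
  rcases eq_or_ne p 0 with rfl | hp
  · have := hu q
    rw [hT.zero_left, hT.le_iff _ _ (by omega) (by omega) (by omega)]
    omega
  rcases eq_or_ne q 0 with rfl | hq
  · have := hu p
    rw [hT.zero_right, hT.le_iff _ _ (by omega) (by omega) (by omega)]
    omega
  exact hT.le_iff p q hp hq hpq

theorem isTiming_zero_iff (hu : Function.Odd u) :
    IsTiming 0 u T ↔ u = 1 ∧ T = fun p q => if p < q then 1 else 0 := by
  constructor
  · intro hT
    refine ⟨eq_one_of_strictMono_of_odd hu fun p q hpq => ?_, ?_⟩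
    · have := (hT.le_iff_map_lt hu hpq).not.1 (Nat.not_le.2 ((hT.pos_iff p q).2 hpq))
      exact (not_lt.1 this).lt_of_ne (u.injective.ne hpq.ne)
    · funext p q
      have := hT.pos_iff p q
      have := hT.le_succ p q
      split_ifs <;> omega
  · rintro ⟨rfl, rfl⟩
    refine ⟨⟨?_, ?_, ?_, ?_, ?_, ?_, by omega⟩, ?_⟩
    all_goals
      intros
      try simp only [IsBetween, Equiv.Perm.one_apply] at *
      split_ifs at * <;> omega

/-- Extends a timing of `sB a * u` to one of `u`, for a descent `a` of `u`: the pairs inverted by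
the last step already carry the value `N + 1`. -/
def extendTiming (N : ℕ) (u : Equiv.Perm ℤ) (T : ℤ → ℤ → ℕ) (p q : ℤ) : ℕ :=
  if p < q ∧ u p < u q then N + 2 else T p q

theorem IsTiming.map_lt_of_le (hu : Function.Odd u) (hd : IsDescent u a)
    (hT : IsTiming N (sB a * u) T) (hpq : p < q) (h : T p q ≤ N) : u q < u p := by
  have key {p q : ℤ} (hp : p ≠ 0) (hq : q ≠ 0) (hpq : p < q) (h : T p q ≤ N) : u q < u p :=
    hd.map_lt_of_sB_mul hu hp hq hpq ((hT.le_iff p q hp hq hpq).1 h)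
  have h₀ := hu.map_zero
  rcases eq_or_ne p 0 with rfl | hp
  · have := hu q
    have := key (by omega) (by omega) (by omega) (hT.zero_left q ▸ h)
    omega
  rcases eq_or_ne q 0 with rfl | hq
  · have := hu p
    have := key (by omega) (by omega) (by omega) (hT.zero_right p ▸ h)
    omega
  exact key hp hq hpq h

theorem IsTiming.isSimplePair_of_eq_succ (hu : Function.Odd u) (hT : IsTiming N (sB a * u) T)
    (hp : p ≠ 0) (hq : q ≠ 0) (hpq : p < q) (h : T p q = N + 1) (hlt : u q < u p) :
    IsSimplePair a (u q) (u p) := by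
  by_contra hns
  have := (hT.le_iff p q hp hq hpq).2 (sB_mul_lt_of_lt_of_not_isSimplePair hu hp hq hlt hns)
  omega

theorem IsTiming.eq_succ_of_isSimplePair (hT : IsTiming N (sB a * u) T) (hp : p ≠ 0) (hq : q ≠ 0)
    (hpq : p < q) (hs : IsSimplePair a (u q) (u p)) : T p q = N + 1 := by
  have := (hT.le_iff p q hp hq hpq).not.2 (not_sB_mul_lt_of_isSimplePair hs)
  have := hT.le_succ p q
  omega

theorem extendTiming_le_iff (hT : ∀ p q, T p q ≤ N + 1) (hpq : p < q) :
    extendTiming N u T p q ≤ N + 1 ↔ u q < u p := by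
  have := hT p q
  have : u p ≠ u q := u.injective.ne hpq.ne
  rw [extendTiming]
  split_ifs <;> omega

theorem extendTiming_eq_of_lt (h : u q < u p) : extendTiming N u T p q = T p q :=
  if_neg fun h' => h'.2.not_gt h

theorem IsTiming.lt_of_extendTiming_pos (hT : IsTiming N v T) (h : 0 < extendTiming N u T p q) :
    p < q := by
  by_contra hpq
  rw [extendTiming, if_neg fun h' => hpq h'.1, hT.pos_iff] at h
  exact hpq h

theorem IsTiming.extendTiming_eq_succ_of_isSimplePair (hT : IsTiming N (sB a * u) T) (hp : p ≠ 0)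
    (hq : q ≠ 0) (hpq : p < q) (hs : IsSimplePair a (u q) (u p)) :
    extendTiming N u T p q = N + 1 := by
  rw [extendTiming_eq_of_lt hs.lt, hT.eq_succ_of_isSimplePair hp hq hpq hs]

theorem IsDescent.exists_isSimplePair (hd : IsDescent u a) (hu : Function.Odd u) :
    ∃ p q, p ≠ 0 ∧ q ≠ 0 ∧ p < q ∧ IsSimplePair a (u q) (u p) := by
  have hlow := lowerPos_ne_zero a
  have hsymm := odd_symm hu
  exact ⟨u.symm (a + 1), u.symm (lowerPos a), (map_eq_zero_iff_of_odd hsymm).not.2 (by omega),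
    (map_eq_zero_iff_of_odd hsymm).not.2 hlow, hd,
    .inl ⟨u.apply_symm_apply _, u.apply_symm_apply _⟩⟩

theorem IsSimplePair.eq_or_eq_neg (hu : Function.Odd u) (h : IsSimplePair a (u q) (u p))
    (h' : IsSimplePair a (u y) (u x)) : (x = p ∧ y = q) ∨ (x = -q ∧ y = -p) := by
  rw [← u.injective.eq_iff, ← u.injective.eq_iff (a := y), ← u.injective.eq_iff (b := -q),
    ← u.injective.eq_iff (b := -p), hu, hu]
  unfold IsSimplePair at h h'
  omega

theorem IsTiming.eq_or_eq_neg_of_extendTiming_eq (hu : Function.Odd u)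
    (hT : IsTiming N (sB a * u) T) (hp : p ≠ 0) (hq : q ≠ 0) (hx : x ≠ 0) (hy : y ≠ 0)
    (hpq : p < q) (hle : extendTiming N u T p q ≤ N + 1)
    (heq : extendTiming N u T x y = extendTiming N u T p q) :
    (x = p ∧ y = q) ∨ (x = -q ∧ y = -p) := by
  have hlt := (extendTiming_le_iff hT.le_succ hpq).1 hle
  have hxy : x < y := by
    refine hT.lt_of_extendTiming_pos (N := N) (u := u) ?_
    rwa [heq, extendTiming_eq_of_lt hlt, hT.pos_iff]
  have hlt' := (extendTiming_le_iff hT.le_succ hxy).1 (heq.trans_le hle)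
  rw [extendTiming_eq_of_lt hlt] at hle heq
  rw [extendTiming_eq_of_lt hlt'] at heq
  rcases hle.lt_or_eq with hle | heq'
  · exact hT.eq_or_eq_neg p q x y hp hq hx hy hpq (Nat.lt_succ_iff.1 hle) heq
  · exact (hT.isSimplePair_of_eq_succ hu hp hq hpq heq' hlt).eq_or_eq_neg hu
      (hT.isSimplePair_of_eq_succ hu hx hy hxy (heq.trans heq') hlt')

theorem IsTiming.extend (hu : Function.Odd u) (hd : IsDescent u a)
    (hT : IsTiming N (sB a * u) T) : IsTiming (N + 1) u (extendTiming N u T) where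
  pos_iff p q := by
    have := hT.pos_iff p q
    rw [extendTiming]
    split_ifs <;> omega
  le_succ p q := by
    have := hT.le_succ p q
    rw [extendTiming]
    split_ifs <;> omega
  neg_neg p q := by
    simp only [extendTiming, hT.neg_neg, hu _, neg_lt_neg_iff]
  zero_right p := by
    simp only [extendTiming, hT.zero_right, hu _, hu.map_zero]
    split_ifs <;> first | rfl | omega
  le_iff p q _ _ hpq := extendTiming_le_iff hT.le_succ hpq
  eq_or_eq_neg p q p' q' hp hq hp' hq' hpq hle heq :=
    hT.eq_or_eq_neg_of_extendTiming_eq hu hp hq hp' hq' hpq hle heq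
  exists_eq k hk hkN := by
    rcases hkN.lt_or_eq with hkN | rfl
    · obtain ⟨p, q, hp, hq, rfl⟩ := hT.exists_eq k hk (Nat.lt_succ_iff.1 hkN)
      exact ⟨p, q, hp, hq, extendTiming_eq_of_lt
        (hT.map_lt_of_le hu hd ((hT.pos_iff p q).1 hk) (Nat.lt_succ_iff.1 hkN))⟩
    · obtain ⟨p, q, hp, hq, hpq, hs⟩ := hd.exists_isSimplePair hu
      exact ⟨p, q, hp, hq, hT.extendTiming_eq_succ_of_isSimplePair hp hq hpq hs⟩
  btw p q r hpq hqr := by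
    have hbtw := hT.btw p q r hpq hqr
    have hle {p q : ℤ} := hT.le_succ p q
    have hlt {p q : ℤ} (hpq : p < q) (h : T p q ≤ N) := hT.map_lt_of_le hu hd hpq h
    have := hlt hpq
    have := hlt hqr
    have := hlt (hpq.trans hqr)
    have := @hle p q
    have := @hle q r
    have := @hle p r
    simp only [IsBetween, extendTiming]
    split_ifs <;> omega

theorem IsPretiming.eq_zero_of_eq_left (hT : IsPretiming N u T) (hp : p ≠ 0) (hq : q ≠ 0)
    (hpq : p < q) (hle : T p q ≤ N) (hzq : z ≠ q) (h : T p z = T p q) : z = 0 ∧ p + q = 0 := by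
  rcases eq_or_ne z 0 with rfl | hz
  · rw [hT.zero_right] at h
    have := hT.eq_or_eq_neg p q p (-p) hp hq hp (neg_ne_zero.2 hp) hpq hle h
    omega
  · have := hT.eq_or_eq_neg p q p z hp hq hp hz hpq hle h
    omega

theorem IsPretiming.eq_zero_of_eq_right (hT : IsPretiming N u T) (hp : p ≠ 0) (hq : q ≠ 0)
    (hpq : p < q) (hle : T p q ≤ N) (hzp : z ≠ p) (h : T z q = T p q) : z = 0 ∧ p + q = 0 := by
  rw [← hT.neg_neg z, ← hT.neg_neg p] at h
  rw [← hT.neg_neg] at hle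
  have := hT.eq_zero_of_eq_left (neg_ne_zero.2 hq) (neg_ne_zero.2 hp) (neg_lt_neg hpq) hle
    (neg_injective.ne hzp) h
  omega

theorem IsTiming.eq_zero_of_between (hu : Function.Odd u) (hT : IsTiming N u T) (hp : p ≠ 0)
    (hq : q ≠ 0) (hpq : p < q) (h : T p q = N) (hqz : u q < u z) (hzp : u z < u p) :
    z = 0 ∧ p + q = 0 := by
  have hzp' : z ≠ p := fun h => hzp.ne (congrArg u h)
  have hzq' : z ≠ q := fun h => hqz.ne' (congrArg u h)
  have hle {x y : ℤ} (hxy : x < y) : T x y ≤ N ↔ u y < u x := hT.le_iff_map_lt hu hxy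
  suffices T p z = T p q ∨ T z q = T p q by
    rcases this with h' | h'
    · exact hT.eq_zero_of_eq_left hp hq hpq h.le hzq' h'
    · exact hT.eq_zero_of_eq_right hp hq hpq h.le hzp' h'
  rcases hzp'.lt_or_gt with hzp' | hzp'
  · have := hT.btw z p q hzp' hpq
    have := hle hzp'
    have := hle (hzp'.trans hpq)
    omega
  rcases hzq'.lt_or_gt with hzq' | hzq'
  · have := hT.btw p z q hzp' hzq'
    have := hle hzp'
    have := hle hzq'
    omega
  · have := hT.btw p q z hpq hzq'
    have := hle hzq'
    have := hle hzp'
    omega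

theorem exists_isSimplePair_of_not_between (hx : x ≠ 0) (hy : y ≠ 0) (hxy : x < y)
    (h : ∀ z, x < z → z < y → z = 0 ∧ x + y = 0) : ∃ a, IsSimplePair a x y := by
  have h₁ := h (x + 1)
  have h₂ := h 0
  refine ⟨if 0 < x then x.toNat else if y < 0 then (-y).toNat else 0, ?_⟩
  unfold IsSimplePair lowerPos
  split_ifs <;> omega

theorem IsTiming.eq_top_iff_isSimplePair (hu : Function.Odd u) (hT : IsTiming N u T) (hp : p ≠ 0)
    (hq : q ≠ 0) (hpq : p < q) (h : T p q = N) (hs : IsSimplePair a (u q) (u p)) (hx : x ≠ 0)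
    (hy : y ≠ 0) : T x y = N ↔ IsSimplePair a (u y) (u x) := by
  constructor
  · intro hxy
    rcases hT.eq_or_eq_neg p q x y hp hq hx hy hpq h.le (hxy.trans h.symm) with
      ⟨rfl, rfl⟩ | ⟨rfl, rfl⟩
    · exact hs
    · rwa [hu, hu, isSimplePair_neg_neg]
  · intro hxy
    rcases hs.eq_or_eq_neg hu hxy with ⟨rfl, rfl⟩ | ⟨rfl, rfl⟩
    · exact h
    · rw [hT.neg_neg, h]

theorem IsTiming.truncate (hu : Function.Odd u) (hT : IsTiming (N + 1) u T) (hd : IsDescent u a)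
    (htop : ∀ p q, p ≠ 0 → q ≠ 0 → (T p q = N + 1 ↔ IsSimplePair a (u q) (u p))) :
    IsTiming N (sB a * u) fun p q => min (T p q) (N + 1) where
  pos_iff p q := by
    rw [← hT.pos_iff]
    omega
  le_succ p q := min_le_right _ _
  neg_neg p q := by rw [hT.neg_neg]
  zero_right p := by rw [hT.zero_right]
  le_iff p q hp hq hpq := by
    have hle := hT.le_iff p q hp hq hpq
    constructor
    · intro h
      exact sB_mul_lt_of_lt_of_not_isSimplePair hu hp hq (hle.1 (by omega))
        ((htop p q hp hq).not.1 (by omega))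
    · intro h
      have := hle.2 (hd.map_lt_of_sB_mul hu hp hq hpq h)
      have := (htop p q hp hq).not.2 fun hs => not_sB_mul_lt_of_isSimplePair hs h
      omega
  eq_or_eq_neg p q p' q' hp hq hp' hq' hpq hle heq :=
    hT.eq_or_eq_neg p q p' q' hp hq hp' hq' hpq (by omega) (by omega)
  exists_eq k hk hkN := by
    obtain ⟨p, q, hp, hq, rfl⟩ := hT.exists_eq k hk (hkN.trans N.le_succ)
    exact ⟨p, q, hp, hq, min_eq_left (hkN.trans N.le_succ)⟩
  btw p q r hpq hqr := by
    have := hT.btw p q r hpq hqr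
    simp only [IsBetween]
    omega

theorem IsTiming.exists_isDescent (hu : Function.Odd u) (hT : IsTiming (N + 1) u T) :
    ∃ a, IsDescent u a ∧ IsTiming N (sB a * u) fun p q => min (T p q) (N + 1) := by
  obtain ⟨p, q, hp, hq, h⟩ := hT.exists_eq (N + 1) N.succ_pos le_rfl
  have hpq : p < q := by
    rw [← hT.pos_iff, h]
    exact N.succ_pos
  obtain ⟨a, hs⟩ := exists_isSimplePair_of_not_between
    ((map_eq_zero_iff_of_odd hu).not.2 hq) ((map_eq_zero_iff_of_odd hu).not.2 hp)
    ((hT.le_iff p q hp hq hpq).1 h.le) fun z hqz hzp => by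
      rw [← u.apply_symm_apply z] at hqz hzp ⊢
      have := hT.eq_zero_of_between hu hp hq hpq h hqz hzp
      rw [map_eq_zero_iff_of_odd hu, show q = -p by omega, hu]
      omega
  have hd : IsDescent u a := (isDescent_iff_of_isSimplePair hu hs).2 hpq
  exact ⟨a, hd, hT.truncate hu hd fun x y hx hy =>
    hT.eq_top_iff_isSimplePair hu hp hq hpq h hs hx hy⟩

theorem IsTiming.extendTiming_min (hu : Function.Odd u) (hT : IsTiming (N + 1) u T) :
    extendTiming N u (fun p q => min (T p q) (N + 1)) = T := by
  funext p q
  have := hT.le_succ p q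
  have := hT.pos_iff p q
  have hlt : p < q → (T p q ≤ N + 1 ↔ u q < u p) := hT.le_iff_map_lt hu
  have : p < q → u p ≠ u q := fun hpq => u.injective.ne hpq.ne
  rw [extendTiming]
  split_ifs <;> omega

theorem IsTiming.min_extendTiming (hu : Function.Odd u) (hd : IsDescent u a)
    (hT : IsTiming N (sB a * u) T) : (fun p q => min (extendTiming N u T p q) (N + 1)) = T := by
  funext p q
  have := hT.le_succ p q
  have hle : p < q → T p q ≤ N → u q < u p := hT.map_lt_of_le hu hd
  rw [extendTiming]
  split_ifs <;> omega

theorem IsTiming.descent_unique (hu : Function.Odd u) {T' : ℤ → ℤ → ℕ} {b : ℕ} (ha : IsDescent u a)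
    (hT : IsTiming N (sB a * u) T) (hT' : IsTiming N (sB b * u) T')
    (h : extendTiming N u T = extendTiming N u T') : a = b := by
  obtain ⟨p, q, hp, hq, hpq, hs⟩ := ha.exists_isSimplePair hu
  have hTp := hT.extendTiming_eq_succ_of_isSimplePair hp hq hpq hs
  rw [h, extendTiming_eq_of_lt hs.lt] at hTp
  have hs' := hT'.isSimplePair_of_eq_succ hu hp hq hpq hTp hs.lt
  have := lowerPos_cases a
  have := lowerPos_cases b
  unfold IsSimplePair at hs hs'
  omega

theorem encard_isTiming (hu : IsSignedPerm n u) (N : ℕ) :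
    {T | IsTiming N u T}.encard = numReducedWords N u := by
  classical
  induction N generalizing u with
  | zero =>
    simp only [isTiming_zero_iff hu.odd, numReducedWords]
    split_ifs with h
    · simp only [h, true_and, Set.ofPred_eq_eq_singleton, Set.encard_singleton, Nat.cast_one]
    · simp only [h, false_and, Set.ofPred_false, Set.encard_empty, Nat.cast_zero]
  | succ N ih =>
    rw [numReducedWords_succ hu, ← Finset.sum_filter, Nat.cast_sum,
      encard_eq_sum_of_unique_image (f := fun _ => extendTiming N u)
        (t := fun a => {T | IsTiming N (sB a * u) T})
        ((Finset.range n).filter (IsDescent u ·))]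
    · refine Finset.sum_congr rfl fun a ha => ih ?_
      exact (isSignedPerm_sB (Finset.mem_range.1 (Finset.mem_filter.1 ha).1)).mul hu
    · intro T
      constructor
      · intro hT
        obtain ⟨a, ha, hT'⟩ := IsTiming.exists_isDescent hu.odd hT
        exact ⟨a, Finset.mem_filter.2 ⟨Finset.mem_range.2 (hu.lt_of_isDescent ha), ha⟩, _, hT',
          IsTiming.extendTiming_min hu.odd hT⟩
      · rintro ⟨a, ha, T, hT, rfl⟩
        exact IsTiming.extend hu.odd (Finset.mem_filter.1 ha).2 hT
    · intro a ha T hT T' hT' h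
      have hd := (Finset.mem_filter.1 ha).2
      rw [← IsTiming.min_extendTiming hu.odd hd hT, h, IsTiming.min_extendTiming hu.odd hd hT']
    · intro a ha b _ T hT T' hT' h
      exact IsTiming.descent_unique hu.odd (Finset.mem_filter.1 ha).2 hT hT' h

end Timings

section SYT

variable {d n : ℕ} {lam : ℕ → ℕ} {u : Equiv.Perm ℤ} {B : ℤ × ℤ → ℕ} {i k a : ℕ}

/-- A strict partition with at most `d` parts: unlike in `IsStrictPartition`, trailing parts may
vanish, so that the class is stable under removal of boxes. -/
def IsWeakStrict (d : ℕ) (lam : ℕ → ℕ) : Prop :=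
  ∀ i k, 1 ≤ i → i < k → k ≤ d → 0 < lam k → lam k < lam i

/-- The last box of row `i` can be removed from the diagram of `lam`. -/
structure IsCorner (d : ℕ) (lam : ℕ → ℕ) (i : ℕ) : Prop where
  one_le : 1 ≤ i
  le : i ≤ d
  pos : 0 < lam i
  add_one_lt : ∀ k, i < k → k ≤ d → 0 < lam k → lam k + 1 < lam i

/-- The shape obtained by removing the last box of row `i`. -/
def removeBox (lam : ℕ → ℕ) (i : ℕ) : ℕ → ℕ := Function.update lam i (lam i - 1)

/-- The last box of row `i`. -/
def lastBox (d : ℕ) (lam : ℕ → ℕ) (i : ℕ) : ℤ × ℤ := (i, lam i + i - d - 1)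

theorem mem_diagram_iff {r : ℕ} {c : ℤ} : ((r : ℤ), c) ∈ Diagram d lam ↔
    1 ≤ r ∧ r ≤ d ∧ (r : ℤ) - d ≤ c ∧ c + d + 1 ≤ lam r + r := by
  simp only [Diagram, Set.mem_ofPred_eq, Int.toNat_natCast]
  omega

theorem exists_row_of_mem_diagram {p : ℤ × ℤ} (hp : p ∈ Diagram d lam) : ∃ r : ℕ, p.1 = r :=
  ⟨p.1.toNat, by have := hp.1; omega⟩

theorem IsWeakStrict.add_sub_le (h : IsWeakStrict d lam) (hi : 1 ≤ i) (hik : i ≤ k) (hk : k ≤ d)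
    (h0 : 0 < lam k) : lam k + (k - i) ≤ lam i := by
  induction k, hik using Nat.le_induction with
  | base => omega
  | succ k hik ih =>
    have hlt := h k (k + 1) (by omega) (by omega) hk h0
    have := ih (by omega) (by omega)
    omega

theorem IsWeakStrict.eq_of_eq (h : IsWeakStrict d lam) (hi : 1 ≤ i) (hi' : i ≤ d) (hk : 1 ≤ k)
    (hk' : k ≤ d) (h0 : 0 < lam i) (heq : lam i = lam k) : i = k := by
  rcases lt_trichotomy i k with hik | hik | hik
  · have := h i k hi hik hk' (by omega)
    omega
  · exact hik
  · have := h k i hk hik hi' h0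
    omega

theorem IsWeakStrict.removeBox (h : IsWeakStrict d lam) (hc : IsCorner d lam i) :
    IsWeakStrict d (removeBox lam i) := by
  intro j k hj hjk hk h0
  have hlt := h j k hj hjk hk
  have hpos := hc.pos
  simp only [BST.removeBox, Function.update_apply] at h0 ⊢
  split_ifs at h0 ⊢ with hki hji hji
  · omega
  · subst hki
    have := hlt hpos
    omega
  · subst hji
    have := hc.add_one_lt k hjk hk h0
    omega
  · exact hlt h0

theorem sizeP_eq_removeBox_add_one (hc : IsCorner d lam i) :
    sizeP d lam = sizeP d (removeBox lam i) + 1 := by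
  have hi := Finset.mem_Icc.2 ⟨hc.one_le, hc.le⟩
  have := hc.pos
  rw [sizeP, sizeP, removeBox, Finset.sum_update_of_mem hi,
    Finset.sum_eq_add_sum_sdiff_singleton_of_mem hi]
  omega

theorem diagram_eq_insert_lastBox (hc : IsCorner d lam i) :
    Diagram d lam = insert (lastBox d lam i) (Diagram d (removeBox lam i)) := by
  obtain ⟨hi, hid, hpos, -⟩ := hc
  ext p
  simp only [Diagram, removeBox, lastBox, Set.mem_insert_iff, Set.mem_ofPred_eq, Prod.ext_iff,
    Function.update_apply]
  split_ifs with hp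
  · rw [hp]
    omega
  · omega

theorem lastBox_notMem_diagram_removeBox (hpos : 0 < lam i) :
    lastBox d lam i ∉ Diagram d (removeBox lam i) := by
  rw [lastBox, mem_diagram_iff, removeBox, Function.update_self]
  omega

theorem lastBox_maximal (h : IsWeakStrict d lam) (hc : IsCorner d lam i) {p : ℤ × ℤ}
    (hp : p ∈ Diagram d lam) : ¬ ((lastBox d lam i).1 = p.1 ∧ (lastBox d lam i).2 < p.2) ∧
      ¬ ((lastBox d lam i).2 = p.2 ∧ (lastBox d lam i).1 < p.1) := by
  obtain ⟨r, hr⟩ := exists_row_of_mem_diagram hp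
  obtain ⟨x, c⟩ := p
  obtain rfl : x = r := hr
  rw [mem_diagram_iff] at hp
  simp only [lastBox, Nat.cast_inj, Nat.cast_lt]
  refine ⟨?_, ?_⟩
  · rintro ⟨rfl, hlt⟩
    omega
  · rintro ⟨hcol, hlt⟩
    have hgap := h.add_sub_le (i := i + 1) (by omega) hlt hp.2.1 (by omega)
    have := hc.add_one_lt (i + 1) (by omega) (by omega) (by omega)
    omega

theorem isFilling_iff_update_lastBox (hc : IsCorner d lam i)
    (hB : B (lastBox d lam i) = sizeP d lam) :
    IsFilling d lam B ↔
      IsFilling d (removeBox lam i) (Function.update B (lastBox d lam i) 0) := by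
  set b := lastBox d lam i
  have hb : b ∉ Diagram d (removeBox lam i) := lastBox_notMem_diagram_removeBox hc.pos
  have hvalues :
      Set.Icc 1 (sizeP d lam) = insert (B b) (Set.Icc 1 (sizeP d (removeBox lam i))) := by
    rw [hB, sizeP_eq_removeBox_add_one hc]
    ext
    simp only [Set.mem_Icc, Set.mem_insert_iff]
    omega
  have heqOn : Set.EqOn (Function.update B b 0) B (Diagram d (removeBox lam i)) := fun p hp =>
    Function.update_of_ne (by rintro rfl; exact hb hp) _ _
  rw [IsFilling, IsFilling, diagram_eq_insert_lastBox hc, hvalues, heqOn.bijOn_iff,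
    Set.BijOn.insert_iff hb (by rw [hB, sizeP_eq_removeBox_add_one hc, Set.mem_Icc]; omega)]
  refine and_congr_right fun _ => forall_congr' fun p => ?_
  rcases eq_or_ne p b with rfl | hp
  · simp [b]
  · rw [Function.update_of_ne hp, Set.mem_insert_iff, or_iff_right hp]

theorem isSYT_iff_update_lastBox (h : IsWeakStrict d lam) (hc : IsCorner d lam i)
    (hB : B (lastBox d lam i) = sizeP d lam) :
    IsSYT d lam B ↔ IsSYT d (removeBox lam i) (Function.update B (lastBox d lam i) 0) := by
  have hfill := isFilling_iff_update_lastBox hc hB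
  set b := lastBox d lam i
  have hb : b ∉ Diagram d (removeBox lam i) := lastBox_notMem_diagram_removeBox hc.pos
  have hupdate : ∀ p ∈ Diagram d (removeBox lam i), Function.update B b 0 p = B p := fun p hp =>
    Function.update_of_ne (by rintro rfl; exact hb hp) _ _
  have hmax : ∀ p ∈ insert b (Diagram d (removeBox lam i)), _ := fun p hp =>
    lastBox_maximal h hc (diagram_eq_insert_lastBox hc ▸ hp)
  rw [IsSYT, IsSYT, hfill]
  refine and_congr_right fun hB' => ?_
  have hlt : ∀ p ∈ Diagram d (removeBox lam i), B p < B b := fun p hp => by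
    have := (hB'.1.mapsTo hp).2
    rw [hupdate p hp] at this
    rw [hB, sizeP_eq_removeBox_add_one hc]
    omega
  rw [diagram_eq_insert_lastBox hc]
  constructor
  · intro hinc p hp q hq
    rw [hupdate p hp, hupdate q hq]
    exact hinc p (Or.inr hp) q (Or.inr hq)
  · rintro hinc p hp q (rfl | hq)
    · rcases hp with rfl | hp
      · exact ⟨fun h => absurd h.2 (lt_irrefl _), fun h => absurd h.2 (lt_irrefl _)⟩
      · exact ⟨fun _ => hlt p hp, fun _ => hlt p hp⟩
    · rcases hp with rfl | hp
      · have := hmax q (Or.inr hq)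
        exact ⟨fun h => absurd h this.1, fun h => absurd h this.2⟩
      · rw [← hupdate p hp, ← hupdate q hq]
        exact hinc p hp q hq

theorem IsSYT.exists_isCorner (h : IsWeakStrict d lam) (h0 : 0 < sizeP d lam)
    (hB : IsSYT d lam B) : ∃ i, IsCorner d lam i ∧ B (lastBox d lam i) = sizeP d lam := by
  obtain ⟨hfill, hinc⟩ := hB
  obtain ⟨⟨x, c⟩, hp, hmax⟩ := hfill.1.surjOn (Set.mem_Icc.2 ⟨h0, le_rfl⟩)
  have hle : ∀ q ∈ Diagram d lam, ¬ B (x, c) < B q := fun q hq => by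
    rw [hmax, not_lt]
    exact (hfill.1.mapsTo hq).2
  obtain ⟨i, rfl⟩ : ∃ i : ℕ, x = i := exists_row_of_mem_diagram hp
  have hp' := mem_diagram_iff.1 hp
  have hlast : c + d + 1 = lam i + i := by
    by_contra hne
    have hright : ((i : ℤ), c + 1) ∈ Diagram d lam := by
      rw [mem_diagram_iff]
      omega
    exact hle _ hright ((hinc _ hp _ hright).1 ⟨rfl, by simp⟩)
  refine ⟨i, ⟨by omega, by omega, by omega, fun k hik hkd hk => ?_⟩, ?_⟩
  · by_contra hcon
    have hgap := h.add_sub_le (by omega) hik.le hkd hk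
    obtain rfl : k = i + 1 := by omega
    have hbelow : (((i + 1 : ℕ) : ℤ), c) ∈ Diagram d lam := by
      rw [mem_diagram_iff]
      omega
    exact hle _ hbelow ((hinc _ hp _ hbelow).2 ⟨rfl, by simp⟩)
  · rw [← hmax, lastBox]
    congr 2
    omega

theorem IsSYT.lastBox_eq_zero (hpos : 0 < lam i) (hB : IsSYT d (removeBox lam i) B) :
    B (lastBox d lam i) = 0 :=
  hB.1.2 _ (lastBox_notMem_diagram_removeBox hpos)

theorem IsSYT.update_lastBox (h : IsWeakStrict d lam) (hc : IsCorner d lam i)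
    (hB : IsSYT d (removeBox lam i) B) :
    IsSYT d lam (Function.update B (lastBox d lam i) (sizeP d lam)) := by
  rw [isSYT_iff_update_lastBox h hc (Function.update_self ..), Function.update_idem,
    ← hB.lastBox_eq_zero hc.pos, Function.update_eq_self]
  exact hB

theorem encard_isSYT_eq_sum (h : IsWeakStrict d lam) (h0 : 0 < sizeP d lam)
    [DecidablePred (IsCorner d lam)] :
    {B | IsSYT d lam B}.encard =
      ∑ i ∈ (Finset.Icc 1 d).filter (IsCorner d lam), {B | IsSYT d (removeBox lam i) B}.encard := by
  have hcorner {i} (hi : i ∈ (Finset.Icc 1 d).filter (IsCorner d lam)) : IsCorner d lam i :=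
    (Finset.mem_filter.1 hi).2
  refine encard_eq_sum_of_unique_image _ (t := fun i => {B | IsSYT d (removeBox lam i) B})
    (f := fun i B => Function.update B (lastBox d lam i) (sizeP d lam)) ?_ ?_ ?_
  · intro B
    constructor
    · intro hB
      obtain ⟨i, hi, hBi⟩ := IsSYT.exists_isCorner h h0 hB
      refine ⟨i, Finset.mem_filter.2 ⟨Finset.mem_Icc.2 ⟨hi.one_le, hi.le⟩, hi⟩, _,
        (isSYT_iff_update_lastBox h hi hBi).1 hB, ?_⟩
      rw [Function.update_idem, ← hBi, Function.update_eq_self]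
    · rintro ⟨i, hi, B, hB, rfl⟩
      exact IsSYT.update_lastBox h (hcorner hi) hB
  · intro i hi B hB B' hB' heq
    have hpos := (hcorner hi).pos
    have := congrArg (fun C => Function.update C (lastBox d lam i) 0) heq
    simp only [Function.update_idem] at this
    rwa [← IsSYT.lastBox_eq_zero hpos hB, Function.update_eq_self,
      IsSYT.lastBox_eq_zero hpos hB, ← IsSYT.lastBox_eq_zero hpos hB',
      Function.update_eq_self] at this
  · intro i hi j hj B _ B' hB' heq
    have hSYT := IsSYT.update_lastBox h (hcorner hj) hB'
    have hbox {k} (hk : IsCorner d lam k) : lastBox d lam k ∈ Diagram d lam :=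
      diagram_eq_insert_lastBox hk ▸ Set.mem_insert _ _
    have := hSYT.1.1.injOn (hbox (hcorner hi)) (hbox (hcorner hj))
      ((congrFun heq _).symm.trans (by simp only [Function.update_self]))
    exact Nat.cast_injective (congrArg Prod.fst this)

/-- The permutation attached to `lam`: the letter at a position `c > 0` is negative exactly when
`c` is a part of `lam`, and the positive letters occur in increasing order. -/
structure IsShapePerm (d : ℕ) (lam : ℕ → ℕ) (u : Equiv.Perm ℤ) : Prop where
  map_lt : ∀ p q, 0 < p → p < q → u p < u q
  symm_neg_iff : ∀ c : ℕ, 1 ≤ c → (u.symm c < 0 ↔ ∃ i, 1 ≤ i ∧ i ≤ d ∧ lam i = c)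

theorem IsShapePerm.symm_neg_pos (hu : Function.Odd u) (hs : IsShapePerm d lam u)
    (hd : IsDescent u a) : u.symm (a + 1) < 0 ∧ 0 < u.symm (lowerPos a) := by
  have hsymm := odd_symm hu
  have hlow : u.symm (lowerPos a) ≠ 0 := (map_eq_zero_iff_of_odd hsymm).not.2 (lowerPos_ne_zero a)
  have hhigh : u.symm (a + 1) ≠ 0 := (map_eq_zero_iff_of_odd hsymm).not.2 (by omega)
  have hd' : u.symm (a + 1) < u.symm (lowerPos a) := hd
  constructor
  · by_contra hcon
    have := hs.map_lt _ _ (by omega) hd'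
    simp only [Equiv.apply_symm_apply] at this
    have := lowerPos_cases a
    omega
  · by_contra hcon
    have := hs.map_lt _ _ (by omega) (neg_lt_neg hd')
    simp only [hu (u.symm _), Equiv.apply_symm_apply] at this
    rcases lowerPos_cases a with ⟨rfl, hlow⟩ | ⟨-, hlow⟩
    · rw [hlow, hsymm] at hcon
      simp only [hlow, Nat.cast_zero, zero_add] at hd'
      omega
    · omega

theorem IsShapePerm.isDescent_iff (hu : Function.Odd u) (h : IsWeakStrict d lam)
    (hs : IsShapePerm d lam u) : IsDescent u a ↔ ∃ i, IsCorner d lam i ∧ lam i = a + 1 := by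
  have hsucc := hs.symm_neg_iff (a + 1) (by omega)
  push_cast at hsucc
  constructor
  · intro hd
    obtain ⟨hneg, hpos⟩ := hs.symm_neg_pos hu hd
    obtain ⟨i, hi, hid, hia⟩ := hsucc.1 hneg
    refine ⟨i, ⟨hi, hid, by omega, fun k hik hk h0 => ?_⟩, hia⟩
    have hki := h i k hi hik hk h0
    by_contra hcon
    obtain rfl : lam k = a := by omega
    have := (hs.symm_neg_iff (lam k) h0).2 ⟨k, by omega, hk, rfl⟩
    rw [lowerPos, if_neg (by omega)] at hpos
    omega
  · rintro ⟨i, hc, hia⟩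
    have hneg := hsucc.2 ⟨i, hc.one_le, hc.le, hia⟩
    rcases lowerPos_cases a with ⟨rfl, hlow⟩ | ⟨ha, hlow⟩
    · rw [IsDescent, hlow, odd_symm hu]
      simp only [Nat.cast_zero, zero_add] at hneg ⊢
      omega
    · have hnonneg : ¬ u.symm a < 0 := by
        rw [hs.symm_neg_iff a (by omega)]
        rintro ⟨k, hk, hkd, hka⟩
        have hki : ¬ k < i := fun hki => by
          have := h k i hk hki hc.le hc.pos
          omega
        have hik : ¬ i < k := fun hik => by
          have := hc.add_one_lt k hik hkd (by omega)
          omega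
        obtain rfl : i = k := by omega
        omega
      rw [IsDescent, hlow]
      omega

theorem exists_removeBox_eq_iff (h : IsWeakStrict d lam) (hc : IsCorner d lam i) (c : ℕ) :
    (∃ k, 1 ≤ k ∧ k ≤ d ∧ removeBox lam i k = c) ↔
      c = lam i - 1 ∨ c ≠ lam i ∧ ∃ k, 1 ≤ k ∧ k ≤ d ∧ lam k = c := by
  constructor
  · rintro ⟨k, hk, hkd, rfl⟩
    rcases eq_or_ne k i with rfl | hki
    · exact Or.inl (Function.update_self ..)
    · rw [removeBox, Function.update_of_ne hki]
      exact Or.inr ⟨fun heq => hki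
        (h.eq_of_eq hc.one_le hc.le hk hkd hc.pos heq.symm).symm, k, hk, hkd, rfl⟩
  · rintro (rfl | ⟨hne, k, hk, hkd, rfl⟩)
    · exact ⟨i, hc.one_le, hc.le, Function.update_self ..⟩
    · exact ⟨k, hk, hkd, Function.update_of_ne (by rintro rfl; exact hne rfl) _ _⟩

theorem IsShapePerm.removeBox (hu : Function.Odd u) (h : IsWeakStrict d lam)
    (hs : IsShapePerm d lam u) (hc : IsCorner d lam i) (hia : lam i = a + 1) :
    IsShapePerm d (removeBox lam i) (sB a * u) := by
  have hd : IsDescent u a := (hs.isDescent_iff hu h).2 ⟨i, hc, hia⟩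
  refine ⟨fun p q hp hpq => ?_, fun c hc₁ => ?_⟩
  · refine sB_mul_lt_of_lt_of_not_isSimplePair hu (by omega) (by omega) (hs.map_lt p q hp hpq)
      fun hsimple => ?_
    exact absurd ((isDescent_iff_of_isSimplePair hu hsimple).1 hd) (by omega)
  · rw [exists_removeBox_eq_iff h hc, ← hs.symm_neg_iff c hc₁, sB_mul_symm_apply, sB_apply]
    have := hs.symm_neg_pos hu hd
    rcases lowerPos_cases a with ⟨rfl, hlow⟩ | ⟨-, hlow⟩ <;> rw [hlow] at this ⊢ <;>
      split_ifs <;> grind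

theorem encard_isSYT_of_sizeP_eq_zero (h0 : sizeP d lam = 0) : {B | IsSYT d lam B}.encard = 1 := by
  have hparts : ∀ i, 1 ≤ i → i ≤ d → lam i = 0 := fun i h1 h2 =>
    Finset.sum_eq_zero_iff.1 h0 i (Finset.mem_Icc.2 ⟨h1, h2⟩)
  have hempty : Diagram d lam = ∅ := by
    refine Set.eq_empty_of_forall_notMem fun p hp => ?_
    have := hparts p.1.toNat (by have := hp.1; omega) (by have := hp.2.1; omega)
    have := hp.2.2
    omega
  refine Set.encard_eq_one.2 ⟨fun _ => 0, Set.ext fun B => ?_⟩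
  simp [IsSYT, IsFilling, hempty, h0, funext_iff]

theorem IsShapePerm.eq_one (hu : Function.Odd u) (hs : IsShapePerm d lam u) (h0 : sizeP d lam = 0) :
    u = 1 := by
  have hsymm (c : ℤ) (hc : 0 < c) : 0 < u.symm c := by
    have hne := (map_eq_zero_iff_of_odd (odd_symm hu)).not.2 hc.ne'
    by_contra hcon
    lift c to ℕ using hc.le
    obtain ⟨i, h1, h2, h3⟩ := (hs.symm_neg_iff c (by omega)).1 (by omega)
    have := Finset.sum_eq_zero_iff.1 h0 i (Finset.mem_Icc.2 ⟨h1, h2⟩)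
    omega
  have hpos (q : ℤ) (hq : 0 < q) : 0 < u q := by
    have hne := (map_eq_zero_iff_of_odd hu).not.2 hq.ne'
    by_contra hcon
    have := hsymm (-u q) (by omega)
    rw [← hu, Equiv.symm_apply_apply] at this
    omega
  refine eq_one_of_strictMono_of_odd hu (strictMono_of_odd_strictMonoOn_nonneg hu ?_)
  intro p hp q _ hpq
  rcases (Set.mem_Ici.1 hp).eq_or_lt with rfl | hp
  · rw [hu.map_zero]
    exact hpos q hpq
  · exact hs.map_lt p q hp hpq

theorem encard_isSYT (hu : IsSignedPerm n u) (h : IsWeakStrict d lam) (hs : IsShapePerm d lam u) :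
    {B | IsSYT d lam B}.encard = numReducedWords (sizeP d lam) u := by
  classical
  induction hN : sizeP d lam generalizing lam u with
  | zero => simp [encard_isSYT_of_sizeP_eq_zero hN, hs.eq_one hu.odd hN, numReducedWords]
  | succ N ih =>
    rw [encard_isSYT_eq_sum h (by omega), numReducedWords_succ hu, ← Finset.sum_filter,
      Nat.cast_sum]
    have hcorner {i} (hi : i ∈ (Finset.Icc 1 d).filter (IsCorner d lam)) : IsCorner d lam i :=
      (Finset.mem_filter.1 hi).2
    have hpart {i} (hi : i ∈ (Finset.Icc 1 d).filter (IsCorner d lam)) :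
        lam i = lam i - 1 + 1 := (Nat.sub_add_cancel (hcorner hi).pos).symm
    have hdesc {i} (hi : i ∈ (Finset.Icc 1 d).filter (IsCorner d lam)) :
        IsDescent u (lam i - 1) := (hs.isDescent_iff hu.odd h).2 ⟨i, hcorner hi, hpart hi⟩
    refine Finset.sum_bij (fun i _ => lam i - 1) (fun i hi => ?_) (fun i hi k hk heq => ?_)
      (fun a ha => ?_) (fun i hi => ?_)
    · exact Finset.mem_filter.2
        ⟨Finset.mem_range.2 (hu.lt_of_isDescent (hdesc hi)), hdesc hi⟩
    · have := hpart hi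
      have := hpart hk
      exact h.eq_of_eq (hcorner hi).one_le (hcorner hi).le (hcorner hk).one_le (hcorner hk).le
        (hcorner hi).pos (by omega)
    · obtain ⟨i, hi, hia⟩ := (hs.isDescent_iff hu.odd h).1 (Finset.mem_filter.1 ha).2
      exact ⟨i, Finset.mem_filter.2 ⟨Finset.mem_Icc.2 ⟨hi.one_le, hi.le⟩, hi⟩, by omega⟩
    · have hsize := sizeP_eq_removeBox_add_one (hcorner hi)
      exact ih ((isSignedPerm_sB (hu.lt_of_isDescent (hdesc hi))).mul hu)
        (h.removeBox (hcorner hi)) (hs.removeBox hu.odd h (hcorner hi) (hpart hi)) (by omega)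

end SYT

section TransitionState

variable {d : ℕ} {e : ℤ → ℕ} {u : Equiv.Perm ℤ} {k q r x y z : ℤ}

/-- The number of letters smaller than `k` standing at negative positions to the right of `k`;
one entry of the code of `u`. -/
noncomputable def negCode (u : Equiv.Perm ℤ) (k : ℤ) : ℕ :=
  ((Finset.Ioo (u k) 0).filter fun c => u.symm c < k).card

/-- An intermediate signed permutation in the reduction of the one attached to the balanced
tableaux to the one attached to the standard tableaux. The letters above `r` are already sorted,
those up to `r` still avoid the pattern forbidden by `lt_of_map_lt`, and the code on the letters
`1, …, d` is a rearrangement of `e 1, …, e d`. -/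
structure IsTransitionState (d : ℕ) (e : ℤ → ℕ) (r : ℤ) (u : Equiv.Perm ℤ) : Prop where
  exists_isSignedPerm : ∃ n, IsSignedPerm n u
  neg : ∀ k : ℤ, 1 ≤ k → k ≤ d → u k < 0
  pos : ∀ k, (d : ℤ) < k → 0 < u k
  map_lt : ∀ x y, r < x → x < y → u x < u y
  lt_of_map_lt : ∀ k, 1 ≤ k → k ≤ r → ∀ z z', z < k → z' < k → u z' < u z → u z < u k → z' < z
  exists_perm : ∃ σ : Equiv.Perm (Fin d), ∀ i : Fin d, negCode u (i + 1) = e (σ i + 1)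

/-- The configuration to which the transition formula is applied: `q` is the last letter standing
to the left of `r < q`, and `z` is the largest letter below `r` standing to the left of `q`. -/
structure IsPivot (d : ℕ) (u : Equiv.Perm ℤ) (z r q : ℤ) : Prop where
  one_le : 1 ≤ r
  lt : r < q
  le : q ≤ d
  map_lt : u q < u r
  map_lt_of_lt : ∀ x, q < x → u r < u x
  left_lt : z < r
  map_left_lt : u z < u q
  le_left : ∀ x, x < r → u x < u q → x ≤ z

theorem IsTransitionState.odd (h : IsTransitionState d e r u) : Function.Odd u :=
  h.exists_isSignedPerm.elim fun _ hn => hn.odd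

theorem IsTransitionState.exists_isPivot (h : IsTransitionState d e r u) (hr : 1 ≤ r)
    (hrq : r < q) (hqd : q ≤ d) (hq : u q < u r) (hright : ∀ x, q < x → u r < u x) :
    ∃ z, IsPivot d u z r q := by
  obtain ⟨n, hn⟩ := h.exists_isSignedPerm
  obtain ⟨z, ⟨hzr, hzq⟩, hz⟩ : ∃ z, (z < r ∧ u z < u q) ∧ ∀ x, x < r ∧ u x < u q → x ≤ z := by
    refine Int.exists_greatest_of_bdd ⟨r, fun x hx => hx.1.le⟩
      ⟨-(n + 1 + |u q|), by have := abs_nonneg (u q); omega, ?_⟩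
    have h₀ := abs_nonneg (u q)
    have h₁ := neg_abs_le (u q)
    rw [hn.2 _ (by rw [abs_neg, abs_of_pos] <;> omega)]
    omega
  exact ⟨z, hr, hrq, hqd, hq, hright, hzr, hzq, fun x h₁ h₂ => hz x ⟨h₁, h₂⟩⟩

theorem IsPivot.right_neg (hz : IsPivot d u z r q) (h : IsTransitionState d e r u) : u r < 0 :=
  h.neg r hz.one_le (hz.lt.le.trans hz.le)

theorem IsPivot.lt_neg_or_one_le (hz : IsPivot d u z r q) (h : IsTransitionState d e r u) :
    z < -d ∨ 1 ≤ z := by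
  have := hz.right_neg h
  have := hz.map_left_lt
  have := hz.map_lt
  rcases eq_or_ne z 0 with rfl | h₀
  · rw [h.odd.map_zero] at *
    omega
  · by_contra! hcon
    have hneg := h.neg (-z) (by omega) (by omega)
    rw [h.odd] at hneg
    omega

theorem IsPivot.map_lt_map_left (hz : IsPivot d u z r q) (h : IsTransitionState d e r u)
    (hx : x < r) (hxq : u x < u q) (hne : x ≠ z) : u x < u z := by
  by_contra hcon
  have hne' : u x ≠ u z := u.injective.ne hne
  have := h.lt_of_map_lt r hz.one_le le_rfl x z hx hz.left_lt (by omega) (hxq.trans hz.map_lt)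
  have := hz.le_left x hx hxq
  omega

theorem mul_signedSwap_cases (hu : Function.Odd u) (hr : r ≠ 0) (hq : q ≠ 0) (x : ℤ) :
    (x = r ∧ (u * signedSwap r q) x = u q) ∨ (x = q ∧ (u * signedSwap r q) x = u r) ∨
      (x = -r ∧ (u * signedSwap r q) x = -u q) ∨ (x = -q ∧ (u * signedSwap r q) x = -u r) ∨
      (x ≠ r ∧ x ≠ q ∧ x ≠ -r ∧ x ≠ -q ∧ (u * signedSwap r q) x = u x) := by
  rw [Equiv.Perm.mul_apply, signedSwap_apply hr hq]
  split_ifs <;> simp_all [hu _]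

theorem IsPivot.isCover_right (hz : IsPivot d u z r q) (h : IsTransitionState d e r u) :
    IsCover r q (u * signedSwap r q) ∧ ∀ x, IsCover r x (u * signedSwap r q) → x = q := by
  have := hz.one_le
  have hrq := hz.lt
  have hmap := hz.map_lt
  have hval := mul_signedSwap_cases h.odd (r := r) (q := q) (by omega) (by omega)
  have hvr := hval r
  have hvq := hval q
  refine ⟨⟨by omega, by omega, hrq, by omega, fun x hrx hxq h₁ h₂ => ?_⟩, fun x hx => ?_⟩
  · have := h.map_lt x q hrx hxq
    have := hval x
    omega
  · have hrx := hx.lt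
    have hmap' := hx.map_lt
    have hvx := hval x
    by_contra hne
    rcases lt_or_gt_of_ne hne with hlt | hgt
    · have := h.map_lt x q hrx hlt
      omega
    · have := hz.map_lt_of_lt x hgt
      exact hx.not_between (by omega) hrq hgt (by omega)

theorem IsPivot.isCover_left (hz : IsPivot d u z r q) (h : IsTransitionState d e r u) :
    IsCover z r (u * signedSwap r q) ∧ ∀ x, IsCover x r (u * signedSwap r q) → x = z := by
  have := hz.one_le
  have hrq := hz.lt
  have := hz.le
  have hmap := hz.map_lt
  have hzr := hz.left_lt
  have hzq := hz.map_left_lt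
  have hneg := hz.right_neg h
  have hz₀ := hz.lt_neg_or_one_le h
  have hval := mul_signedSwap_cases h.odd (r := r) (q := q) (by omega) (by omega)
  have hvr := hval r
  have hvz := hval z
  refine ⟨⟨by omega, by omega, hzr, by omega, fun x hzx hxr h₁ h₂ => ?_⟩, fun x hx => ?_⟩
  · have hvx := hval x
    have := hz.le_left x hxr (by omega)
    omega
  · have hxr := hx.lt
    have hmap' := hx.map_lt
    have hvx := hval x
    by_contra hne
    have := hz.le_left x hxr (by omega)
    have := hz.map_lt_map_left h hxr (by omega) hne
    exact hx.not_between (by omega) (by omega) hzr (by omega)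

/-- The effect of one application of the transition formula: the letters `z, r, q` move
cyclically to the positions of `q, z, r`. -/
def transitionStep (u : Equiv.Perm ℤ) (z r q : ℤ) : Equiv.Perm ℤ :=
  u * signedSwap r q * signedSwap z r

theorem IsTransitionState.exists_isSignedPerm_abs_le (h : IsTransitionState d e r u)
    (x y z : ℤ) : ∃ n, IsSignedPerm n u ∧ |x| ≤ n ∧ |y| ≤ n ∧ |z| ≤ n := by
  obtain ⟨n, hn⟩ := h.exists_isSignedPerm
  refine ⟨n + x.natAbs + y.natAbs + z.natAbs, hn.mono (by omega), ?_, ?_, ?_⟩ <;>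
  · rw [Int.abs_eq_natAbs]
    omega

theorem IsPivot.exists_isSignedPerm_transitionStep (hz : IsPivot d u z r q)
    (h : IsTransitionState d e r u) : ∃ n, IsSignedPerm n (transitionStep u z r q) := by
  obtain ⟨n, hn, hzn, hrn, hqn⟩ := h.exists_isSignedPerm_abs_le z r q
  have hcz := (hz.isCover_left h).1
  have hcq := (hz.isCover_right h).1
  exact ⟨n, (hn.mul (isSignedPerm_signedSwap hcq.left_ne_zero hcq.right_ne_zero hrn hqn)).mul
    (isSignedPerm_signedSwap hcz.left_ne_zero hcz.right_ne_zero hzn hrn)⟩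

theorem IsPivot.numReducedWords_transitionStep (hz : IsPivot d u z r q)
    (h : IsTransitionState d e r u) (N : ℕ) :
    numReducedWords N (transitionStep u z r q) = numReducedWords N u := by
  obtain ⟨n, hn, hzn, hrn, hqn⟩ := h.exists_isSignedPerm_abs_le z r q
  obtain ⟨hcz, hcz'⟩ := hz.isCover_left h
  obtain ⟨hcq, hcq'⟩ := hz.isCover_right h
  have hv : IsSignedPerm n (u * signedSwap r q) :=
    hn.mul (isSignedPerm_signedSwap hcq.left_ne_zero hcq.right_ne_zero hrn hqn)
  rw [transitionStep, numReducedWords_eq_of_unique_covers hv hrn hcz hcq hzn hqn hcz' hcq',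
    mul_assoc, signedSwap_mul_self hcq.left_ne_zero hcq.right_ne_zero, mul_one]

theorem IsPivot.transitionStep_cases (hz : IsPivot d u z r q) (h : IsTransitionState d e r u)
    (x : ℤ) :
    (x = r ∧ transitionStep u z r q x = u z) ∨ (x = q ∧ transitionStep u z r q x = u r) ∨
      (x = z ∧ transitionStep u z r q x = u q) ∨ (x = -r ∧ transitionStep u z r q x = -u z) ∨
      (x = -q ∧ transitionStep u z r q x = -u r) ∨ (x = -z ∧ transitionStep u z r q x = -u q) ∨
      (x ≠ r ∧ x ≠ q ∧ x ≠ z ∧ x ≠ -r ∧ x ≠ -q ∧ x ≠ -z ∧ transitionStep u z r q x = u x) := by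
  have := hz.one_le
  have := hz.lt
  have := hz.le
  have := hz.left_lt
  have := hz.lt_neg_or_one_le h
  have hv : Function.Odd (u * signedSwap r q) :=
    odd_mul h.odd (odd_signedSwap (by omega) (by omega))
  have hval := mul_signedSwap_cases h.odd (r := r) (q := q) (by omega) (by omega)
  have hvr : (u * signedSwap r q) r = u q := by
    have := hval r
    omega
  have hvz : (u * signedSwap r q) z = u z := by
    have := hval z
    omega
  have hval' := mul_signedSwap_cases hv (r := z) (q := r) (by omega) (by omega) x
  rw [← transitionStep, hvr, hvz] at hval'
  rcases hval' with hx | hx | hx | hx | ⟨hxz, hxr, hxz', hxr', hx⟩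
  · exact .inr (.inr (.inl hx))
  · exact .inl hx
  · exact .inr (.inr (.inr (.inr (.inr (.inl hx)))))
  · exact .inr (.inr (.inr (.inl hx)))
  · rw [hx]
    rcases hval x with hx | hx | hx | hx | ⟨_, hxq, _, hxq', hx⟩
    · exact absurd hx.1 hxr
    · exact .inr (.inl hx)
    · exact absurd hx.1 hxr'
    · exact .inr (.inr (.inr (.inr (.inl hx))))
    · exact .inr (.inr (.inr (.inr (.inr (.inr ⟨hxr, hxq, hxz, hxr', hxq', hxz', hx⟩)))))

theorem IsPivot.transitionStep_neg (hz : IsPivot d u z r q) (h : IsTransitionState d e r u)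
    (hk : 1 ≤ k) (hkd : k ≤ d) : transitionStep u z r q k < 0 := by
  have := hz.one_le
  have := hz.lt
  have := hz.map_lt
  have := hz.map_left_lt
  have := hz.right_neg h
  have := hz.lt_neg_or_one_le h
  have := h.neg k hk hkd
  have := hz.transitionStep_cases h k
  omega

theorem IsPivot.transitionStep_pos (hz : IsPivot d u z r q) (h : IsTransitionState d e r u)
    (hk : d < k) : 0 < transitionStep u z r q k := by
  have := hz.one_le
  have := hz.lt
  have := hz.le
  have := hz.left_lt
  have := hz.map_lt
  have := hz.right_neg h
  have := h.pos k hk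
  have := hz.transitionStep_cases h k
  omega

theorem IsPivot.transitionStep_lt_of_lt (hz : IsPivot d u z r q) (h : IsTransitionState d e r u)
    (hx : q - 1 < x) : transitionStep u z r q r < transitionStep u z r q x := by
  have := hz.one_le
  have := hz.lt
  have := hz.le
  have := hz.left_lt
  have := hz.map_lt
  have := hz.map_left_lt
  have := hz.map_lt_of_lt x
  have := hz.lt_neg_or_one_le h
  have := hz.right_neg h
  have := hz.transitionStep_cases h x
  have := hz.transitionStep_cases h r
  omega

theorem IsPivot.transitionStep_cases_of_right_lt (hz : IsPivot d u z r q)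
    (h : IsTransitionState d e r u) (hx : r < x) :
    (x = q ∧ transitionStep u z r q x = u r) ∨ (x = -z ∧ transitionStep u z r q x = -u q) ∨
      (x ≠ q ∧ x ≠ -z ∧ transitionStep u z r q x = u x) := by
  have := hz.one_le
  have := hz.lt
  have := hz.left_lt
  have := hz.transitionStep_cases h x
  omega

theorem IsPivot.transitionStep_cases_of_lt_right (hz : IsPivot d u z r q)
    (h : IsTransitionState d e r u) (hx : x < r) (hneg : transitionStep u z r q x < 0) :
    (x = z ∧ transitionStep u z r q x = u q) ∨ (x ≠ z ∧ transitionStep u z r q x = u x) := by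
  have := hz.lt
  have := hz.map_lt
  have := hz.map_left_lt
  have := hz.right_neg h
  have := hz.transitionStep_cases h x
  omega

theorem IsPivot.transitionStep_map_lt (hz : IsPivot d u z r q) (h : IsTransitionState d e r u)
    (hx : r < x) (hxy : x < y) : transitionStep u z r q x < transitionStep u z r q y := by
  have := hz.one_le
  have := hz.lt
  have := hz.le
  have := hz.map_lt
  have := hz.right_neg h
  have := hz.lt_neg_or_one_le h
  have := hz.left_lt
  have := hz.map_left_lt
  have hlt := h.map_lt x y hx hxy
  have hxq := h.map_lt x q hx
  have hqy := hz.map_lt_of_lt y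
  have hxpos := h.pos x
  have hypos := h.pos y
  have hxz := hz.le_left (-x)
  have hyz := hz.le_left (-y)
  have hux : u x = -u q ↔ x = -q := by rw [← h.odd, u.injective.eq_iff]
  have huxz : x = -z → u x = -u z := by
    rintro rfl
    exact h.odd z
  have huyz : y = -z → u y = -u z := by
    rintro rfl
    exact h.odd z
  rw [h.odd] at hxz hyz
  rcases hz.transitionStep_cases_of_right_lt h hx with hx' | hx' | hx' <;>
    rcases hz.transitionStep_cases_of_right_lt h (hx.trans hxy) with hy' | hy' | hy' <;>
    omega

theorem IsPivot.transitionStep_lt_of_map_lt (hz : IsPivot d u z r q)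
    (h : IsTransitionState d e r u) (hk : 1 ≤ k) (hkr : k ≤ r) (hx : x < k) (hy : y < k)
    (hyx : transitionStep u z r q y < transitionStep u z r q x)
    (hxk : transitionStep u z r q x < transitionStep u z r q k) : y < x := by
  have := hz.map_left_lt
  have := hz.map_lt
  have := hz.left_lt
  have hneg := hz.transitionStep_neg h hk (hkr.trans (hz.lt.le.trans hz.le))
  have hxz := hz.le_left x
  have hyz := hz.le_left y
  have hkq : u k ≠ u q := u.injective.ne (hkr.trans_lt hz.lt).ne
  have hkz := hz.le_left k
  have hyr := h.lt_of_map_lt r hz.one_le le_rfl x y (hx.trans_le hkr) (hy.trans_le hkr)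
  have hyk := h.lt_of_map_lt k hk hkr x y hx hy
  have hzk := h.lt_of_map_lt k hk hkr x z hx
  have hx' := hz.transitionStep_cases_of_lt_right h (hx.trans_le hkr) (hxk.trans hneg)
  have hy' := hz.transitionStep_cases_of_lt_right h (hy.trans_le hkr) (by omega)
  rcases hkr.eq_or_lt with rfl | hkr'
  · have := hz.transitionStep_cases h k
    omega
  · have hk' := hz.transitionStep_cases_of_lt_right h hkr' hneg
    rcases hk' with hk' | hk' <;> rcases hx' with hx' | hx' <;> rcases hy' with hy' | hy' <;> omega

theorem IsPivot.transitionStep_symm_cases (hz : IsPivot d u z r q)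
    (h : IsTransitionState d e r u) {c : ℤ} (hc : c < 0) :
    (c = u r ∧ u.symm c = r ∧ (transitionStep u z r q).symm c = q) ∨
      (c = u q ∧ u.symm c = q ∧ (transitionStep u z r q).symm c = z) ∨
      (c = u z ∧ u.symm c = z ∧ (transitionStep u z r q).symm c = r) ∨
      (c ≠ u r ∧ c ≠ u q ∧ c ≠ u z ∧ (transitionStep u z r q).symm c = u.symm c) := by
  obtain ⟨x, rfl⟩ := (transitionStep u z r q).surjective c
  have := hz.right_neg h
  have := hz.map_lt
  have := hz.map_left_lt
  rw [Equiv.symm_apply_apply]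
  rcases hz.transitionStep_cases h x with
    ⟨rfl, hx⟩ | ⟨rfl, hx⟩ | ⟨rfl, hx⟩ | hx | hx | hx | ⟨hr, hq, hz', -, -, -, hx⟩
  · exact .inr (.inr (.inl ⟨hx, by rw [hx, u.symm_apply_apply], rfl⟩))
  · exact .inl ⟨hx, by rw [hx, u.symm_apply_apply], rfl⟩
  · exact .inr (.inl ⟨hx, by rw [hx, u.symm_apply_apply], rfl⟩)
  iterate 3 omega
  · rw [hx, u.symm_apply_apply]
    exact .inr (.inr (.inr ⟨u.injective.ne hr, u.injective.ne hq, u.injective.ne hz', rfl⟩))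

theorem card_eq_card_of_exchange {α : Type*} {A B : Finset α} {a b : α}
    (haA : a ∈ A) (haB : a ∉ B) (hbB : b ∈ B) (hbA : b ∉ A)
    (h : ∀ c, c ≠ a → c ≠ b → (c ∈ A ↔ c ∈ B)) : A.card = B.card := by
  classical
  have herase : A.erase a = B.erase b := by
    ext c
    by_cases hca : c = a
    · simp [hca, haB]
    by_cases hcb : c = b
    · simp [hcb, hbA]
    simp [hca, hcb, h c hca hcb]
  rw [← Finset.card_erase_add_one haA, ← Finset.card_erase_add_one hbB, herase]

theorem IsPivot.negCode_transitionStep_last (hz : IsPivot d u z r q)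
    (h : IsTransitionState d e r u) : negCode (transitionStep u z r q) q = negCode u r := by
  have := hz.lt
  have := hz.map_lt
  have := hz.map_left_lt
  have huq : transitionStep u z r q q = u r := by
    have := hz.one_le
    have := hz.left_lt
    have := hz.le
    have := hz.lt_neg_or_one_le h
    have := hz.transitionStep_cases h q
    omega
  refine congrArg Finset.card (Finset.ext fun c => ?_)
  simp only [Finset.mem_filter, Finset.mem_Ioo, huq]
  refine and_congr_right fun hc => ?_
  have hsymm := hz.transitionStep_symm_cases h hc.2
  have hmid := h.map_lt (u.symm c) q
  have hne : c ≠ u r → u.symm c ≠ r := by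
    rintro hne rfl
    simp at hne
  rw [u.apply_symm_apply] at hmid
  omega

theorem IsPivot.negCode_transitionStep_right (hz : IsPivot d u z r q)
    (h : IsTransitionState d e r u) : negCode (transitionStep u z r q) r = negCode u q := by
  have hrq := hz.lt
  have hmap := hz.map_lt
  have hzr := hz.left_lt
  have hzq := hz.map_left_lt
  have hneg := hz.right_neg h
  have hur : transitionStep u z r q r = u z := by
    have := hz.one_le
    have := hz.le
    have := hz.lt_neg_or_one_le h
    have := hz.transitionStep_cases h r
    omega
  have hsr := hz.transitionStep_symm_cases h hneg
  have hsq := hz.transitionStep_symm_cases h (hmap.trans hneg)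
  symm
  apply card_eq_card_of_exchange (a := u r) (b := u q)
  · simp [hmap, hneg, hrq]
  · simp only [Finset.mem_filter, Finset.mem_Ioo, hur]
    omega
  · simp only [Finset.mem_filter, Finset.mem_Ioo, hur]
    omega
  · simp
  · intro c hcr hcq
    simp only [Finset.mem_filter, Finset.mem_Ioo, hur]
    by_cases hc : c < 0
    swap
    · omega
    have hsymm := hz.transitionStep_symm_cases h hc
    have hmid := h.map_lt (u.symm c) q
    have hlow := hz.map_lt_map_left h (x := u.symm c)
    have hne (y : ℤ) (hy : c ≠ u y) : u.symm c ≠ y := by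
      rwa [Ne, Equiv.symm_apply_eq]
    have := hne r hcr
    have := hne q hcq
    have := hne z
    rw [u.apply_symm_apply] at hmid hlow
    omega

theorem IsPivot.negCode_transitionStep_left (hz : IsPivot d u z r q)
    (h : IsTransitionState d e r u) (hz₁ : 1 ≤ z) :
    negCode (transitionStep u z r q) z = negCode u z := by
  have := hz.lt
  have := hz.map_lt
  have := hz.left_lt
  have := hz.map_left_lt
  have huz : transitionStep u z r q z = u q := by
    have := hz.transitionStep_cases h z
    omega
  refine congrArg Finset.card (Finset.ext fun c => ?_)
  simp only [Finset.mem_filter, Finset.mem_Ioo, huz]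
  by_cases hc : c < 0
  swap
  · omega
  have hsymm := hz.transitionStep_symm_cases h hc
  have hlow := hz.map_lt_map_left h (x := u.symm c)
  rw [u.apply_symm_apply] at hlow
  omega

theorem IsPivot.negCode_transitionStep_of_between (hz : IsPivot d u z r q)
    (h : IsTransitionState d e r u) (hrk : r < k) (hkq : k < q) :
    negCode (transitionStep u z r q) k = negCode u k := by
  have hneg := hz.right_neg h
  have hmap := hz.map_lt
  have hkmap := h.map_lt k q hrk hkq
  have := hz.left_lt
  have := hz.map_left_lt
  have huk : transitionStep u z r q k = u k := by
    have := hz.le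
    have := hz.lt_neg_or_one_le h
    have := hz.transitionStep_cases_of_right_lt h hrk
    omega
  have hsr := hz.transitionStep_symm_cases h hneg
  have hsq := hz.transitionStep_symm_cases h (hmap.trans hneg)
  symm
  apply card_eq_card_of_exchange (a := u r) (b := u q)
  · simp only [Finset.mem_filter, Finset.mem_Ioo, Equiv.symm_apply_apply]
    omega
  · simp only [Finset.mem_filter, huk]
    omega
  · simp only [Finset.mem_filter, Finset.mem_Ioo, huk]
    omega
  · simp only [Finset.mem_filter, Equiv.symm_apply_apply]
    omega
  · intro c hcr hcq
    simp only [Finset.mem_filter, Finset.mem_Ioo, huk]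
    refine and_congr_right fun hc => ?_
    have := hz.transitionStep_symm_cases h hc.2
    omega

theorem IsPivot.negCode_transitionStep_of_not_between (hz : IsPivot d u z r q)
    (h : IsTransitionState d e r u) (hk : 1 ≤ k) (hkd : k ≤ d) (hkz : k ≠ z)
    (hkrq : k < r ∨ q < k) : negCode (transitionStep u z r q) k = negCode u k := by
  have := hz.one_le
  have := hz.lt
  have := hz.le
  have := hz.left_lt
  have := hz.map_lt
  have hlow := hz.le_left k
  have hright := hz.map_lt_of_lt k
  have huk : transitionStep u z r q k = u k := by
    have := hz.lt_neg_or_one_le h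
    have := hz.transitionStep_cases h k
    omega
  refine congrArg Finset.card (Finset.ext fun c => ?_)
  simp only [Finset.mem_filter, Finset.mem_Ioo, huk]
  refine and_congr_right fun hc => ?_
  have := hz.transitionStep_symm_cases h hc.2
  have := hz.map_left_lt
  have := u.injective.ne hkz
  omega

theorem IsPivot.negCode_transitionStep (hz : IsPivot d u z r q)
    (h : IsTransitionState d e r u) (hk : 1 ≤ k) (hkd : k ≤ d) :
    negCode (transitionStep u z r q) k = negCode u (Equiv.swap r q k) := by
  rcases eq_or_ne k r with rfl | hkr
  · rw [Equiv.swap_apply_left, hz.negCode_transitionStep_right h]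
  rcases eq_or_ne k q with rfl | hkq
  · rw [Equiv.swap_apply_right, hz.negCode_transitionStep_last h]
  rw [Equiv.swap_apply_of_ne_of_ne hkr hkq]
  rcases eq_or_ne k z with rfl | hkz
  · exact hz.negCode_transitionStep_left h hk
  by_cases hmid : r < k ∧ k < q
  · exact hz.negCode_transitionStep_of_between h hmid.1 hmid.2
  · exact hz.negCode_transitionStep_of_not_between h hk hkd hkz (by omega)

theorem IsPivot.exists_perm_transitionStep (hz : IsPivot d u z r q)
    (h : IsTransitionState d e r u) : ∃ σ : Equiv.Perm (Fin d), ∀ i : Fin d,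
      negCode (transitionStep u z r q) (i + 1) = e (σ i + 1) := by
  obtain ⟨σ, hσ⟩ := h.exists_perm
  have hr := hz.one_le
  have hrq := hz.lt
  have hqd := hz.le
  refine ⟨(Equiv.swap ⟨(r - 1).toNat, by omega⟩ ⟨(q - 1).toNat, by omega⟩).trans σ, fun i => ?_⟩
  rw [hz.negCode_transitionStep h (by omega) (by omega), Equiv.trans_apply, ← hσ]
  congr 1
  grind

theorem IsPivot.isTransitionState (hz : IsPivot d u z r q) (h : IsTransitionState d e r u) :
    IsTransitionState d e r (transitionStep u z r q) where
  exists_isSignedPerm := hz.exists_isSignedPerm_transitionStep h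
  neg _ := hz.transitionStep_neg h
  pos _ := hz.transitionStep_pos h
  map_lt _ _ := hz.transitionStep_map_lt h
  lt_of_map_lt _ hk hkr _ _ := hz.transitionStep_lt_of_map_lt h hk hkr
  exists_perm := hz.exists_perm_transitionStep h

theorem IsTransitionState.sub_one (h : IsTransitionState d e r u)
    (hlt : ∀ x, r < x → u r < u x) : IsTransitionState d e (r - 1) u where
  exists_isSignedPerm := h.exists_isSignedPerm
  neg := h.neg
  pos := h.pos
  map_lt x y hx hxy := by
    rcases (show r ≤ x by omega).eq_or_lt with rfl | hrx
    · exact hlt y hxy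
    · exact h.map_lt x y hrx hxy
  lt_of_map_lt k hk hkr := h.lt_of_map_lt k hk (by omega)
  exists_perm := h.exists_perm

/-- Moves the letter `r` past the larger letters `d, d - 1, …` standing to its left. -/
theorem IsTransitionState.exists_map_lt (h : IsTransitionState d e r u) (hr : 1 ≤ r) (hrd : r ≤ d)
    (N : ℕ) : ∃ u', IsTransitionState d e r u' ∧ (∀ x, r < x → u' r < u' x) ∧
      numReducedWords N u' = numReducedWords N u := by
  suffices H : ∀ q (_ : q ≤ (d : ℤ)), r ≤ q → ∃ u', IsTransitionState d e r u' ∧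
      (∀ x, q < x → u' r < u' x) ∧ numReducedWords N u' = numReducedWords N u from
    H r hrd le_rfl
  refine Int.leInductionDown (fun _ => ⟨u, h, fun x hx => ?_, rfl⟩) fun q hqd ih hrq => ?_
  · exact (h.neg r hr hrd).trans (h.pos x hx)
  · obtain ⟨u', h', hright, hN⟩ := ih (by omega)
    rcases lt_or_gt_of_ne (u'.injective.ne (show q ≠ r by omega)) with hq | hq
    · obtain ⟨z, hz⟩ := h'.exists_isPivot hr (by omega) hqd hq hright
      exact ⟨_, hz.isTransitionState h', fun x => hz.transitionStep_lt_of_lt h',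
        (hz.numReducedWords_transitionStep h' N).trans hN⟩
    · refine ⟨u', h', fun x hx => ?_, hN⟩
      rcases (show q ≤ x by omega).eq_or_lt with rfl | hqx
      · exact hq
      · exact hright x hqx

theorem IsTransitionState.exists_sorted (h : IsTransitionState d e d u) (N : ℕ) :
    ∃ u', IsTransitionState d e 0 u' ∧ numReducedWords N u' = numReducedWords N u := by
  suffices H : ∀ r (_ : r ≤ (d : ℤ)), 0 ≤ r → ∃ u', IsTransitionState d e r u' ∧
      numReducedWords N u' = numReducedWords N u from H 0 (by omega) le_rfl
  refine Int.leInductionDown (fun _ => ⟨u, h, rfl⟩) fun r hrd ih hr => ?_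
  obtain ⟨u₁, h₁, hN₁⟩ := ih (by omega)
  obtain ⟨u₂, h₂, hlt, hN₂⟩ := h₁.exists_map_lt (by omega) hrd N
  exact ⟨u₂, h₂.sub_one hlt, hN₂.trans hN₁⟩

theorem IsTransitionState.add_sub_le (h : IsTransitionState d e 0 u) (hx : 0 < x) (hxy : x ≤ y) :
    u x + (y - x) ≤ u y := by
  refine Int.leInduction (by omega) (fun y hxy ih => ?_) y hxy
  have := h.map_lt y (y + 1) (by omega) (by omega)
  omega

theorem IsTransitionState.negCode_eq (h : IsTransitionState d e 0 u) (hk : 1 ≤ k) (hkd : k ≤ d) :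
    (negCode u k : ℤ) + (d - k) + 1 = -u k := by
  have hlarge : ((Finset.Ioo (u k) 0).filter fun c => ¬ u.symm c < k).card =
      (Finset.Ioc k d).card := by
    refine (Finset.card_equiv u fun x => ?_).symm
    simp only [Finset.mem_filter, Finset.mem_Ioo, Finset.mem_Ioc, Equiv.symm_apply_apply]
    have hpos := h.pos x
    have hneg := h.neg x
    have hlt := h.map_lt k x
    have hne : x = k → u x = u k := congrArg u
    omega
  have hsplit := Finset.card_filter_add_card_filter_not (s := Finset.Ioo (u k) 0)
    fun c => u.symm c < k
  have := h.neg k hk hkd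
  rw [hlarge, Int.card_Ioo, Int.card_Ioc, ← negCode] at hsplit
  omega

theorem IsTransitionState.negCode_eq_of_add_eq (h : IsTransitionState d e 0 u) {lam : ℕ → ℕ}
    (hlam : IsWeakStrict d lam) (he : ∀ i : ℕ, 1 ≤ i → i ≤ d → e i + i = lam (d + 1 - i))
    (hk : 1 ≤ k) (hkd : k ≤ d) : negCode u k = e (d + 1 - k) := by
  obtain ⟨σ, hσ⟩ := h.exists_perm
  let f : Fin d → ℕ := fun i => e (i + 1)
  have hf : Monotone (f ∘ (1 : Equiv.Perm (Fin d))) := fun i j hij => by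
    have hi := he (i + 1) (by omega) (by omega)
    have hj := he (j + 1) (by omega) (by omega)
    rw [Nat.add_sub_add_right] at hi hj
    push_cast at hi hj
    have := hlam.add_sub_le (i := d - j) (k := d - i) (by omega) (by omega) (by omega) (by omega)
    change e (i + 1) ≤ e (j + 1)
    omega
  have hfσ : Monotone (f ∘ (Fin.revPerm.trans σ)) := fun i j hij => by
    have hrev : (j.rev : ℕ) ≤ i.rev := Fin.rev_le_rev.2 hij
    have hi := h.negCode_eq (k := (i.rev : ℤ) + 1) (by omega) (by omega)
    have hj := h.negCode_eq (k := (j.rev : ℤ) + 1) (by omega) (by omega)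
    have := h.add_sub_le (x := (j.rev : ℤ) + 1) (y := (i.rev : ℤ) + 1) (by omega) (by omega)
    change e (σ i.rev + 1) ≤ e (σ j.rev + 1)
    rw [← hσ, ← hσ]
    omega
  obtain ⟨i, rfl⟩ : ∃ i : Fin d, k = i + 1 :=
    ⟨⟨(k - 1).toNat, by omega⟩, by rw [Int.toNat_of_nonneg (by omega)]; ring⟩
  have heq : e (σ i.rev.rev + 1) = e (i.rev + 1) :=
    congrFun (Tuple.unique_monotone hfσ hf) i.rev
  rw [Fin.rev_rev, ← hσ] at heq
  rw [heq, Fin.val_rev, Nat.cast_sub (by omega)]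
  congr 1
  push_cast
  ring

theorem IsTransitionState.isShapePerm (h : IsTransitionState d e 0 u) {lam : ℕ → ℕ}
    (hlam : IsWeakStrict d lam) (he : ∀ i : ℕ, 1 ≤ i → i ≤ d → e i + i = lam (d + 1 - i)) :
    IsShapePerm d lam u where
  map_lt := h.map_lt
  symm_neg_iff c hc := by
    have hval (i : ℕ) (hi : 1 ≤ i) (hid : i ≤ d) : -u i = lam i := by
      have hcode := h.negCode_eq_of_add_eq hlam he (k := i) (by omega) (by omega)
      have := h.negCode_eq (k := i) (by omega) (by omega)
      have hrow := he (d + 1 - i) (by omega) (by omega)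
      rw [show (((d + 1 - i : ℕ)) : ℤ) = d + 1 - i by omega, ← hcode, Nat.sub_sub_self (by omega)]
        at hrow
      omega
    constructor
    · intro hneg
      obtain ⟨i, hi⟩ : ∃ i : ℕ, u.symm c = -i := ⟨(u.symm c).natAbs, by omega⟩
      have hui : -u i = c := by rw [← h.odd, ← hi, Equiv.apply_symm_apply]
      have hpos := h.pos i
      exact ⟨i, by omega, by omega, by have := hval i (by omega) (by omega); omega⟩
    · rintro ⟨i, hi, hid, rfl⟩
      rw [← hval i hi hid, ← h.odd, Equiv.symm_apply_apply]
      omega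

end TransitionState

section InsertionState

variable {d k : ℕ} {e : ℤ → ℕ} {u : Equiv.Perm ℤ} {c i x : ℤ}

/-- The odd permutation of `ℤ` moving `1` to `-(m + 1)` and shifting `2, …, m + 1` down by one. -/
def insertionCycle (m : ℕ) : Equiv.Perm ℤ where
  toFun x := if x = 1 then -(m + 1) else if x = -1 then m + 1
    else if 2 ≤ x ∧ x ≤ m + 1 then x - 1 else if -(m + 1) ≤ x ∧ x ≤ -2 then x + 1 else x
  invFun x := if x = m + 1 then -1 else if x = -(m + 1) then 1
    else if 1 ≤ x ∧ x ≤ m then x + 1 else if -m ≤ x ∧ x ≤ -1 then x - 1 else x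
  left_inv x := by grind
  right_inv x := by grind

theorem insertionCycle_apply (m : ℕ) (x : ℤ) : insertionCycle m x =
    if x = 1 then -(m + 1 : ℤ) else if x = -1 then m + 1
    else if 2 ≤ x ∧ x ≤ m + 1 then x - 1 else if -(m + 1) ≤ x ∧ x ≤ -2 then x + 1 else x :=
  rfl

theorem insertionCycle_symm_cases (m : ℕ) (hc : 1 ≤ c) :
    c ≤ m ∧ (insertionCycle m).symm c = c + 1 ∨
      c = m + 1 ∧ (insertionCycle m).symm c = -1 ∨
      m + 1 < c ∧ (insertionCycle m).symm c = c := by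
  change c ≤ m ∧ ite _ _ _ = _ ∨ c = m + 1 ∧ ite _ _ _ = _ ∨ m + 1 < c ∧ ite _ _ _ = _
  split_ifs <;> omega

theorem isSignedPerm_insertionCycle (m : ℕ) : IsSignedPerm (m + 1) (insertionCycle m) := by
  refine ⟨fun x => ?_, fun x hx => ?_⟩
  · rw [insertionCycle_apply, insertionCycle_apply]
    split_ifs <;> omega
  · rw [lt_abs] at hx
    rw [insertionCycle_apply]
    split_ifs <;> omega

/-- The stage of the construction of the signed permutation attached to the balanced tableaux at
which the letters `1, …, k` have been inserted and the remaining ones, `k + 1, …, d`, stand at the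
positions `1, …, d - k`. -/
structure IsInsertionState (d : ℕ) (e : ℤ → ℕ) (k : ℕ) (u : Equiv.Perm ℤ) : Prop where
  exists_isSignedPerm : ∃ n, IsSignedPerm n u
  map_add : ∀ j : ℤ, 1 ≤ j → j ≤ d - k → u (k + j) = j
  lt_neg : ∀ i : ℤ, 1 ≤ i → i ≤ k → d - k + e i < -u i
  neg_lt_symm_iff : ∀ i : ℤ, 1 ≤ i → i ≤ k → ∀ c : ℤ, d - k < c → c < -u i →
    (-i < u.symm c ↔ c - (d - k) ≤ e i)
  lt_map : ∀ x : ℤ, d < x → d - k < u x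
  map_lt : ∀ x y : ℤ, d < x → x < y → u x < u y
  neg_le_symm : ∀ c : ℤ, d - k < c → -k ≤ u.symm c

theorem isInsertionState_one (d : ℕ) (e : ℤ → ℕ) : IsInsertionState d e 0 1 where
  exists_isSignedPerm := ⟨0, isSignedPerm_one 0⟩
  map_add j _ _ := by simp
  lt_neg i h₁ h₂ := by omega
  neg_lt_symm_iff i h₁ h₂ := by omega
  lt_map x hx := by simpa using hx
  map_lt x y _ hxy := hxy
  neg_le_symm c hc := by change _ ≤ c; omega

theorem IsInsertionState.odd (h : IsInsertionState d e k u) : Function.Odd u :=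
  h.exists_isSignedPerm.elim fun _ hn => hn.odd

theorem IsInsertionState.map_succ (h : IsInsertionState d e k u) (hk : k + 1 ≤ d) :
    u (k + 1) = 1 :=
  h.map_add 1 le_rfl (by omega)

theorem IsInsertionState.symm_neg_one (h : IsInsertionState d e k u) (hk : k + 1 ≤ d) :
    u.symm (-1) = -(k + 1) := by
  rw [Equiv.symm_apply_eq, h.odd, h.map_succ hk]

theorem IsInsertionState.symm_cases (h : IsInsertionState d e k u) (hk : k + 1 ≤ d) (m : ℕ)
    (hc : 1 ≤ c) :
    c ≤ m ∧ (insertionCycle m * u).symm c = u.symm (c + 1) ∨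
      c = m + 1 ∧ (insertionCycle m * u).symm c = -(k + 1) ∨
      m + 1 < c ∧ (insertionCycle m * u).symm c = u.symm c := by
  have hmul : (insertionCycle m * u).symm c = u.symm ((insertionCycle m).symm c) := rfl
  have := h.symm_neg_one hk
  rcases insertionCycle_symm_cases m hc with ⟨hcm, hsymm⟩ | ⟨hcm, hsymm⟩ | ⟨hcm, hsymm⟩ <;>
    rw [hsymm] at hmul <;> omega

theorem IsInsertionState.neg_lt_symm_iff_succ (h : IsInsertionState d e k u) (hk : k + 1 ≤ d)
    (he : ∀ i : ℤ, 1 ≤ i → i ≤ k → e i ≤ e (k + 1)) (hi : 1 ≤ i) (hik : i ≤ k + 1)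
    (hc : d - (k + 1) < c) (hci : c < -(insertionCycle (d - (k + 1) + e (k + 1)) * u) i) :
    -i < (insertionCycle (d - (k + 1) + e (k + 1)) * u).symm c ↔ c - (d - (k + 1)) ≤ e i := by
  rw [Equiv.Perm.mul_apply, insertionCycle_apply] at hci
  have hcases := h.symm_cases hk (d - (k + 1) + e (k + 1)) (c := c) (by omega)
  obtain rfl | hne := eq_or_ne i (k + 1)
  · rw [if_pos (h.map_succ hk)] at hci
    have := h.neg_le_symm (c + 1) (by omega)
    omega
  · have hlt := h.lt_neg i hi (by omega)
    have hle := he i hi (by omega)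
    have hiff := h.neg_lt_symm_iff i hi (by omega) c
    have hiff_succ := h.neg_lt_symm_iff i hi (by omega) (c + 1)
    split_ifs at hci <;> omega

theorem IsInsertionState.succ (h : IsInsertionState d e k u) (hk : k + 1 ≤ d)
    (he : ∀ i : ℤ, 1 ≤ i → i ≤ k → e i ≤ e (k + 1)) :
    IsInsertionState d e (k + 1) (insertionCycle (d - (k + 1) + e (k + 1)) * u) where
  exists_isSignedPerm := by
    obtain ⟨n, hn⟩ := h.exists_isSignedPerm
    exact ⟨_, ((isSignedPerm_insertionCycle _).mono (le_max_left _ n)).mul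
      (hn.mono (le_max_right _ n))⟩
  map_add j h₁ h₂ := by
    rw [Nat.cast_succ] at h₂ ⊢
    rw [add_assoc, add_comm 1 j, Equiv.Perm.mul_apply, h.map_add (j + 1) (by omega) (by omega),
      insertionCycle_apply]
    split_ifs <;> omega
  lt_neg i h₁ h₂ := by
    rw [Equiv.Perm.mul_apply, insertionCycle_apply]
    obtain rfl | hne := eq_or_ne i (k + 1)
    · rw [if_pos (h.map_succ hk)]
      omega
    · have := h.lt_neg i h₁ (by omega)
      have := he i h₁ (by omega)
      split_ifs <;> omega
  neg_lt_symm_iff i h₁ h₂ c h₃ h₄ := by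
    push_cast at h₂ h₃ ⊢
    exact h.neg_lt_symm_iff_succ hk he h₁ h₂ h₃ h₄
  lt_map x hx := by
    have := h.lt_map x hx
    rw [Equiv.Perm.mul_apply, insertionCycle_apply]
    split_ifs <;> omega
  map_lt x y hx hxy := by
    have := h.lt_map x hx
    have := h.map_lt x y hx hxy
    rw [Equiv.Perm.mul_apply, Equiv.Perm.mul_apply, insertionCycle_apply, insertionCycle_apply]
    split_ifs <;> omega
  neg_le_symm c hc := by
    have hcases := h.symm_cases hk (d - (k + 1) + e (k + 1)) (c := c) (by omega)
    have := h.neg_le_symm c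
    have := h.neg_le_symm (c + 1)
    omega

theorem exists_isInsertionState (he : ∀ i j : ℤ, 1 ≤ i → i ≤ j → j ≤ d → e i ≤ e j)
    (hk : k ≤ d) : ∃ u, IsInsertionState d e k u := by
  induction k with
  | zero => exact ⟨1, isInsertionState_one d e⟩
  | succ k ih =>
    obtain ⟨u, hu⟩ := ih (by omega)
    exact ⟨_, hu.succ hk fun i h₁ h₂ => he i (k + 1) h₁ (by omega) (by omega)⟩

end InsertionState

section BalancedPerm

variable {d : ℕ} {e : ℤ → ℕ} {u : Equiv.Perm ℤ} {i k z z' : ℤ}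

/-- The signed permutation attached to the balanced tableaux of the shape whose `i`-th row from the
bottom occupies the columns `1 - i, …, e i`: the letter `-i` stands to the right of the position
`e i`, and of the positive positions before `-i` exactly the first `e i` hold a letter
larger than `-i`. -/
structure IsBalancedPerm (d : ℕ) (e : ℤ → ℕ) (u : Equiv.Perm ℤ) : Prop where
  exists_isSignedPerm : ∃ n, IsSignedPerm n u
  lt_neg : ∀ i : ℤ, 1 ≤ i → i ≤ d → e i < -u i
  neg_lt_symm_iff : ∀ i : ℤ, 1 ≤ i → i ≤ d → ∀ c : ℤ, 0 < c → c < -u i →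
    (-i < u.symm c ↔ c ≤ e i)
  pos : ∀ x : ℤ, d < x → 0 < u x
  map_lt : ∀ x y : ℤ, d < x → x < y → u x < u y

theorem IsInsertionState.isBalancedPerm (h : IsInsertionState d e d u) : IsBalancedPerm d e u where
  exists_isSignedPerm := h.exists_isSignedPerm
  lt_neg i h₁ h₂ := by simpa using h.lt_neg i h₁ h₂
  neg_lt_symm_iff i h₁ h₂ c h₃ h₄ := by
    simpa using h.neg_lt_symm_iff i h₁ h₂ c (by omega) h₄
  pos x hx := by simpa using h.lt_map x hx
  map_lt := h.map_lt

theorem exists_isBalancedPerm (he : ∀ i j : ℤ, 1 ≤ i → i ≤ j → j ≤ d → e i ≤ e j) :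
    ∃ u, IsBalancedPerm d e u :=
  (exists_isInsertionState he le_rfl).imp fun _ h => h.isBalancedPerm

theorem IsBalancedPerm.odd (h : IsBalancedPerm d e u) : Function.Odd u :=
  h.exists_isSignedPerm.elim fun _ hn => hn.odd

theorem IsBalancedPerm.neg (h : IsBalancedPerm d e u) (hk : 1 ≤ k) (hkd : k ≤ d) : u k < 0 := by
  have := h.lt_neg k hk hkd
  omega

theorem IsBalancedPerm.negCode_eq (h : IsBalancedPerm d e u) (hk : 1 ≤ k) (hkd : k ≤ d) :
    negCode u k = e k := by
  have heq : (Finset.Ioo (u k) 0).filter (fun c => u.symm c < k) = Finset.Ico (-(e k : ℤ)) 0 := by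
    ext c
    have := h.lt_neg k hk hkd
    have hiff := h.neg_lt_symm_iff k hk hkd (-c)
    rw [odd_symm h.odd] at hiff
    simp only [Finset.mem_filter, Finset.mem_Ioo, Finset.mem_Ico]
    omega
  rw [negCode, heq, Int.card_Ico]
  omega

theorem IsBalancedPerm.lt_of_map_lt (h : IsBalancedPerm d e u)
    (he : ∀ i j : ℤ, 1 ≤ i → i ≤ j → j ≤ d → e i ≤ e j) (hk : 1 ≤ k) (hkd : k ≤ d)
    (hz'k : z' < k) (hlt : u z' < u z) (hltk : u z < u k) : z' < z := by
  by_contra! hle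
  have hne : z ≠ z' := by rintro rfl; exact hlt.false
  have huk := h.neg hk hkd
  obtain hd | hd := lt_or_ge (d : ℤ) (-z')
  · have := h.map_lt (-z') (-z) hd (by omega)
    rw [h.odd, h.odd] at this
    omega
  obtain hpos | hpos := le_or_gt 1 z'
  · have hiff := h.neg_lt_symm_iff z' hpos (by omega) (-u z) (by omega) (by omega)
    rw [← h.odd, Equiv.symm_apply_apply] at hiff
    have := h.odd z
    have := h.lt_neg k hk hkd
    have := he z' k hpos hz'k.le hkd
    omega
  · have := h.odd z'
    have := map_eq_zero_iff_of_odd h.odd (x := z')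
    have := h.neg (k := -z')
    omega

theorem IsBalancedPerm.isTransitionState (h : IsBalancedPerm d e u)
    (he : ∀ i j : ℤ, 1 ≤ i → i ≤ j → j ≤ d → e i ≤ e j) : IsTransitionState d e d u where
  exists_isSignedPerm := h.exists_isSignedPerm
  neg _ := h.neg
  pos := h.pos
  map_lt := h.map_lt
  lt_of_map_lt _ hk hkd _ _ _ := h.lt_of_map_lt he hk hkd
  exists_perm := ⟨1, fun i => h.negCode_eq (by omega) (by omega)⟩

end BalancedPerm

section Balance

variable {d N : ℕ} {e : ℤ → ℕ} {u : Equiv.Perm ℤ} {T : ℤ → ℤ → ℕ} {i x y z : ℤ}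

/-- The column of the tableau indexed by the letter `z`. -/
def letterColumn (d : ℕ) (u : Equiv.Perm ℤ) (z : ℤ) : ℤ :=
  if 1 ≤ z ∧ z ≤ d then -z else u z

/-- The letters indexing the boxes of the `i`-th row from the bottom; the box of `z` holds the time
of the pair `-i, z`. -/
abbrev IsRowLetter (d : ℕ) (i z : ℤ) : Prop := -i < z ∧ (z < i ∨ d < z)

/-- The leg of the box of the letter `x` in row `i` consists of the pairs `z, x` with `z` in the arm
and `z < x`; here those inverted after the pair `-i, x`. -/
def laterLeg (d : ℕ) (u : Equiv.Perm ℤ) (T : ℤ → ℤ → ℕ) (i x : ℤ) : Set ℤ :=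
  {z | letterColumn d u x < letterColumn d u z ∧ -i < z ∧ z < x ∧ T (-i) x < T z x}

/-- The pairs inverted before the pair `-i, x` in the arm of the box of the letter `x` in row `i`,
and in the part of the row `x` which the hook acquires when `1 ≤ x`. -/
def earlierArm (d : ℕ) (u : Equiv.Perm ℤ) (T : ℤ → ℤ → ℕ) (i x : ℤ) : Set ℤ :=
  {z | (letterColumn d u x < letterColumn d u z ∧ -i < z ∧ T (-i) z < T (-i) x) ∨
    (z < -d ∧ T z x < T (-i) x)}

/-- The balance condition of tableaux, expressed through the times of the pairs of letters. -/
def IsBalancedTiming (d : ℕ) (e : ℤ → ℕ) (u : Equiv.Perm ℤ) (T : ℤ → ℤ → ℕ) : Prop :=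
  ∀ i x : ℤ, 1 ≤ i → i ≤ d → IsRowLetter d i x → letterColumn d u x ≤ e i →
    (laterLeg d u T i x).ncard = (earlierArm d u T i x).ncard

theorem IsBalancedPerm.map_neg_of_lt (h : IsBalancedPerm d e u) (hz : z < -d) : u z < 0 := by
  have := h.pos (-z) (by omega)
  rw [h.odd] at this
  omega

theorem IsBalancedPerm.map_pos_of_neg (h : IsBalancedPerm d e u) (hz : z < 0) (hdz : -d ≤ z) :
    0 < u z := by
  have := h.neg (k := -z) (by omega) (by omega)
  rw [h.odd] at this
  omega

theorem IsBalancedPerm.map_nonneg (h : IsBalancedPerm d e u) (hid : i ≤ d)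
    (hz : IsRowLetter d i z) (hzd : ¬ (1 ≤ z ∧ z ≤ d)) : 0 ≤ u z := by
  have := h.odd.map_zero
  have := h.map_pos_of_neg (z := z)
  have := h.pos z
  obtain rfl | hz₀ := eq_or_ne z 0 <;> omega

theorem IsBalancedPerm.map_lt_of_outer (h : IsBalancedPerm d e u) {p q : ℤ} (hpq : p < q)
    (hp : p < -d ∨ 0 ≤ p) (hq : q ≤ 0 ∨ d < q) : u p < u q := by
  have h₀ := h.odd.map_zero
  rcases hq with hq | hq
  · have hpd : p < -d := by omega
    have := h.map_neg_of_lt hpd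
    obtain rfl | hq₀ := eq_or_ne q 0
    · omega
    · have := h.map_lt (-q) (-p)
      have := h.odd p
      have := h.odd q
      have := h.map_pos_of_neg (z := q) (by omega)
      omega
  · have := h.pos q hq
    have := h.map_lt p q
    have := h.neg (k := p)
    have := h.map_neg_of_lt (z := p)
    obtain rfl | hp₀ := eq_or_ne p 0 <;> omega

theorem IsBalancedPerm.map_lt_iff_letterColumn_le (h : IsBalancedPerm d e u) (hi : 1 ≤ i)
    (hid : i ≤ d) (hz : IsRowLetter d i z) : u z < u (-i) ↔ letterColumn d u z ≤ e i := by
  have hlt := h.lt_neg i hi hid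
  rw [h.odd, letterColumn]
  split_ifs with hzd
  · have := h.neg hzd.1 hzd.2
    omega
  · have hiff := h.neg_lt_symm_iff i hi hid (u z)
    rw [Equiv.symm_apply_apply] at hiff
    have := h.map_nonneg hid hz hzd
    omega

theorem IsBalancedPerm.letterColumn_injOn (h : IsBalancedPerm d e u) (hid : i ≤ d) :
    Set.InjOn (letterColumn d u) {z | IsRowLetter d i z} := by
  intro y hy z hz hyz
  have := h.map_nonneg hid hy
  have := h.map_nonneg hid hz
  simp only [letterColumn] at hyz
  split_ifs at hyz
  · omega
  · omega
  · omega
  · exact u.injective hyz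

theorem IsBalancedPerm.neg_lt_letterColumn (h : IsBalancedPerm d e u) (hi : 1 ≤ i) (hid : i ≤ d)
    (hz : IsRowLetter d i z) : -i < letterColumn d u z := by
  have := h.map_nonneg hid hz
  rw [letterColumn]
  split_ifs <;> omega

theorem IsBalancedPerm.map_lt_of_letterColumn_lt (h : IsBalancedPerm d e u) (hid : i ≤ d)
    (hx : IsRowLetter d i x) (hlt : letterColumn d u x < letterColumn d u z) (hxz : x < z) :
    u x < u z := by
  have := h.map_nonneg hid hx
  have := h.neg (k := x)
  have := h.pos z
  simp only [letterColumn] at hlt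
  split_ifs at hlt <;> omega

theorem isRowLetter_of_lt_letterColumn {c : ℤ} (hc : -i ≤ c) (hz : -i < z)
    (hlt : c < letterColumn d u z) : IsRowLetter d i z := by
  rw [letterColumn] at hlt
  split_ifs at hlt <;> omega

theorem IsPretiming.eq_succ_of_map_lt (hu : Function.Odd u) (hT : IsPretiming N u T) (hxz : x < z)
    (hlt : u x < u z) : T x z = N + 1 := by
  have := hT.le_succ x z
  have := hT.le_iff_map_lt hu hxz
  omega

theorem IsPretiming.ne_of_isRowLetter_left (hT : IsPretiming N u T) (hx : IsRowLetter d i x)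
    (hi : 1 ≤ i) (hid : i ≤ d) (hzi : z ≠ -i) (hzx : z < x) (hle : T (-i) x ≤ N) :
    T z x ≠ T (-i) x := by
  intro heq
  obtain rfl | hx₀ := eq_or_ne x 0
  · rw [hT.zero_right] at hle
    rw [hT.zero_right, hT.zero_right] at heq
    have := hT.eq_or_eq_neg (-i) (- -i) z (-z) (by omega) (by omega) (by omega) (by omega)
      (by omega) hle heq
    omega
  · have := hT.eq_zero_of_eq_right (by omega) hx₀ hx.1 hle hzi heq
    omega

theorem IsPretiming.ne_of_isRowLetter_right (hT : IsPretiming N u T) (hx : IsRowLetter d i x)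
    (hi : 1 ≤ i) (hid : i ≤ d) (hzx : z ≠ x) (hzi : z ≠ i) (hle : T (-i) x ≤ N) :
    T (-i) z ≠ T (-i) x := by
  intro heq
  obtain rfl | hx₀ := eq_or_ne x 0
  · rw [hT.zero_right, _root_.neg_neg] at hle heq
    exact hzx (hT.eq_zero_of_eq_left (by omega) (by omega) (by omega) hle hzi heq).1
  · have := hT.eq_zero_of_eq_left (by omega) hx₀ hx.1 hle hzx heq
    omega

theorem IsBalancedPerm.le_iff_letterColumn_le (h : IsBalancedPerm d e u) (hT : IsPretiming N u T)
    (hi : 1 ≤ i) (hid : i ≤ d) (hx : IsRowLetter d i x) :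
    T (-i) x ≤ N ↔ letterColumn d u x ≤ e i := by
  rw [hT.le_iff_map_lt h.odd hx.1, h.map_lt_iff_letterColumn_le hi hid hx]

theorem IsSignedPerm.finite_setOf_lt_and_map_lt {n : ℕ} (hu : IsSignedPerm n u) (a b : ℤ) :
    {z | a < z ∧ u z < b}.Finite := by
  refine (Set.finite_Icc a (max n b)).subset fun z hz => ⟨hz.1.le, ?_⟩
  by_contra! hlt
  have := hu.2 z ((max_lt_iff.1 hlt).1.trans_le (le_abs_self z))
  have := hz.2
  omega

theorem finite_laterLeg : (laterLeg d u T i x).Finite :=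
  (Set.finite_Ioo (-i) x).subset fun _ hz => ⟨hz.2.1, hz.2.2.1⟩

theorem IsPretiming.finite_earlierArm {n : ℕ} (hu : IsSignedPerm n u) (hT : IsPretiming N u T)
    (hid : i ≤ d) (hx : -i < x) : (earlierArm d u T i x).Finite := by
  have hle := hT.le_succ (-i) x
  refine (hu.finite_setOf_lt_and_map_lt (-i) (u (-i))).union
    ((hu.finite_setOf_lt_and_map_lt (-x) (-u x)).preimage neg_injective.injOn) |>.subset ?_
  rintro z (⟨-, hz, hlt⟩ | ⟨hz, hlt⟩)
  · exact .inl ⟨hz, (hT.le_iff_map_lt hu.odd hz).1 (by omega)⟩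
  · have hzx : z < x := by omega
    have := (hT.le_iff_map_lt hu.odd hzx).1 (by omega)
    refine .inr ⟨neg_lt_neg hzx, ?_⟩
    rw [hu.odd]
    omega

theorem IsBalancedPerm.laterLeg_eq_earlierArm (h : IsBalancedPerm d e u) (hT : IsTiming N u T)
    (hi : 1 ≤ i) (hid : i ≤ d) (hx : IsRowLetter d i x) (hle : letterColumn d u x ≤ e i) :
    laterLeg d u T i x = earlierArm d u T i x := by
  have hN := (h.le_iff_letterColumn_le hT.toIsPretiming hi hid hx).2 hle
  ext z
  constructor
  · rintro ⟨hcol, hz, hzx, hlt⟩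
    have := hT.btw (-i) z x hz hzx
    have := isRowLetter_of_lt_letterColumn (h.neg_lt_letterColumn hi hid hx).le hz hcol
    have := hT.ne_of_isRowLetter_right hx hi hid hzx.ne (by omega) hN
    exact .inl ⟨hcol, hz, by omega⟩
  rintro (⟨hcol, hz, hlt⟩ | ⟨hz, hlt⟩)
  · have hzx : z ≠ x := by rintro rfl; exact hlt.false
    obtain hzx | hxz := hzx.lt_or_gt
    · have := hT.btw (-i) z x hz hzx
      have := hT.ne_of_isRowLetter_left hx hi hid hz.ne' hzx hN
      exact ⟨hcol, hz, hzx, by omega⟩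
    · have := hT.btw (-i) x z hx.1 hxz
      have := hT.eq_succ_of_map_lt h.odd hxz (h.map_lt_of_letterColumn_lt hid hx hcol hxz)
      omega
  · have hzi : z < -i := by omega
    have := hT.btw z (-i) x hzi hx.1
    have := h.map_neg_of_lt hz
    have := h.map_pos_of_neg (z := -i) (by omega) (by omega)
    have := hT.eq_succ_of_map_lt h.odd hzi (by omega)
    omega

/-- The letters `-i, …, i` together with those beyond `-d` and `d`; they are all the letters for
`i = d`. -/
abbrev IsCoreLetter (d : ℕ) (i z : ℤ) : Prop := (-i ≤ z ∧ z ≤ i) ∨ z < -d ∨ d < z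

/-- The betweenness condition for the letters of `IsCoreLetter d i`. -/
def IsCoreBetween (d : ℕ) (T : ℤ → ℤ → ℕ) (i : ℤ) : Prop :=
  ∀ p q r, IsCoreLetter d i p → IsCoreLetter d i q → IsCoreLetter d i r → p < q → q < r →
    IsBetween T p q r

/-- The betweenness conditions visible in the part of row `i` starting at the column `c`. -/
structure IsRowBetween (d : ℕ) (u : Equiv.Perm ℤ) (T : ℤ → ℤ → ℕ) (i c : ℤ) : Prop where
  btw : ∀ y z, IsRowLetter d i y → IsRowLetter d i z → c ≤ letterColumn d u y →
    c ≤ letterColumn d u z → y < z → IsBetween T (-i) y z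
  le : ∀ y z : ℤ, IsRowLetter d i z → c ≤ letterColumn d u z → y < -d → T (-i) z ≤ T y z

theorem IsBalancedPerm.laterLeg_subset_or (h : IsBalancedPerm d e u) (hT : IsPretiming N u T)
    (hi : 1 ≤ i) (hid : i ≤ d) (hx : IsRowLetter d i x) (hle : letterColumn d u x ≤ e i)
    (hcore : IsCoreBetween d T (i - 1)) (hrow : IsRowBetween d u T i (letterColumn d u x + 1)) :
    laterLeg d u T i x ⊆ earlierArm d u T i x ∨ earlierArm d u T i x ⊆ laterLeg d u T i x := by
  have hN := (h.le_iff_letterColumn_le hT hi hid hx).2 hle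
  by_contra! hsub
  obtain ⟨⟨y, ⟨hy, hiy, hyx, hlt⟩, hyA⟩, z, hzA, hzL⟩ := hsub.imp Set.not_subset.1 Set.not_subset.1
  have hyr := isRowLetter_of_lt_letterColumn (h.neg_lt_letterColumn hi hid hx).le hiy hy
  have hyA : T (-i) x ≤ T (-i) y := le_of_not_gt fun hlt => hyA (.inl ⟨hy, hiy, hlt⟩)
  have hcore (p q r) := hcore p q r
  rcases hzA with ⟨hz, hiz, hzlt⟩ | ⟨hz, hzlt⟩
  · have hzr := isRowLetter_of_lt_letterColumn (h.neg_lt_letterColumn hi hid hx).le hiz hz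
    have hzx : z ≠ x := by rintro rfl; exact hzlt.false
    have hyz : y ≠ z := by rintro rfl; exact hyA.not_gt hzlt
    obtain hzx | hxz := hzx.lt_or_gt
    · have hzL : T z x ≤ T (-i) x := le_of_not_gt fun hlt => hzL ⟨hz, hiz, hzx, hlt⟩
      obtain hyz | hzy := hyz.lt_or_gt
      · have := hrow.btw y z hyr hzr (by omega) (by omega) hyz
        have := hcore y z x (by omega) (by omega) (by omega) hyz hzx
        omega
      · have := hrow.btw z y hzr hyr (by omega) (by omega) hzy
        have := hcore z y x (by omega) (by omega) (by omega) hzy hyx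
        have := hT.ne_of_isRowLetter_left hx hi hid hiz.ne' hzx hN
        omega
    · have := hrow.btw y z hyr hzr (by omega) (by omega) (hyx.trans hxz)
      have := hcore y x z (by omega) (by omega) (by omega) hyx hxz
      have := hT.eq_succ_of_map_lt h.odd hxz (h.map_lt_of_letterColumn_lt hid hx hz hxz)
      omega
  · have := hrow.le z y hyr (by omega) hz
    have := hcore z y x (by omega) (by omega) (by omega) (by omega) hyx
    omega

theorem IsBalancedPerm.laterLeg_eq_of_isBalancedTiming (h : IsBalancedPerm d e u)
    (hT : IsPretiming N u T) (hi : 1 ≤ i) (hid : i ≤ d) (hx : IsRowLetter d i x)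
    (hle : letterColumn d u x ≤ e i) (hcore : IsCoreBetween d T (i - 1))
    (hrow : IsRowBetween d u T i (letterColumn d u x + 1)) (hbal : IsBalancedTiming d e u T) :
    laterLeg d u T i x = earlierArm d u T i x := by
  have hcard := hbal i x hi hid hx hle
  obtain ⟨n, hn⟩ := h.exists_isSignedPerm
  obtain hsub | hsub := h.laterLeg_subset_or hT hi hid hx hle hcore hrow
  · exact Set.eq_of_subset_of_ncard_le hsub hcard.ge (hT.finite_earlierArm hn hid hx.1)
  · exact (Set.eq_of_subset_of_ncard_le hsub hcard.le finite_laterLeg).symm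

theorem IsBalancedPerm.isRowBetween_step (h : IsBalancedPerm d e u) (hT : IsPretiming N u T)
    (hi : 1 ≤ i) (hid : i ≤ d) {c : ℤ} (hc : c ≤ e i) (hcore : IsCoreBetween d T (i - 1))
    (hbal : IsBalancedTiming d e u T) (hrow : IsRowBetween d u T i (c + 1)) :
    IsRowBetween d u T i c := by
  have heq (x) (hx : IsRowLetter d i x) (hxc : letterColumn d u x = c) (z) :
      z ∈ laterLeg d u T i x ↔ z ∈ earlierArm d u T i x := by
    rw [h.laterLeg_eq_of_isBalancedTiming hT hi hid hx (hxc ▸ hc) hcore (hxc ▸ hrow) hbal]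
  simp only [laterLeg, earlierArm, Set.mem_ofPred_eq] at heq
  constructor
  · intro y z hy hz hcy hcz hyz
    have hne : letterColumn d u y = c → letterColumn d u z ≠ c := fun hyc hzc =>
      hyz.ne (h.letterColumn_injOn hid hy hz (hyc.trans hzc.symm))
    obtain hyc | hyc := eq_or_ne (letterColumn d u y) c
    · have := hne hyc
      have := heq y hy hyc z
      have := hT.eq_succ_of_map_lt h.odd hyz
        (h.map_lt_of_letterColumn_lt hid hy (by omega) hyz)
      have := hT.le_succ (-i) z
      omega
    obtain hzc | hzc := eq_or_ne (letterColumn d u z) c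
    · have := heq z hz hzc y
      omega
    · exact hrow.btw y z hy hz (by omega) (by omega) hyz
  · intro y z hz hcz hy
    obtain hzc | hzc := eq_or_ne (letterColumn d u z) c
    · have := heq z hz hzc y
      omega
    · exact hrow.le y z hz (by omega) hy

theorem IsBalancedPerm.isRowBetween (h : IsBalancedPerm d e u) (hT : IsPretiming N u T)
    (hi : 1 ≤ i) (hid : i ≤ d) (hcore : IsCoreBetween d T (i - 1))
    (hbal : IsBalancedTiming d e u T) (k : ℕ) : IsRowBetween d u T i (e i + 1 - k) := by
  induction k with
  | zero =>
    have htop (z) (hz : IsRowLetter d i z) (hcz : e i + 1 - (0 : ℕ) ≤ letterColumn d u z) :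
        T (-i) z = N + 1 := by
      have := h.le_iff_letterColumn_le hT hi hid hz
      have := hT.le_succ (-i) z
      omega
    constructor
    · intro y z hy hz hcy hcz _
      have := htop y hy hcy
      have := htop z hz hcz
      omega
    · intro y z hz hcz hy
      have huz : 0 < u z := by
        rw [letterColumn] at hcz
        split_ifs at hcz <;> omega
      rw [htop z hz hcz,
        hT.eq_succ_of_map_lt h.odd (by omega) ((h.map_neg_of_lt hy).trans huz)]
  | succ k ih =>
    refine h.isRowBetween_step hT hi hid (by omega) hcore hbal ?_
    convert ih using 1
    push_cast
    ring

theorem IsBalancedPerm.isRowBetween_neg (h : IsBalancedPerm d e u) (hT : IsPretiming N u T)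
    (hi : 1 ≤ i) (hid : i ≤ d) (hcore : IsCoreBetween d T (i - 1))
    (hbal : IsBalancedTiming d e u T) : IsRowBetween d u T i (-i) := by
  convert h.isRowBetween hT hi hid hcore hbal (e i + 1 + i).toNat using 1
  omega

theorem IsBalancedPerm.isBetween_neg_left (h : IsBalancedPerm d e u) (hT : IsPretiming N u T)
    (hi : 1 ≤ i) (hid : i ≤ d) (hrow : IsRowBetween d u T i (-i)) (hy : IsCoreLetter d i y)
    (hz : IsCoreLetter d i z) (hiy : -i < y) (hyz : y < z) : IsBetween T (-i) y z := by
  have hbtw (y z) (hy : IsRowLetter d i y) (hz : IsRowLetter d i z) (hyz : y < z) :=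
    hrow.btw y z hy hz (h.neg_lt_letterColumn hi hid hy).le (h.neg_lt_letterColumn hi hid hz).le hyz
  have hzero : T (-i) 0 = T (-i) i := by rw [hT.zero_right, _root_.neg_neg]
  obtain rfl | hyi := eq_or_ne y i
  · have := hbtw 0 z (by omega) (by omega) (by omega)
    have := h.odd.map_zero
    have := h.neg hi hid
    have := h.pos z (by omega)
    have := hT.eq_succ_of_map_lt h.odd (x := 0) (z := z) (by omega) (by omega)
    have := hT.eq_succ_of_map_lt h.odd hyz (by omega)
    omega
  obtain rfl | hzi := eq_or_ne z i
  · have hneg := hT.neg_neg y z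
    have hneg₀ := hT.neg_neg y 0
    rw [neg_zero] at hneg₀
    obtain hy₀ | rfl | hy₀ := lt_trichotomy y 0
    · have := hbtw 0 (-y) (by omega) (by omega) (by omega)
      have := hbtw y 0 (by omega) (by omega) hy₀
      omega
    · rw [neg_zero] at hneg
      omega
    · have := hbtw 0 y (by omega) (by omega) hy₀
      have := hbtw (-y) 0 (by omega) (by omega) (by omega)
      have hneg₀ := hT.neg_neg 0 y
      rw [neg_zero] at hneg₀
      omega
  exact hbtw y z (by omega) (by omega) hyz

theorem IsBalancedPerm.eq_succ_of_lt (h : IsBalancedPerm d e u) (hT : IsPretiming N u T)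
    (hi : 1 ≤ i) (hid : i ≤ d) (hz : d < z) : T i z = N + 1 :=
  hT.eq_succ_of_map_lt h.odd (by omega) ((h.neg hi hid).trans (h.pos z hz))

theorem IsBalancedPerm.isBetween_middle (h : IsBalancedPerm d e u) (hT : IsPretiming N u T)
    (hi : 1 ≤ i) (hid : i ≤ d) (hrow : IsRowBetween d u T i (-i)) (hy : IsCoreLetter d i y)
    (hz : IsCoreLetter d i z) (hyi : y < i) (hiz : i < z) : IsBetween T y i z := by
  obtain rfl | hyi := eq_or_ne y (-i)
  · exact h.isBetween_neg_left hT hi hid hrow (by omega) hz hyi hiz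
  have hyr : IsRowLetter d i (-y) := by omega
  have := hrow.le (-z) (-y) hyr (h.neg_lt_letterColumn hi hid hyr).le (by omega)
  have := hT.neg_neg y i
  have := hT.neg_neg y z
  have := hT.le_succ y z
  have := h.eq_succ_of_lt hT hi hid (z := z) (by omega)
  omega

theorem IsBalancedPerm.isBetween_left (h : IsBalancedPerm d e u) (hT : IsPretiming N u T)
    (hi : 1 ≤ i) (hid : i ≤ d) (hy : d < y) (hyz : y < z) : IsBetween T i y z := by
  have := h.eq_succ_of_lt hT hi hid hy
  have := h.eq_succ_of_lt hT hi hid (hy.trans hyz)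
  have := hT.le_succ y z
  omega

theorem IsPretiming.isBetween_neg {p q r : ℤ} (hT : IsPretiming N u T)
    (h : IsBetween T (-r) (-q) (-p)) : IsBetween T p q r := by
  simp only [IsBetween, hT.neg_neg] at h
  omega

theorem IsBalancedPerm.isCoreBetween_step (h : IsBalancedPerm d e u) (hT : IsPretiming N u T)
    (hi : 1 ≤ i) (hid : i ≤ d) (hbal : IsBalancedTiming d e u T)
    (hcore : IsCoreBetween d T (i - 1)) : IsCoreBetween d T i := by
  have hrow := h.isRowBetween_neg hT hi hid hcore hbal
  intro p q r hp hq hr hpq hqr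
  obtain rfl | hpi := eq_or_ne p (-i)
  · exact h.isBetween_neg_left hT hi hid hrow hq hr hpq hqr
  obtain rfl | hri := eq_or_ne r i
  · exact hT.isBetween_neg
      (h.isBetween_neg_left hT hi hid hrow (by omega) (by omega) (by omega) (by omega))
  obtain rfl | hqi := eq_or_ne q i
  · exact h.isBetween_middle hT hi hid hrow hp hr hpq hqr
  obtain rfl | hqi' := eq_or_ne q (-i)
  · refine hT.isBetween_neg ?_
    rw [neg_neg]
    exact h.isBetween_middle hT hi hid hrow (by omega) (by omega) (by omega) (by omega)
  obtain rfl | hpi' := eq_or_ne p i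
  · exact h.isBetween_left hT hi hid (by omega) hqr
  obtain rfl | hri' := eq_or_ne r (-i)
  · refine hT.isBetween_neg ?_
    rw [neg_neg]
    exact h.isBetween_left hT hi hid (by omega) (by omega)
  exact hcore p q r (by omega) (by omega) (by omega) hpq hqr

theorem IsBalancedPerm.isCoreBetween_zero (h : IsBalancedPerm d e u) (hT : IsPretiming N u T) :
    IsCoreBetween d T 0 := by
  have htop (p q) (hp : IsCoreLetter d 0 p) (hq : IsCoreLetter d 0 q) (hpq : p < q) :
      T p q = N + 1 :=
    hT.eq_succ_of_map_lt h.odd hpq (h.map_lt_of_outer hpq (by omega) (by omega))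
  intro p q r hp hq hr hpq hqr
  have := htop p q hp hq hpq
  have := htop q r hq hr hqr
  have := htop p r hp hr (hpq.trans hqr)
  omega

theorem IsBalancedPerm.isCoreBetween (h : IsBalancedPerm d e u) (hT : IsPretiming N u T)
    (hbal : IsBalancedTiming d e u T) {k : ℕ} (hk : k ≤ d) : IsCoreBetween d T k := by
  induction k with
  | zero => exact h.isCoreBetween_zero hT
  | succ k ih =>
    refine h.isCoreBetween_step hT (by omega) (by omega) hbal ?_
    rw [Nat.cast_succ, add_sub_cancel_right]
    exact ih (by omega)

theorem IsBalancedPerm.isTiming_iff (h : IsBalancedPerm d e u) :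
    IsTiming N u T ↔ IsPretiming N u T ∧ IsBalancedTiming d e u T := by
  constructor
  · intro hT
    refine ⟨hT.toIsPretiming, fun i x hi hid hx hle => ?_⟩
    rw [h.laterLeg_eq_earlierArm hT hi hid hx hle]
  · rintro ⟨hT, hbal⟩
    exact ⟨hT, fun p q r => h.isCoreBetween hT hbal le_rfl p q r (by omega) (by omega) (by omega)⟩

end Balance

section Tableau

variable {d N : ℕ} {e : ℤ → ℕ} {lam : ℕ → ℕ} {u : Equiv.Perm ℤ} {T : ℤ → ℤ → ℕ}
  {i i' z z' c p q : ℤ}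

/-- The last box of the `i`-th row from the bottom lies in column `e i`. -/
def IsRowEnd (d : ℕ) (lam : ℕ → ℕ) (e : ℤ → ℕ) : Prop :=
  ∀ i : ℤ, 1 ≤ i → i ≤ d → (e i : ℤ) + i = lam ((d : ℤ) + 1 - i).toNat

/-- The box in column `c` of the `i`-th row from the bottom belongs to the diagram. -/
abbrev IsBox (d : ℕ) (e : ℤ → ℕ) (i c : ℤ) : Prop := 1 ≤ i ∧ i ≤ d ∧ -i < c ∧ c ≤ e i

/-- The letter indexing the column `c`, inverse to `letterColumn`. -/
def columnLetter (u : Equiv.Perm ℤ) (c : ℤ) : ℤ := if c < 0 then -c else u.symm c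

/-- The pair `p < q` belongs to the letter `z` of row `i`, up to the symmetry
`p, q ↦ -q, -p` and up to the convention identifying the pairs `-i, 0` and `-i, i`. -/
abbrev IsRowPair (i z p q : ℤ) : Prop :=
  (p = -i ∧ q = z) ∨ (p = -z ∧ q = i) ∨ (p = -i ∧ q = i ∧ z = 0)

/-- The tableau of shape `lam` whose box in column `c` of the `i`-th row from the bottom holds the
time of the pair formed by `-i` and the letter of column `c`. -/
noncomputable def timingTableau (d : ℕ) (lam : ℕ → ℕ) (u : Equiv.Perm ℤ) (T : ℤ → ℤ → ℕ) :
    ℤ × ℤ → ℕ :=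
  (Diagram d lam).indicator fun b => T (-(d + 1 - b.1)) (columnLetter u b.2)

theorem exists_eq_row (d : ℕ) (b : ℤ × ℤ) : ∃ i c : ℤ, b = ((d : ℤ) + 1 - i, c) :=
  ⟨d + 1 - b.1, b.2, by simp⟩

theorem IsRowEnd.mem_diagram_iff (he : IsRowEnd d lam e) :
    ((d : ℤ) + 1 - i, c) ∈ Diagram d lam ↔ IsBox d e i c := by
  have := he i
  simp only [Diagram, Set.mem_ofPred_eq]
  omega

theorem IsBalancedPerm.columnLetter_letterColumn (h : IsBalancedPerm d e u) (hid : i ≤ d)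
    (hz : IsRowLetter d i z) : columnLetter u (letterColumn d u z) = z := by
  have := h.map_nonneg hid hz
  rw [letterColumn]
  split_ifs with hzd
  · rw [columnLetter, if_pos (by omega), neg_neg]
  · rw [columnLetter, if_neg (by omega), Equiv.symm_apply_apply]

theorem columnLetter_neg {x : ℤ} (hx : 0 < x) : columnLetter u (-x) = x := by
  rw [columnLetter, if_pos (by omega), neg_neg]

theorem IsBalancedPerm.columnLetter_zero (h : IsBalancedPerm d e u) : columnLetter u 0 = 0 := by
  rw [columnLetter, if_neg (lt_irrefl 0), Equiv.symm_apply_eq, h.odd.map_zero]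

theorem IsBalancedPerm.letterColumn_zero (h : IsBalancedPerm d e u) : letterColumn d u 0 = 0 := by
  rw [letterColumn, if_neg (by omega), h.odd.map_zero]

theorem IsBalancedPerm.isRowLetter_columnLetter_and_eq (h : IsBalancedPerm d e u)
    (hb : IsBox d e i c) :
    IsRowLetter d i (columnLetter u c) ∧ letterColumn d u (columnLetter u c) = c := by
  obtain ⟨hi, hid, hic, hce⟩ := hb
  obtain hc | rfl | hc := lt_trichotomy c 0
  · obtain ⟨x, rfl⟩ : ∃ x, c = -x := ⟨-c, by omega⟩
    rw [columnLetter_neg (by omega), letterColumn, if_pos (by omega)]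
    exact ⟨⟨by omega, by omega⟩, rfl⟩
  · rw [h.columnLetter_zero, h.letterColumn_zero]
    exact ⟨⟨by omega, by omega⟩, rfl⟩
  · have := h.lt_neg i hi hid
    have := (h.neg_lt_symm_iff i hi hid c hc (by omega)).2 hce
    have huc := u.apply_symm_apply c
    have := h.neg (k := u.symm c)
    rw [columnLetter, if_neg (by omega), letterColumn, if_neg (by omega)]
    exact ⟨⟨by omega, by omega⟩, huc⟩

theorem IsBalancedPerm.isRowLetter_columnLetter (h : IsBalancedPerm d e u) (hb : IsBox d e i c) :
    IsRowLetter d i (columnLetter u c) :=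
  (h.isRowLetter_columnLetter_and_eq hb).1

theorem IsBalancedPerm.letterColumn_columnLetter (h : IsBalancedPerm d e u) (hb : IsBox d e i c) :
    letterColumn d u (columnLetter u c) = c :=
  (h.isRowLetter_columnLetter_and_eq hb).2

theorem IsBalancedPerm.isBox_letterColumn (h : IsBalancedPerm d e u) (hi : 1 ≤ i) (hid : i ≤ d)
    (hz : IsRowLetter d i z) (hle : letterColumn d u z ≤ e i) :
    IsBox d e i (letterColumn d u z) :=
  ⟨hi, hid, h.neg_lt_letterColumn hi hid hz, hle⟩

theorem exists_isRowPair_or_outer (d : ℕ) (hpq : p < q) :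
    (∃ i z : ℤ, 1 ≤ i ∧ i ≤ d ∧ IsRowLetter d i z ∧ IsRowPair i z p q) ∨
      (p < -d ∨ 0 ≤ p) ∧ (q ≤ 0 ∨ d < q) := by
  by_cases hp : 1 ≤ -p ∧ -p ≤ d ∧ IsRowLetter d (-p) q
  · exact Or.inl ⟨-p, q, hp.1, hp.2.1, hp.2.2, Or.inl ⟨by omega, rfl⟩⟩
  by_cases hq : 1 ≤ q ∧ q ≤ d ∧ IsRowLetter d q (-p)
  · exact Or.inl ⟨q, -p, hq.1, hq.2.1, hq.2.2, Or.inr (Or.inl ⟨by omega, rfl⟩)⟩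
  by_cases h₀ : p = -q ∧ 1 ≤ q ∧ q ≤ d
  · exact Or.inl ⟨q, 0, h₀.2.1, h₀.2.2, by omega, by omega⟩
  · exact Or.inr (by omega)

theorem IsRowPair.apply_eq (hp : IsRowPair i z p q) (hneg : ∀ p q, T (-q) (-p) = T p q)
    (hzero : ∀ p, T p 0 = T p (-p)) : T p q = T (-i) z := by
  rcases hp with ⟨rfl, rfl⟩ | ⟨rfl, rfl⟩ | ⟨rfl, rfl, rfl⟩
  · rfl
  · rw [← hneg, neg_neg]
  · rw [hzero, neg_neg]

theorem IsRowEnd.timingTableau_apply (he : IsRowEnd d lam e) (hb : IsBox d e i c) :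
    timingTableau d lam u T ((d : ℤ) + 1 - i, c) = T (-i) (columnLetter u c) := by
  rw [timingTableau, Set.indicator_of_mem (he.mem_diagram_iff.2 hb), sub_sub_cancel]

theorem IsBalancedPerm.timingTableau_letterColumn (h : IsBalancedPerm d e u)
    (he : IsRowEnd d lam e) (hi : 1 ≤ i) (hid : i ≤ d) (hz : IsRowLetter d i z)
    (hle : letterColumn d u z ≤ e i) :
    timingTableau d lam u T ((d : ℤ) + 1 - i, letterColumn d u z) = T (-i) z := by
  rw [he.timingTableau_apply (h.isBox_letterColumn hi hid hz hle),
    h.columnLetter_letterColumn hid hz]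

theorem IsBalancedPerm.le_of_isBox (h : IsBalancedPerm d e u) (hT : IsPretiming N u T)
    (hb : IsBox d e i c) : T (-i) (columnLetter u c) ≤ N := by
  rw [h.le_iff_letterColumn_le hT hb.1 hb.2.1 (h.isRowLetter_columnLetter hb),
    h.letterColumn_columnLetter hb]
  exact hb.2.2.2

theorem IsPretiming.exists_ne_zero_and_eq (hT : IsPretiming N u T) (hi : 1 ≤ i) (z : ℤ) :
    ∃ y, y ≠ 0 ∧ (y = z ∨ y = i ∧ z = 0) ∧ T (-i) y = T (-i) z := by
  obtain rfl | hz := eq_or_ne z 0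
  · exact ⟨i, by omega, by omega, by rw [hT.zero_right, _root_.neg_neg]⟩
  · exact ⟨z, hz, Or.inl rfl, rfl⟩

theorem IsPretiming.eq_and_eq_of_apply_eq (hT : IsPretiming N u T) (hi : 1 ≤ i) (hid : i ≤ d)
    (hi' : 1 ≤ i') (hid' : i' ≤ d) (hz : IsRowLetter d i z) (hz' : IsRowLetter d i' z')
    (hle : T (-i) z ≤ N) (heq : T (-i') z' = T (-i) z) : i' = i ∧ z' = z := by
  obtain ⟨y, hy₀, hy, hyz⟩ := hT.exists_ne_zero_and_eq hi z
  obtain ⟨y', hy₀', hy', hyz'⟩ := hT.exists_ne_zero_and_eq hi' z'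
  rw [← hyz] at heq hle
  rw [← hyz'] at heq
  have := hT.eq_or_eq_neg (-i) y (-i') y' (by omega) hy₀ (by omega) hy₀' (by omega) hle heq
  omega

theorem IsBalancedPerm.exists_rowLetter_apply_eq (h : IsBalancedPerm d e u)
    (hT : IsPretiming N u T) (hpq : p < q) (hle : T p q ≤ N) :
    ∃ i z : ℤ, 1 ≤ i ∧ i ≤ d ∧ IsRowLetter d i z ∧ T (-i) z = T p q := by
  obtain ⟨i, z, hi, hid, hz, hp⟩ | ⟨hp, hq⟩ := exists_isRowPair_or_outer d hpq
  · exact ⟨i, z, hi, hid, hz, (hp.apply_eq hT.neg_neg hT.zero_right).symm⟩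
  · have := hT.eq_succ_of_map_lt h.odd hpq (h.map_lt_of_outer hpq hp hq)
    omega

theorem IsBalancedPerm.isFilling_timingTableau (h : IsBalancedPerm d e u)
    (he : IsRowEnd d lam e) (hT : IsPretiming (sizeP d lam) u T) :
    IsFilling d lam (timingTableau d lam u T) := by
  refine ⟨⟨fun b hb => ?_, fun b hb b' hb' heq => ?_, fun k ⟨hk, hkN⟩ => ?_⟩,
    fun b hb => Set.indicator_of_notMem hb _⟩
  · obtain ⟨i, c, rfl⟩ := exists_eq_row d b
    rw [he.mem_diagram_iff] at hb
    rw [he.timingTableau_apply hb]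
    exact ⟨(hT.pos_iff _ _).2 (h.isRowLetter_columnLetter hb).1, h.le_of_isBox hT hb⟩
  · obtain ⟨i, c, rfl⟩ := exists_eq_row d b
    obtain ⟨i', c', rfl⟩ := exists_eq_row d b'
    rw [he.mem_diagram_iff] at hb hb'
    rw [he.timingTableau_apply hb, he.timingTableau_apply hb'] at heq
    obtain ⟨rfl, hcc⟩ := hT.eq_and_eq_of_apply_eq hb'.1 hb'.2.1 hb.1 hb.2.1
      (h.isRowLetter_columnLetter hb') (h.isRowLetter_columnLetter hb) (h.le_of_isBox hT hb') heq
    rw [← h.letterColumn_columnLetter hb, hcc, h.letterColumn_columnLetter hb']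
  · obtain ⟨p, q, -, -, rfl⟩ := hT.exists_eq k hk hkN
    obtain ⟨i, z, hi, hid, hz, hiz⟩ := h.exists_rowLetter_apply_eq hT ((hT.pos_iff p q).1 hk) hkN
    rw [← hiz] at hkN ⊢
    have hle := (h.le_iff_letterColumn_le hT hi hid hz).1 hkN
    exact ⟨_, he.mem_diagram_iff.2 (h.isBox_letterColumn hi hid hz hle),
      h.timingTableau_letterColumn he hi hid hz hle⟩

theorem IsBalancedPerm.timingTableau_injOn (h : IsBalancedPerm d e u) (he : IsRowEnd d lam e) :
    Set.InjOn (timingTableau d lam u) {T | IsPretiming N u T} := by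
  intro T hT T' hT' heq
  have hrow (i z : ℤ) (hi : 1 ≤ i) (hid : i ≤ d) (hz : IsRowLetter d i z) :
      T (-i) z = T' (-i) z := by
    by_cases hle : letterColumn d u z ≤ e i
    · rw [← h.timingTableau_letterColumn (T := T) he hi hid hz hle, heq,
        h.timingTableau_letterColumn he hi hid hz hle]
    · have := h.le_iff_letterColumn_le hT hi hid hz
      have := h.le_iff_letterColumn_le hT' hi hid hz
      have := hT.le_succ (-i) z
      have := hT'.le_succ (-i) z
      omega
  funext p q
  by_cases hpq : p < q
  · obtain ⟨i, z, hi, hid, hz, hp⟩ | ⟨hp, hq⟩ := exists_isRowPair_or_outer d hpq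
    · rw [hp.apply_eq hT.neg_neg hT.zero_right, hp.apply_eq hT'.neg_neg hT'.zero_right,
        hrow i z hi hid hz]
    · have hlt := h.map_lt_of_outer hpq hp hq
      rw [hT.eq_succ_of_map_lt h.odd hpq hlt, hT'.eq_succ_of_map_lt h.odd hpq hlt]
  · have := hT.pos_iff p q
    have := hT'.pos_iff p q
    omega

end Tableau

section FillingTiming

variable {d N : ℕ} {e : ℤ → ℕ} {lam : ℕ → ℕ} {u : Equiv.Perm ℤ} {B : ℤ × ℤ → ℕ} {i z p q : ℤ}

/-- The entry in the column of the letter `z` of the `i`-th row from the bottom, and `N + 1` beyond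
the end of that row. -/
def rowTime (d : ℕ) (e : ℤ → ℕ) (u : Equiv.Perm ℤ) (N : ℕ) (B : ℤ × ℤ → ℕ) (i z : ℤ) : ℕ :=
  if letterColumn d u z ≤ e i then B ((d : ℤ) + 1 - i, letterColumn d u z) else N + 1

/-- The pretiming whose tableau is `B`, see `timingTableau_fillingTiming`. -/
def fillingTiming (d : ℕ) (e : ℤ → ℕ) (u : Equiv.Perm ℤ) (N : ℕ) (B : ℤ × ℤ → ℕ) (p q : ℤ) : ℕ :=
  if 1 ≤ -p ∧ -p ≤ d ∧ IsRowLetter d (-p) q then rowTime d e u N B (-p) q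
  else if 1 ≤ q ∧ q ≤ d ∧ IsRowLetter d q (-p) then rowTime d e u N B q (-p)
  else if p = -q ∧ 1 ≤ q ∧ q ≤ d then rowTime d e u N B q 0
  else if p < q then N + 1 else 0

theorem fillingTiming_neg_left (hi : 1 ≤ i) (hid : i ≤ d) (hz : IsRowLetter d i z) :
    fillingTiming d e u N B (-i) z = rowTime d e u N B i z := by
  rw [fillingTiming, neg_neg, if_pos ⟨hi, hid, hz⟩]

theorem fillingTiming_neg_self (hi : 1 ≤ i) (hid : i ≤ d) :
    fillingTiming d e u N B (-i) i = rowTime d e u N B i 0 := by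
  rw [fillingTiming, neg_neg, if_neg (by omega), if_neg (by omega), if_pos ⟨rfl, hi, hid⟩]

theorem fillingTiming_of_outer (hpq : p < q) (hp : p < -d ∨ 0 ≤ p) (hq : q ≤ 0 ∨ d < q) :
    fillingTiming d e u N B p q = N + 1 := by
  rw [fillingTiming, if_neg (by omega), if_neg (by omega), if_neg (by omega), if_pos hpq]

theorem fillingTiming_of_le (hqp : q ≤ p) : fillingTiming d e u N B p q = 0 := by
  rw [fillingTiming, if_neg (by omega), if_neg (by omega), if_neg (by omega), if_neg (by omega)]

theorem fillingTiming_neg_neg (p q : ℤ) :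
    fillingTiming d e u N B (-q) (-p) = fillingTiming d e u N B p q := by
  simp only [fillingTiming, neg_neg, neg_lt_neg_iff]
  split_ifs with hp hq <;> first | rfl | omega | skip
  rw [show q = -p by omega]

theorem fillingTiming_zero_right (p : ℤ) :
    fillingTiming d e u N B p 0 = fillingTiming d e u N B p (-p) := by
  obtain hp | hp := le_or_gt 0 p
  · rw [fillingTiming_of_le hp, fillingTiming_of_le (by omega)]
  obtain hd | hd := lt_or_ge p (-d)
  · rw [fillingTiming_of_outer hp (by omega) (by omega),
      fillingTiming_of_outer (by omega) (by omega) (by omega)]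
  · obtain ⟨i, rfl⟩ : ∃ i, p = -i := ⟨-p, (neg_neg p).symm⟩
    rw [fillingTiming_neg_left (by omega) (by omega) (by omega), neg_neg,
      fillingTiming_neg_self (by omega) (by omega)]

theorem IsRowPair.fillingTiming_eq (hp : IsRowPair i z p q) (hi : 1 ≤ i) (hid : i ≤ d)
    (hz : IsRowLetter d i z) : fillingTiming d e u N B p q = rowTime d e u N B i z := by
  rw [hp.apply_eq fillingTiming_neg_neg fillingTiming_zero_right, fillingTiming_neg_left hi hid hz]

theorem rowTime_letter (hle : letterColumn d u z ≤ e i) :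
    rowTime d e u N B i z = B ((d : ℤ) + 1 - i, letterColumn d u z) :=
  if_pos hle

theorem IsBalancedPerm.rowTime_mem_Icc (h : IsBalancedPerm d e u) (he : IsRowEnd d lam e)
    (hB : IsFilling d lam B) (hi : 1 ≤ i) (hid : i ≤ d) (hz : IsRowLetter d i z)
    (hle : letterColumn d u z ≤ e i) :
    rowTime d e u N B i z ∈ Set.Icc 1 (sizeP d lam) := by
  rw [rowTime_letter hle]
  exact hB.1.mapsTo (he.mem_diagram_iff.2 (h.isBox_letterColumn hi hid hz hle))

theorem IsBalancedPerm.rowTime_le_iff (h : IsBalancedPerm d e u) (he : IsRowEnd d lam e)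
    (hB : IsFilling d lam B) (hi : 1 ≤ i) (hid : i ≤ d) (hz : IsRowLetter d i z) :
    rowTime d e u (sizeP d lam) B i z ≤ sizeP d lam ↔ letterColumn d u z ≤ e i := by
  by_cases hle : letterColumn d u z ≤ e i
  · exact iff_of_true (h.rowTime_mem_Icc he hB hi hid hz hle).2 hle
  · rw [rowTime, if_neg hle]
    omega

theorem IsBalancedPerm.rowTime_pos_and_le (h : IsBalancedPerm d e u) (he : IsRowEnd d lam e)
    (hB : IsFilling d lam B) (hi : 1 ≤ i) (hid : i ≤ d) (hz : IsRowLetter d i z) :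
    0 < rowTime d e u (sizeP d lam) B i z ∧
      rowTime d e u (sizeP d lam) B i z ≤ sizeP d lam + 1 := by
  by_cases hle : letterColumn d u z ≤ e i
  · obtain ⟨hpos, hN⟩ := h.rowTime_mem_Icc (N := sizeP d lam) he hB hi hid hz hle
    omega
  · rw [rowTime, if_neg hle]
    omega

theorem IsBalancedPerm.fillingTiming_pos_and_le (h : IsBalancedPerm d e u) (he : IsRowEnd d lam e)
    (hB : IsFilling d lam B) (hpq : p < q) :
    0 < fillingTiming d e u (sizeP d lam) B p q ∧
      fillingTiming d e u (sizeP d lam) B p q ≤ sizeP d lam + 1 := by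
  obtain ⟨i, z, hi, hid, hz, hp⟩ | ⟨hp, hq⟩ := exists_isRowPair_or_outer d hpq
  · rw [hp.fillingTiming_eq hi hid hz]
    exact h.rowTime_pos_and_le he hB hi hid hz
  · rw [fillingTiming_of_outer hpq hp hq]
    omega

theorem IsBalancedPerm.fillingTiming_le_iff (h : IsBalancedPerm d e u) (he : IsRowEnd d lam e)
    (hB : IsFilling d lam B) (hp₀ : p ≠ 0) (hpq : p < q) :
    fillingTiming d e u (sizeP d lam) B p q ≤ sizeP d lam ↔ u q < u p := by
  obtain ⟨i, z, hi, hid, hz, hp⟩ | ⟨hp, hq⟩ := exists_isRowPair_or_outer d hpq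
  · rw [hp.fillingTiming_eq hi hid hz, h.rowTime_le_iff he hB hi hid hz,
      ← h.map_lt_iff_letterColumn_le hi hid hz]
    have hneg := h.odd i
    rcases hp with ⟨rfl, rfl⟩ | ⟨rfl, rfl⟩ | ⟨rfl, rfl, rfl⟩
    · rfl
    · rw [hneg, h.odd]
      omega
    · have := h.neg hi hid
      have := h.odd.map_zero
      omega
  · have := h.map_lt_of_outer hpq hp hq
    rw [fillingTiming_of_outer hpq hp hq]
    omega

theorem IsBalancedPerm.exists_box_of_fillingTiming_le (h : IsBalancedPerm d e u)
    (he : IsRowEnd d lam e) (hB : IsFilling d lam B) (hpq : p < q)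
    (hle : fillingTiming d e u (sizeP d lam) B p q ≤ sizeP d lam) :
    ∃ i z : ℤ, IsBox d e i (letterColumn d u z) ∧ IsRowLetter d i z ∧ IsRowPair i z p q ∧
      fillingTiming d e u (sizeP d lam) B p q = B ((d : ℤ) + 1 - i, letterColumn d u z) := by
  obtain ⟨i, z, hi, hid, hz, hp⟩ | ⟨hp, hq⟩ := exists_isRowPair_or_outer d hpq
  · rw [hp.fillingTiming_eq hi hid hz] at hle ⊢
    have hcol := (h.rowTime_le_iff he hB hi hid hz).1 hle
    exact ⟨i, z, h.isBox_letterColumn hi hid hz hcol, hz, hp, rowTime_letter hcol⟩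
  · rw [fillingTiming_of_outer hpq hp hq] at hle
    omega

theorem IsBalancedPerm.eq_or_eq_neg_of_fillingTiming_eq (h : IsBalancedPerm d e u)
    (he : IsRowEnd d lam e) (hB : IsFilling d lam B) {p' q' : ℤ} (hp₀ : p ≠ 0) (hq₀ : q ≠ 0)
    (hp₀' : p' ≠ 0) (hq₀' : q' ≠ 0) (hpq : p < q) (hpq' : p' < q')
    (hle : fillingTiming d e u (sizeP d lam) B p q ≤ sizeP d lam)
    (heq : fillingTiming d e u (sizeP d lam) B p' q' = fillingTiming d e u (sizeP d lam) B p q) :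
    (p' = p ∧ q' = q) ∨ (p' = -q ∧ q' = -p) := by
  obtain ⟨i, z, hb, hz, hp, hval⟩ := h.exists_box_of_fillingTiming_le he hB hpq hle
  obtain ⟨i', z', hb', hz', hp', hval'⟩ :=
    h.exists_box_of_fillingTiming_le he hB hpq' (heq.trans_le hle)
  rw [hval, hval'] at heq
  have hbox := hB.1.injOn (he.mem_diagram_iff.2 hb') (he.mem_diagram_iff.2 hb) heq
  obtain ⟨hrow, hcol⟩ := Prod.mk.injEq .. ▸ hbox
  obtain rfl : i' = i := by omega
  obtain rfl := h.letterColumn_injOn hb.2.1 hz' hz hcol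
  omega

theorem IsBalancedPerm.fillingTiming_columnLetter (h : IsBalancedPerm d e u) {c : ℤ}
    (hb : IsBox d e i c) :
    fillingTiming d e u N B (-i) (columnLetter u c) = B ((d : ℤ) + 1 - i, c) := by
  have hcol := h.letterColumn_columnLetter hb
  rw [fillingTiming_neg_left hb.1 hb.2.1 (h.isRowLetter_columnLetter hb),
    rowTime_letter (hcol.trans_le hb.2.2.2), hcol]

theorem IsBalancedPerm.exists_fillingTiming_eq (h : IsBalancedPerm d e u)
    (he : IsRowEnd d lam e) (hB : IsFilling d lam B) {k : ℕ} (hk : 0 < k) (hkN : k ≤ sizeP d lam) :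
    ∃ p q, p ≠ 0 ∧ q ≠ 0 ∧ fillingTiming d e u N B p q = k := by
  obtain ⟨b, hb, rfl⟩ := hB.1.surjOn ⟨hk, hkN⟩
  obtain ⟨i, c, rfl⟩ := exists_eq_row d b
  rw [he.mem_diagram_iff] at hb
  rw [← h.fillingTiming_columnLetter (N := N) (B := B) hb]
  obtain hc | hc := eq_or_ne (columnLetter u c) 0
  · refine ⟨-i, i, by omega, by omega, ?_⟩
    rw [hc, fillingTiming_zero_right, neg_neg]
  · exact ⟨-i, columnLetter u c, by omega, hc, rfl⟩

theorem IsBalancedPerm.isPretiming_fillingTiming (h : IsBalancedPerm d e u)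
    (he : IsRowEnd d lam e) (hB : IsFilling d lam B) :
    IsPretiming (sizeP d lam) u (fillingTiming d e u (sizeP d lam) B) := by
  have hlt {p q : ℤ} (hpos : 0 < fillingTiming d e u (sizeP d lam) B p q) : p < q := by
    by_contra! hqp
    rw [fillingTiming_of_le hqp] at hpos
    omega
  refine ⟨fun p q => ⟨hlt, fun hpq => (h.fillingTiming_pos_and_le he hB hpq).1⟩, fun p q => ?_,
    fillingTiming_neg_neg, fillingTiming_zero_right,
    fun p q hp₀ _ hpq => h.fillingTiming_le_iff he hB hp₀ hpq, ?_,
    fun k hk hkN => h.exists_fillingTiming_eq he hB hk hkN⟩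
  · obtain hpq | hqp := lt_or_ge p q
    · exact (h.fillingTiming_pos_and_le he hB hpq).2
    · rw [fillingTiming_of_le hqp]
      omega
  · intro p q p' q' hp₀ hq₀ hp₀' hq₀' hpq hle heq
    have hpq' : p' < q' := hlt (heq ▸ (h.fillingTiming_pos_and_le he hB hpq).1)
    exact h.eq_or_eq_neg_of_fillingTiming_eq he hB hp₀ hq₀ hp₀' hq₀' hpq hpq' hle heq

theorem IsBalancedPerm.timingTableau_fillingTiming (h : IsBalancedPerm d e u)
    (he : IsRowEnd d lam e) (hB : IsFilling d lam B) :
    timingTableau d lam u (fillingTiming d e u N B) = B := by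
  funext b
  by_cases hb : b ∈ Diagram d lam
  · obtain ⟨i, c, rfl⟩ := exists_eq_row d b
    rw [he.mem_diagram_iff] at hb
    rw [he.timingTableau_apply hb, h.fillingTiming_columnLetter hb]
  · rw [timingTableau, Set.indicator_of_notMem hb, hB.2 b hb]

theorem IsBalancedPerm.bijOn_timingTableau (h : IsBalancedPerm d e u) (he : IsRowEnd d lam e) :
    Set.BijOn (timingTableau d lam u) {T | IsPretiming (sizeP d lam) u T}
      {B | IsFilling d lam B} :=
  ⟨fun _ => h.isFilling_timingTableau he, h.timingTableau_injOn he, fun _ hB =>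
    ⟨_, h.isPretiming_fillingTiming he hB, h.timingTableau_fillingTiming he hB⟩⟩

end FillingTiming

section Hooks

variable {d N : ℕ} {e : ℤ → ℕ} {lam : ℕ → ℕ} {u : Equiv.Perm ℤ} {T : ℤ → ℤ → ℕ} {i x c : ℤ} {t : ℕ}

theorem IsRowEnd.mem_extHook_iff (he : IsRowEnd d lam e) (hb : IsBox d e i c) {k c' : ℤ} :
    ((d : ℤ) + 1 - k, c') ∈ ExtHook d lam ((d : ℤ) + 1 - i) c ↔
      k = i ∧ c' = c ∨ k = i ∧ c < c' ∧ c' ≤ e i ∨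
      c' = c ∧ 1 ≤ k ∧ k < i ∧ -k ≤ c ∧ c ≤ e k ∨ c < 0 ∧ k = -c ∧ c < c' ∧ c' ≤ e k := by
  simp only [ExtHook, Hook, Set.mem_union, Set.mem_ofPred_eq, Set.mem_singleton_iff,
    he.mem_diagram_iff, Prod.mk.injEq]
  obtain rfl | hk := eq_or_ne k i
  · omega
  obtain rfl | hk := eq_or_ne k (-c)
  · omega
  omega

theorem IsPretiming.extFilling_timingTableau (hT : IsPretiming N u T) (h : IsBalancedPerm d e u)
    (he : IsRowEnd d lam e) (hi : 1 ≤ i) (hid : i ≤ d) (hic : -i ≤ c) (hce : c ≤ e i) :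
    ExtFilling d (timingTableau d lam u T) ((d : ℤ) + 1 - i, c) = T (-i) (columnLetter u c) := by
  simp only [ExtFilling]
  split_ifs with hc
  · obtain rfl : c = -i := by omega
    rw [he.timingTableau_apply ⟨hi, hid, by omega, by omega⟩, h.columnLetter_zero,
      columnLetter_neg (by omega), hT.zero_right, _root_.neg_neg]
  · exact he.timingTableau_apply ⟨hi, hid, by omega, hce⟩

/-- The columns beyond `c` in which the entry of row `i` exceeds `t`. -/
def laterRow (e : ℤ → ℕ) (u : Equiv.Perm ℤ) (T : ℤ → ℤ → ℕ) (i c : ℤ) (t : ℕ) : Set ℤ :=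
  {c' | c < c' ∧ c' ≤ e i ∧ t < T (-i) (columnLetter u c')}

/-- The letters of the columns beyond `c` in which the entry of row `i` is at most `t`. -/
def earlierRow (d : ℕ) (u : Equiv.Perm ℤ) (T : ℤ → ℤ → ℕ) (i c : ℤ) (t : ℕ) : Set ℤ :=
  {z | c < letterColumn d u z ∧ -i < z ∧ T (-i) z ≤ t}

/-- The letters `-k` of the rows `k` below row `i` whose entry in the column `c` of the letter `x`
exceeds `t`; when `c = -k`, this is the entry of the extra box of row `k`. -/
def laterColumn (e : ℤ → ℕ) (T : ℤ → ℤ → ℕ) (i c x : ℤ) (t : ℕ) : Set ℤ :=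
  {z | -i < z ∧ z < 0 ∧ z ≤ c ∧ c ≤ e (-z) ∧ t < T z x}

theorem finite_laterRow : (laterRow e u T i c t).Finite :=
  (Set.finite_Ioc c (e i)).subset fun _ hz => ⟨hz.1, hz.2.1⟩

theorem finite_laterColumn : (laterColumn e T i c x t).Finite :=
  (Set.finite_Ioo (-i) 0).subset fun _ hz => ⟨hz.1, hz.2.1⟩

theorem IsBalancedPerm.image_letterColumn_earlierRow (h : IsBalancedPerm d e u)
    (hT : IsPretiming N u T) (hi : 1 ≤ i) (hid : i ≤ d) (hic : -i ≤ c) (ht : t ≤ N) :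
    letterColumn d u '' earlierRow d u T i c t = Set.Ioc c (e i) \ laterRow e u T i c t := by
  ext c'
  constructor
  · rintro ⟨z, ⟨hcol, hz, hle⟩, rfl⟩
    have hzr := isRowLetter_of_lt_letterColumn hic hz hcol
    refine ⟨⟨hcol, (h.le_iff_letterColumn_le hT hi hid hzr).1 (hle.trans ht)⟩, fun hlater => ?_⟩
    have := hlater.2.2
    rw [h.columnLetter_letterColumn hid hzr] at this
    omega
  · rintro ⟨⟨hcc, hce⟩, hlater⟩
    have hb : IsBox d e i c' := ⟨hi, hid, by omega, hce⟩
    have hcol := h.letterColumn_columnLetter hb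
    exact ⟨columnLetter u c', ⟨hcc.trans_eq hcol.symm, (h.isRowLetter_columnLetter hb).1,
      not_lt.1 fun hlt => hlater ⟨hcc, hce, hlt⟩⟩, hcol⟩

theorem IsBalancedPerm.ncard_laterRow_add_ncard_earlierRow (h : IsBalancedPerm d e u)
    (hT : IsPretiming N u T) (hi : 1 ≤ i) (hid : i ≤ d) (hic : -i ≤ c) (hce : c ≤ e i)
    (ht : t ≤ N) :
    ((laterRow e u T i c t).ncard : ℤ) + (earlierRow d u T i c t).ncard = e i - c := by
  have hinj : Set.InjOn (letterColumn d u) (earlierRow d u T i c t) :=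
    (h.letterColumn_injOn hid).mono fun z hz => isRowLetter_of_lt_letterColumn hic hz.2.1 hz.1
  have hsub : laterRow e u T i c t ⊆ Set.Ioc c (e i) := fun z hz => ⟨hz.1, hz.2.1⟩
  have hsum := Set.ncard_sdiff_add_ncard_of_subset hsub
  rw [← h.image_letterColumn_earlierRow hT hi hid hic ht, hinj.ncard_image,
    ← Finset.coe_Ioc, Set.ncard_coe_finset, Int.card_Ioc] at hsum
  omega

theorem IsPretiming.extFilling_of_mem_extHook (hT : IsPretiming N u T)
    (h : IsBalancedPerm d e u) (he : IsRowEnd d lam e) (hb : IsBox d e i c) {k c' : ℤ}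
    (hq : ((d : ℤ) + 1 - k, c') ∈ ExtHook d lam ((d : ℤ) + 1 - i) c) :
    ExtFilling d (timingTableau d lam u T) ((d : ℤ) + 1 - k, c') = T (-k) (columnLetter u c') := by
  have hcases := (he.mem_extHook_iff hb).1 hq
  obtain ⟨hi, hid, hic, hce⟩ := hb
  have hce' : c' ≤ e k := by
    obtain ⟨rfl, rfl⟩ | ⟨rfl, -, hle⟩ | ⟨rfl, -, -, -, hle⟩ | ⟨-, rfl, -, hle⟩ := hcases
    exacts [hce, hle, hle, hle]
  exact hT.extFilling_timingTableau h he (by omega) (by omega) (by omega) hce'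

theorem IsBalancedPerm.setOf_extHook_lt_eq (h : IsBalancedPerm d e u) (he : IsRowEnd d lam e)
    (hT : IsPretiming N u T) (hb : IsBox d e i c) (ht : T (-i) (columnLetter u c) = t) :
    {q ∈ ExtHook d lam ((d : ℤ) + 1 - i) c | t < ExtFilling d (timingTableau d lam u T) q} =
      (fun c' => ((d : ℤ) + 1 - i, c')) '' laterRow e u T i c t ∪
      (fun z => ((d : ℤ) + 1 + z, c)) '' laterColumn e T i c (columnLetter u c) t ∪
      (fun c' => ((d : ℤ) + 1 + c, c')) '' {c' ∈ laterRow e u T (-c) c t | c < 0} := by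
  ext q
  obtain ⟨k, c', rfl⟩ := exists_eq_row d q
  rw [Set.mem_sep_iff, and_congr_right fun hq => by
    rw [hT.extFilling_of_mem_extHook h he hb hq], he.mem_extHook_iff hb]
  constructor
  · rintro ⟨⟨rfl, rfl⟩ | ⟨rfl, hcc, hc'⟩ | ⟨rfl, hk, hki, hkc, hck⟩ | ⟨hc, rfl, hcc, hc'⟩, hlt⟩
    · omega
    · exact .inl (.inl ⟨c', ⟨hcc, hc', hlt⟩, rfl⟩)
    · exact .inl (.inr ⟨-k, ⟨by omega, by omega, hkc, by rwa [neg_neg], hlt⟩, rfl⟩)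
    · exact .inr ⟨c', ⟨⟨hcc, hc', hlt⟩, hc⟩, by simp only [sub_neg_eq_add]⟩
  · rintro ((⟨c'', ⟨hcc, hc', hlt⟩, heq⟩ | ⟨z, ⟨hz, hz₀, hzc, hce', hlt⟩, heq⟩) |
      ⟨c'', ⟨⟨hcc, hc', hlt⟩, hc⟩, heq⟩) <;> obtain ⟨hrow, rfl⟩ := Prod.mk.inj heq
    · obtain rfl : k = i := by omega
      exact ⟨by omega, hlt⟩
    · obtain rfl : z = -k := by omega
      rw [neg_neg] at hce'
      exact ⟨by omega, hlt⟩
    · obtain rfl : k = -c := by omega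
      exact ⟨by omega, hlt⟩

theorem IsBalancedPerm.ncard_extHook_lt (h : IsBalancedPerm d e u) (he : IsRowEnd d lam e)
    (hT : IsPretiming N u T) (hb : IsBox d e i c) (ht : T (-i) (columnLetter u c) = t) :
    {q ∈ ExtHook d lam ((d : ℤ) + 1 - i) c |
        t < ExtFilling d (timingTableau d lam u T) q}.ncard =
      (laterRow e u T i c t).ncard + (laterColumn e T i c (columnLetter u c) t).ncard +
        {c' ∈ laterRow e u T (-c) c t | c < 0}.ncard := by
  have hinj (a : ℤ) : (fun c' : ℤ => (a, c')).Injective := Prod.mk_right_injective a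
  have hinj' : (fun z : ℤ => ((d : ℤ) + 1 + z, c)).Injective := fun z z' heq =>
    add_left_cancel (Prod.mk.inj heq).1
  have hfin : {c' ∈ laterRow e u T (-c) c t | c < 0}.Finite := finite_laterRow.sep _
  have hdisj : Disjoint ((fun c' => ((d : ℤ) + 1 - i, c')) '' laterRow e u T i c t)
      ((fun z => ((d : ℤ) + 1 + z, c)) '' laterColumn e T i c (columnLetter u c) t) := by
    rw [Set.disjoint_left]
    rintro _ ⟨c', -, rfl⟩ ⟨z, hz, heq⟩
    have := (Prod.mk.inj heq).1
    have := hz.1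
    omega
  have hdisj' : Disjoint ((fun c' => ((d : ℤ) + 1 - i, c')) '' laterRow e u T i c t ∪
      (fun z => ((d : ℤ) + 1 + z, c)) '' laterColumn e T i c (columnLetter u c) t)
      ((fun c' => ((d : ℤ) + 1 + c, c')) '' {c' ∈ laterRow e u T (-c) c t | c < 0}) := by
    rw [Set.disjoint_left]
    rintro _ (⟨c', -, rfl⟩ | ⟨z, -, rfl⟩) ⟨c'', hc'', heq⟩
    · have := (Prod.mk.inj heq).1
      omega
    · have := (Prod.mk.inj heq).2
      have := hc''.1.1
      omega
  rw [h.setOf_extHook_lt_eq he hT hb ht, Set.ncard_union_eq hdisj'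
      ((finite_laterRow.image _).union (finite_laterColumn.image _)) (hfin.image _),
    Set.ncard_union_eq hdisj (finite_laterRow.image _) (finite_laterColumn.image _),
    Set.ncard_image_of_injective _ (hinj _), Set.ncard_image_of_injective _ hinj',
    Set.ncard_image_of_injective _ (hinj _)]

theorem IsRowEnd.rk_of_nonneg (he : IsRowEnd d lam e) (hi : 1 ≤ i) (hid : i ≤ d) (hc : 0 ≤ c) :
    rk d lam ((d : ℤ) + 1 - i) c - 1 = e i - c := by
  rw [rk, if_pos hc, ← he i hi hid]
  ring

theorem IsRowEnd.rk_neg (he : IsRowEnd d lam e) (hi : 1 ≤ i) (hid : i ≤ d) (hx : 1 ≤ x)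
    (hxd : x ≤ d) : rk d lam ((d : ℤ) + 1 - i) (-x) - 1 = e i + e x + 1 := by
  rw [rk, if_neg (by omega), ← he i hi hid, ← sub_eq_add_neg ((d : ℤ) + 1), ← he x hx hxd]
  ring

theorem IsBalancedPerm.laterColumn_letterColumn_eq (h : IsBalancedPerm d e u)
    (hT : IsPretiming N u T) (hid : i ≤ d) (hcol : 0 ≤ letterColumn d u x) :
    laterColumn e T i (letterColumn d u x) x t =
      {z | letterColumn d u x < letterColumn d u z ∧ -i < z ∧ z < x ∧ t < T z x} := by
  have hxd : ¬(1 ≤ x ∧ x ≤ d) := fun hxd => by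
    rw [letterColumn, if_pos hxd] at hcol
    omega
  have hxu : letterColumn d u x = u x := if_neg hxd
  have hiff (z : ℤ) (hz : -i < z) (hz₀ : z < 0) (hzx : z < x) :
      letterColumn d u x < letterColumn d u z ↔ letterColumn d u x ≤ e (-z) := by
    rw [← h.map_lt_iff_letterColumn_le (by omega) (by omega) (by omega), neg_neg, hxu,
      letterColumn, if_neg (by omega)]
  ext z
  constructor
  · rintro ⟨hz, hz₀, -, hle, hlt⟩
    have hzx : z < x := (hT.pos_iff z x).1 (by omega)
    exact ⟨(hiff z hz hz₀ hzx).2 hle, hz, hzx, hlt⟩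
  · rintro ⟨hlt', hz, hzx, hlt⟩
    have hz₀ : z < 0 := by
      by_contra! hz₀
      have := h.map_lt_of_outer hzx (by omega) (by omega)
      rw [hxu, letterColumn] at hlt'
      split_ifs at hlt' <;> omega
    exact ⟨hz, hz₀, by omega, (hiff z hz hz₀ hzx).1 hlt', hlt⟩

theorem IsBalancedPerm.earlierRow_letterColumn_eq (h : IsBalancedPerm d e u)
    (hT : IsPretiming N u T) (hi : 1 ≤ i) (hid : i ≤ d) (hx : IsRowLetter d i x)
    (hle : T (-i) x ≤ N) :
    earlierRow d u T i (letterColumn d u x) (T (-i) x) =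
      {z | letterColumn d u x < letterColumn d u z ∧ -i < z ∧ T (-i) z < T (-i) x} := by
  ext z
  refine and_congr_right fun hcol => and_congr_right fun hz => ?_
  have hzr := isRowLetter_of_lt_letterColumn (h.neg_lt_letterColumn hi hid hx).le hz hcol
  have hzx : z ≠ x := by rintro rfl; exact hcol.false
  exact (hT.ne_of_isRowLetter_right hx hi hid hzx (by omega) hle).le_iff_lt

theorem IsBalancedPerm.setOf_lt_neg_and_lt_eq_empty (h : IsBalancedPerm d e u)
    (hT : IsPretiming N u T) (hid : i ≤ d) (hx : IsRowLetter d i x)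
    (hxd : ¬(1 ≤ x ∧ x ≤ d)) : {z | z < -(d : ℤ) ∧ T z x < T (-i) x} = ∅ := by
  refine Set.eq_empty_of_forall_notMem fun z ⟨hz, hlt⟩ => ?_
  have := h.map_neg_of_lt hz
  have := h.map_nonneg hid hx hxd
  have := hT.eq_succ_of_map_lt h.odd (x := z) (z := x) (by omega) (by omega)
  have := hT.le_succ (-i) x
  omega

theorem IsBalancedPerm.earlierArm_eq (h : IsBalancedPerm d e u) (hT : IsPretiming N u T)
    (hi : 1 ≤ i) (hid : i ≤ d) (hx : IsRowLetter d i x) (hle : T (-i) x ≤ N) :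
    earlierArm d u T i x = earlierRow d u T i (letterColumn d u x) (T (-i) x) ∪
      {z | z < -(d : ℤ) ∧ T z x < T (-i) x} := by
  rw [h.earlierRow_letterColumn_eq hT hi hid hx hle]
  rfl

theorem letterColumn_of_mem (hx : 1 ≤ x) (hxd : x ≤ d) : letterColumn d u x = -x :=
  if_pos ⟨hx, hxd⟩

theorem IsBalancedPerm.laterLeg_eq (h : IsBalancedPerm d e u) (hid : i ≤ d)
    (hx : 1 ≤ x) (hxi : x < i) :
    laterLeg d u T i x = laterColumn e T i (-x) x (T (-i) x) ∪
      {z | -x < z ∧ z < x ∧ T (-i) x < T z x} := by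
  have hcol := letterColumn_of_mem (u := u) hx (hxi.le.trans hid)
  ext z
  simp only [laterLeg, laterColumn, hcol, Set.mem_union, Set.mem_ofPred_eq]
  obtain hzx | hxz := le_or_gt z (-x)
  · have hpos (hz : -i < z) : -x < letterColumn d u z := by
      have := h.map_pos_of_neg (z := z) (by omega) (by omega)
      rw [letterColumn, if_neg (by omega)]
      omega
    constructor
    · rintro ⟨-, hz, -, hlt⟩
      exact .inl ⟨hz, by omega, hzx, by omega, hlt⟩
    · rintro (⟨hz, -, -, -, hlt⟩ | ⟨hxz, -⟩)
      · exact ⟨hpos hz, hz, by omega, hlt⟩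
      · omega
  · constructor
    · rintro ⟨-, -, hzx, hlt⟩
      exact .inr ⟨hxz, hzx, hlt⟩
    · rintro (⟨-, -, hzx, -⟩ | ⟨-, hzx, hlt⟩)
      · omega
      · exact ⟨h.neg_lt_letterColumn hx (by omega) ⟨hxz, .inl hzx⟩, by omega, hzx, hlt⟩

theorem IsBalancedPerm.neg_image_earlierRow (h : IsBalancedPerm d e u) (hT : IsPretiming N u T)
    (hx : 1 ≤ x) (hxi : x < i) (hid : i ≤ d) (hle : T (-i) x ≤ N) :
    Neg.neg '' earlierRow d u T x (-x) (T (-i) x) =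
      {z | -x < z ∧ z < x ∧ T z x ≤ T (-i) x} ∪ {z | z < -(d : ℤ) ∧ T z x < T (-i) x} := by
  ext z
  rw [Set.image_neg_eq_neg, Set.mem_neg]
  simp only [earlierRow, Set.mem_union, Set.mem_ofPred_eq, hT.neg_neg z x]
  constructor
  · rintro ⟨hcol, hzx, hzt⟩
    have hz := isRowLetter_of_lt_letterColumn le_rfl hzx hcol
    obtain hzx' | hzd := hz.2
    · exact .inl ⟨by omega, by omega, hzt⟩
    · have := hT.ne_of_isRowLetter_left (i := i) (z := z) (d := d) (x := x) (by omega)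
        (by omega) hid (by omega) (by omega) hle
      exact .inr ⟨by omega, by omega⟩
  · intro hz
    exact ⟨h.neg_lt_letterColumn hx (by omega) (by omega), by omega, by omega⟩

theorem IsBalancedPerm.ncard_laterLeg (h : IsBalancedPerm d e u) (hid : i ≤ d) (hx : 1 ≤ x)
    (hxi : x < i) :
    (laterLeg d u T i x).ncard = (laterColumn e T i (-x) x (T (-i) x)).ncard +
      {z | -x < z ∧ z < x ∧ T (-i) x < T z x}.ncard := by
  have hdisj : Disjoint (laterColumn e T i (-x) x (T (-i) x))
      {z | -x < z ∧ z < x ∧ T (-i) x < T z x} :=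
    Set.disjoint_left.2 fun z hz hz' => hz'.1.not_ge hz.2.2.1
  rw [h.laterLeg_eq hid hx hxi, Set.ncard_union_eq hdisj finite_laterColumn
    ((Set.finite_Ioo (-x) x).subset fun z hz => ⟨hz.1, hz.2.1⟩)]

theorem IsBalancedPerm.ncard_earlierArm (h : IsBalancedPerm d e u) (hT : IsPretiming N u T)
    (hi : 1 ≤ i) (hid : i ≤ d) (hx : IsRowLetter d i x) (hle : T (-i) x ≤ N) :
    (earlierArm d u T i x).ncard =
      (earlierRow d u T i (letterColumn d u x) (T (-i) x)).ncard +
        {z | z < -(d : ℤ) ∧ T z x < T (-i) x}.ncard := by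
  obtain ⟨n, hu⟩ := h.exists_isSignedPerm
  have hfin := hT.finite_earlierArm (d := d) hu hid hx.1
  have heq := h.earlierArm_eq hT hi hid hx hle
  rw [heq] at hfin ⊢
  refine Set.ncard_union_eq (Set.disjoint_left.2 fun z hz hz' => ?_)
    (hfin.subset Set.subset_union_left) (hfin.subset Set.subset_union_right)
  have := hz.2.1
  have := hz'.1
  omega

theorem IsBalancedPerm.ncard_earlierRow_neg (h : IsBalancedPerm d e u) (hT : IsPretiming N u T)
    (hx : 1 ≤ x) (hxi : x < i) (hid : i ≤ d) (hle : T (-i) x ≤ N) :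
    (earlierRow d u T x (-x) (T (-i) x)).ncard =
      {z | -x < z ∧ z < x ∧ T z x ≤ T (-i) x}.ncard +
        {z | z < -(d : ℤ) ∧ T z x < T (-i) x}.ncard := by
  obtain ⟨n, hu⟩ := h.exists_isSignedPerm
  have hfin : {z | z < -(d : ℤ) ∧ T z x < T (-i) x}.Finite :=
    (hT.finite_earlierArm hu hid (by omega)).subset Set.subset_union_right
  rw [← Set.ncard_image_of_injective _ neg_injective, h.neg_image_earlierRow hT hx hxi hid hle]
  refine Set.ncard_union_eq (Set.disjoint_left.2 fun z hz hz' => ?_)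
    ((Set.finite_Ioo (-x) x).subset fun z hz => ⟨hz.1, hz.2.1⟩) hfin
  have := hz.1
  have := hz'.1
  omega

theorem ncard_setOf_lt_add_ncard_setOf_le (f : ℤ → ℕ) (t : ℕ) (hx : 1 ≤ x) :
    (({z | -x < z ∧ z < x ∧ t < f z}.ncard : ℕ) : ℤ) + {z | -x < z ∧ z < x ∧ f z ≤ t}.ncard =
      2 * x - 1 := by
  have hfin := Set.finite_Ioo (-x) x
  have hunion : {z | -x < z ∧ z < x ∧ t < f z} ∪ {z | -x < z ∧ z < x ∧ f z ≤ t} =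
      Set.Ioo (-x) x := by
    ext z
    simp only [Set.mem_union, Set.mem_ofPred_eq, Set.mem_Ioo]
    omega
  have hdisj : Disjoint {z | -x < z ∧ z < x ∧ t < f z} {z | -x < z ∧ z < x ∧ f z ≤ t} :=
    Set.disjoint_left.2 fun z hz hz' => hz.2.2.not_ge hz'.2.2
  have hcard := Set.ncard_union_eq hdisj (hfin.subset (hunion ▸ Set.subset_union_left))
    (hfin.subset (hunion ▸ Set.subset_union_right))
  rw [hunion, ← Finset.coe_Ioo, Set.ncard_coe_finset, Int.card_Ioo] at hcard
  omega

theorem IsBalancedPerm.ncard_extHook_lt_eq_rk_iff (h : IsBalancedPerm d e u)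
    (he : IsRowEnd d lam e) (hT : IsPretiming N u T) (hi : 1 ≤ i) (hid : i ≤ d)
    (hx : IsRowLetter d i x) (hle : letterColumn d u x ≤ e i) :
    ({q ∈ ExtHook d lam ((d : ℤ) + 1 - i) (letterColumn d u x) |
        T (-i) x < ExtFilling d (timingTableau d lam u T) q}.ncard : ℤ) =
      rk d lam ((d : ℤ) + 1 - i) (letterColumn d u x) - 1 ↔
    (laterLeg d u T i x).ncard = (earlierArm d u T i x).ncard := by
  have hb := h.isBox_letterColumn hi hid hx hle
  have hN := (h.le_iff_letterColumn_le hT hi hid hx).2 hle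
  have hrow := h.ncard_laterRow_add_ncard_earlierRow hT hi hid hb.2.2.1.le hle hN
  have harm := h.ncard_earlierArm hT hi hid hx hN
  have hletter := h.columnLetter_letterColumn hid hx
  have hhook := h.ncard_extHook_lt he hT hb (congrArg (T (-i)) hletter)
  rw [hletter] at hhook
  by_cases hxd : 1 ≤ x ∧ x ≤ d
  · have hxi : x < i := by omega
    have hmid := ncard_setOf_lt_add_ncard_setOf_le (fun z => T z x) (T (-i) x) hxd.1
    have hleg := h.ncard_laterLeg (T := T) hid hxd.1 hxi
    have hneg := h.ncard_earlierRow_neg hT hxd.1 hxi hid hN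
    have hrow' := h.ncard_laterRow_add_ncard_earlierRow hT hxd.1 hxd.2 (c := -x) le_rfl
      (by omega) hN
    rw [letterColumn_of_mem hxd.1 hxd.2] at hhook hrow harm ⊢
    simp only [neg_neg, neg_lt_zero, show 0 < x by omega, and_true, Set.ofPred_mem_eq] at hhook
    rw [he.rk_neg hi hid hxd.1 hxd.2]
    omega
  · have hcol : 0 ≤ letterColumn d u x := by
      rw [letterColumn, if_neg hxd]
      exact h.map_nonneg hid hx hxd
    rw [h.setOf_lt_neg_and_lt_eq_empty hT hid hx hxd, Set.ncard_empty] at harm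
    rw [he.rk_of_nonneg hi hid hcol, laterLeg, ← h.laterColumn_letterColumn_eq hT hid hcol]
    simp only [hcol.not_gt, and_false, Set.ofPred_false, Set.ncard_empty] at hhook
    omega

theorem IsBalancedPerm.isBalanced_timingTableau_iff (h : IsBalancedPerm d e u)
    (he : IsRowEnd d lam e) (hT : IsPretiming (sizeP d lam) u T) :
    IsBalanced d lam (timingTableau d lam u T) ↔ IsBalancedTiming d e u T := by
  rw [IsBalanced, and_iff_right (h.isFilling_timingTableau he hT)]
  constructor
  · intro hbal i x hi hid hx hle
    have hb := he.mem_diagram_iff.2 (h.isBox_letterColumn hi hid hx hle)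
    have := hbal _ hb
    rw [h.timingTableau_letterColumn he hi hid hx hle] at this
    exact (h.ncard_extHook_lt_eq_rk_iff he hT hi hid hx hle).1 this
  · intro hbal b hb
    obtain ⟨i, c, rfl⟩ := exists_eq_row d b
    rw [he.mem_diagram_iff] at hb
    have hx := h.isRowLetter_columnLetter hb
    have hcol := h.letterColumn_columnLetter hb
    have hle := hcol.trans_le hb.2.2.2
    have hiff := h.ncard_extHook_lt_eq_rk_iff he hT hb.1 hb.2.1 hx hle
    rw [hcol] at hiff
    rw [he.timingTableau_apply hb]
    exact hiff.2 (hbal i _ hb.1 hb.2.1 hx hle)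

theorem IsBalancedPerm.encard_isBalanced (h : IsBalancedPerm d e u) (he : IsRowEnd d lam e) :
    {B | IsBalanced d lam B}.encard = {T | IsTiming (sizeP d lam) u T}.encard := by
  have hinj : Set.InjOn (timingTableau d lam u) {T | IsTiming (sizeP d lam) u T} :=
    (h.timingTableau_injOn he).mono fun T hT => hT.toIsPretiming
  rw [← hinj.encard_image]
  congr 1
  ext B
  constructor
  · intro hB
    obtain ⟨T, hT, rfl⟩ := (h.bijOn_timingTableau he).surjOn hB.1
    exact ⟨T, h.isTiming_iff.2 ⟨hT, (h.isBalanced_timingTableau_iff he hT).1 hB⟩, rfl⟩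
  · rintro ⟨T, hT, rfl⟩
    obtain ⟨hpre, hbal⟩ := h.isTiming_iff.1 hT
    exact (h.isBalanced_timingTableau_iff he hpre).2 hbal

end Hooks

section Count

variable {d : ℕ} {e : ℤ → ℕ} {lam : ℕ → ℕ}

theorem IsStrictPartition.isWeakStrict (h : IsStrictPartition d lam) : IsWeakStrict d lam := by
  intro i k hi hik
  induction k, hik using Nat.le_induction with
  | base => exact fun hk _ => h.1 i hi (by omega)
  | succ k hik ih =>
    intro hk _
    have hlt := h.1 k (by omega) (by omega)
    exact hlt.trans (ih (by omega) (by omega))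

theorem IsStrictPartition.exists_isRowEnd (h : IsStrictPartition d lam) :
    ∃ e, IsRowEnd d lam e := by
  refine ⟨fun i => ((lam ((d : ℤ) + 1 - i).toNat : ℤ) - i).toNat, fun i hi hid => ?_⟩
  have := h.isWeakStrict.add_sub_le (i := ((d : ℤ) + 1 - i).toNat) (by omega) (by omega) le_rfl h.2
  have := h.2
  dsimp only
  omega

theorem IsRowEnd.mono (he : IsRowEnd d lam e) (hlam : IsWeakStrict d lam) {i j : ℤ} (hi : 1 ≤ i)
    (hij : i ≤ j) (hj : j ≤ d) : e i ≤ e j := by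
  have hi' := he i hi (by omega)
  have hj' := he j (by omega) hj
  have := hlam.add_sub_le (i := ((d : ℤ) + 1 - j).toNat) (k := ((d : ℤ) + 1 - i).toNat)
    (by omega) (by omega) (by omega) (by omega)
  omega

theorem IsTransitionState.encard_isSYT {u : Equiv.Perm ℤ} (h : IsTransitionState d e d u)
    (hlam : IsWeakStrict d lam) (he : IsRowEnd d lam e) :
    {B | IsSYT d lam B}.encard = numReducedWords (sizeP d lam) u := by
  obtain ⟨u', h', hnum⟩ := h.exists_sorted (sizeP d lam)
  obtain ⟨n, hu'⟩ := h'.exists_isSignedPerm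
  have hshape : IsShapePerm d lam u' := h'.isShapePerm hlam fun i hi hid => by
    have := he i (by omega) (by omega)
    rw [show ((d : ℤ) + 1 - i).toNat = d + 1 - i by omega] at this
    omega
  rw [BST.encard_isSYT hu' hlam hshape, hnum]

end Count

/-- For every strict partition `λ`, the number of standard Young tableaux
of shifted shape `λ` equals the number of balanced shifted tableaux of shape `λ`. -/
theorem syt_card_eq_bst_card (d : ℕ) (hd : 1 ≤ d) (lam : ℕ → ℕ)
    (hlam : IsStrictPartition d lam) :
    Nat.card {B : ℤ × ℤ → ℕ // IsSYT d lam B} =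
      Nat.card {B : ℤ × ℤ → ℕ // IsBalanced d lam B} := by
  obtain ⟨e, he⟩ := hlam.exists_isRowEnd
  have hmono := fun i j => he.mono hlam.isWeakStrict (i := i) (j := j)
  obtain ⟨u, hu⟩ := exists_isBalancedPerm hmono
  obtain ⟨n, hn⟩ := hu.exists_isSignedPerm
  have hcard : {B | IsSYT d lam B}.encard = {B | IsBalanced d lam B}.encard := calc
    {B | IsSYT d lam B}.encard
    _ = numReducedWords (sizeP d lam) u :=
      (hu.isTransitionState hmono).encard_isSYT hlam.isWeakStrict he
    _ = {T | IsTiming (sizeP d lam) u T}.encard := (encard_isTiming hn _).symm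
    _ = {B | IsBalanced d lam B}.encard := (hu.encard_isBalanced he).symm
  exact congrArg ENat.toNat hcard

end BST
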